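/- arXiv:2108.00711 — 5 statements merged into one kernel-verified Lean document; each statement's English description precedes it below -/
import Mathlib

section
/- In the Nehari setting, for w ∈ H¹(V)\{0} let α_w(s) = Φ(sw) for s ∈ (0,∞), so that α_w'(s) = s‖w‖² − I'(sw)w. Then there exists a unique s_w > 0 such that α_w'(s) > 0 for 0 < s < s_w and α_w'(s) < 0 for s > s_w; in particular s_w w is the unique point of the ray {sw : s > 0} lying on the Nehari manifold N = {u ∈ H¹\{0} : Φ'(u)u = 0}. -/
open scoped ENNReal

noncomputable section

/-- `H¹(V)`: as a set, the ℓ²-summable real functions on the vertex set;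
the `H¹` norm is equivalent to the ℓ² norm by the uniform degree bound. -/
abbrev H1 (Vtx : Type*) := lp (fun _ : Vtx => ℝ) 2

variable {Vtx : Type*}

/-- `Γ(u,v)(x) = (1/2) Σ_{y∼x} (u(y)-u(x))(v(y)-v(x))`. -/
def gammaProd (adj : Vtx → Vtx → Prop) (u v : Vtx → ℝ) (x : Vtx) : ℝ :=
  (1/2) * ∑' y : {y : Vtx // adj x y}, (u y.1 - u x) * (v y.1 - v x)

/-- `|∇u|²(x) = (1/2) Σ_{y∼x} (u(y)-u(x))²`. -/
def gradSq (adj : Vtx → Vtx → Prop) (u : Vtx → ℝ) (x : Vtx) : ℝ :=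
  gammaProd adj u u x

/-- `Δu(x) = Σ_{y∼x} (u(y)-u(x))`. -/
def graphLap (adj : Vtx → Vtx → Prop) (u : Vtx → ℝ) (x : Vtx) : ℝ :=
  ∑' y : {y : Vtx // adj x y}, (u y.1 - u x)

/-- the norm `‖u‖` induced by the potential `V`:
`‖u‖² = Σ_x (|∇u|²(x) + V(x)u(x)²)`. -/
def nrmV (adj : Vtx → Vtx → Prop) (Vp : Vtx → ℝ) (u : Vtx → ℝ) : ℝ :=
  Real.sqrt (∑' x, (gradSq adj u x + Vp x * (u x)^2))

/-- the `V`-norm of an element of `H¹`. -/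
def nrmH (adj : Vtx → Vtx → Prop) (Vp : Vtx → ℝ) (u : H1 Vtx) : ℝ :=
  nrmV adj Vp (fun y => u y)

/-- `⟨u,v⟩ = Σ_x (Γ(u,v)(x) + V(x)u(x)v(x))`. -/
def iprodH (adj : Vtx → Vtx → Prop) (Vp : Vtx → ℝ) (u v : H1 Vtx) : ℝ :=
  ∑' x, (gammaProd adj (fun y => u y) (fun y => v y) x + Vp x * u x * v x)

/-- the variational functional `Φ(u) = ½‖u‖² − Σ_x F(x,u(x))`. -/
def PhiF (adj : Vtx → Vtx → Prop) (Vp : Vtx → ℝ) (F : Vtx → ℝ → ℝ) (u : H1 Vtx) : ℝ :=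
  (1/2) * ∑' x, (gradSq adj (fun y => u y) x + Vp x * (u x)^2) - ∑' x, F x (u x)

/-- the Nehari manifold `N = {u ∈ H¹\{0} : Φ'(u)u = 0}`. -/
def Nehari (adj : Vtx → Vtx → Prop) (Vp : Vtx → ℝ) (F : Vtx → ℝ → ℝ) : Set (H1 Vtx) :=
  {u | u ≠ 0 ∧ fderiv ℝ (PhiF adj Vp F) u u = 0}

/-- adjacency of the lattice graph `ℤ^N`. -/
def adjZ (N : ℕ) (x y : Fin N → ℤ) : Prop := (∑ i, (x i - y i).natAbs) = 1

end

theorem sq_hasSum {Vtx : Type*} (u : H1 Vtx) : HasSum (fun x => (u x)^2) (‖u‖^2) := by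
  have h := lp.hasSum_inner (𝕜 := ℝ) u u
  rw [real_inner_self_eq_norm_sq] at h
  refine h.congr_fun ?_ |> fun h => h
  intro x
  simp [sq]

theorem abs_le_nrm {Vtx : Type*} (u : H1 Vtx) (x : Vtx) : |u x| ≤ ‖u‖ := by
  simpa using lp.norm_apply_le_norm (by norm_num) u x

theorem mul_sum {Vtx : Type*} (u v : H1 Vtx) :
    (Summable fun x => |u x| * |v x|) ∧ ∑' x, |u x| * |v x| ≤ ‖u‖ * ‖v‖ := by
  have := lp.tsum_mul_le_mul_norm (p := 2) (q := 2)
    (by rw [Real.holderConjugate_iff]; norm_num) u v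
  simpa [Real.norm_eq_abs] using this

section quad
variable {Vtx : Type*} {adj : Vtx → Vtx → Prop} {D : ℕ}

theorem sum_const_le (hfin : ∀ x, {y | adj x y}.Finite)
    (hdeg : ∀ x, {y | adj x y}.ncard ≤ D) (x : Vtx) (c : ℝ) (hc : 0 ≤ c) :
    ∑' _ : {y : Vtx // adj x y}, c ≤ D * c := by
  have : Finite {y : Vtx // adj x y} := hfin x
  rw [tsum_const, nsmul_eq_mul]
  have h2 : Nat.card {y : Vtx // adj x y} ≤ D := hdeg x
  gcongr

theorem nbr (hsym : ∀ x y, adj x y → adj y x) (hfin : ∀ x, {y | adj x y}.Finite)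
    (hdeg : ∀ x, {y | adj x y}.ncard ≤ D) (u : H1 Vtx) :
    (Summable fun x => ∑' y : {y : Vtx // adj x y}, (u y.1)^2) ∧
    ∑' x, ∑' y : {y : Vtx // adj x y}, (u y.1)^2 ≤ D * ‖u‖^2 := by
  have hE : ∀ x, Finite {y : Vtx // adj x y} := fun x => hfin x
  have hu := sq_hasSum u
  let e : (Σ x, {y : Vtx // adj x y}) ≃ (Σ x, {y : Vtx // adj x y}) :=
    { toFun := fun p => ⟨p.2.1, ⟨p.1, hsym _ _ p.2.2⟩⟩
      invFun := fun p => ⟨p.2.1, ⟨p.1, hsym _ _ p.2.2⟩⟩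
      left_inv := fun p => rfl
      right_inv := fun p => rfl }
  let g : (Σ x, {y : Vtx // adj x y}) → ℝ := fun p => (u p.1)^2
  have hg0 : ∀ p, 0 ≤ g p := fun p => sq_nonneg _
  have hle : ∀ x, ∑' y : {y : Vtx // adj x y}, g ⟨x, y⟩ ≤ D * (u x)^2 := fun x =>
    sum_const_le hfin hdeg x ((u x)^2) (sq_nonneg _)
  have hs1 : Summable fun x => ∑' y : {y : Vtx // adj x y}, g ⟨x, y⟩ :=
    Summable.of_nonneg_of_le (fun x => tsum_nonneg fun y => hg0 _) hle (hu.summable.mul_left _)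
  have hg : Summable g := (summable_sigma_of_nonneg hg0).2 ⟨fun x => Summable.of_finite, hs1⟩
  have hg' : Summable (g ∘ e) := e.summable_iff.2 hg
  have h2 := (summable_sigma_of_nonneg (f := g ∘ e) (fun p => hg0 _)).1 hg'
  refine ⟨h2.2, ?_⟩
  have e1 : ∑' x, ∑' y : {y : Vtx // adj x y}, (u y.1)^2 = ∑' p, (g ∘ e) p :=
    (hg'.tsum_sigma' (fun x => Summable.of_finite)).symm
  have e2 : ∑' p, (g ∘ e) p = ∑' p, g p := e.tsum_eq g
  rw [e1, e2, hg.tsum_sigma' (fun x => Summable.of_finite), ← hu.tsum_eq, ← tsum_mul_left]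
  exact hs1.tsum_le_tsum hle (hu.summable.mul_left _)

theorem bil_bound (hsym : ∀ x y, adj x y → adj y x) (hfin : ∀ x, {y | adj x y}.Finite)
    (hdeg : ∀ x, {y | adj x y}.ncard ≤ D) {Vp : Vtx → ℝ} {C2 : ℝ}
    (hV : ∀ x, 0 ≤ Vp x ∧ Vp x ≤ C2) (u v : H1 Vtx) :
    (Summable fun x => gammaProd adj (fun y => u y) (fun y => v y) x + Vp x * u x * v x) ∧
    |iprodH adj Vp u v| ≤ (D + C2) * (‖u‖^2 + ‖v‖^2) := by
  have hE : ∀ x, Finite {y : Vtx // adj x y} := fun x => hfin x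
  have hu := sq_hasSum u
  have hv := sq_hasSum v
  obtain ⟨nu, nu'⟩ := nbr hsym hfin hdeg u
  obtain ⟨nv, nv'⟩ := nbr hsym hfin hdeg v
  set Nu := fun x => ∑' y : {y : Vtx // adj x y}, (u y.1)^2 with hNu
  set Nv := fun x => ∑' y : {y : Vtx // adj x y}, (v y.1)^2 with hNv
  have key : ∀ x, |gammaProd adj (fun y => u y) (fun y => v y) x + Vp x * u x * v x| ≤
      (1/2) * (Nu x + Nv x + (D + C2) * ((u x)^2 + (v x)^2)) := by
    intro x
    have h1 : |gammaProd adj (fun y => u y) (fun y => v y) x| ≤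
        (1/2) * (Nu x + Nv x + D * ((u x)^2 + (v x)^2)) := by
      unfold gammaProd
      rw [abs_mul, abs_of_pos (by norm_num : (0:ℝ) < 1/2)]
      gcongr
      have s1 : Summable fun y : {y : Vtx // adj x y} => (u y.1)^2 := Summable.of_finite
      have s2 : Summable fun y : {y : Vtx // adj x y} => (v y.1)^2 := Summable.of_finite
      have s3 : Summable fun y : {y : Vtx // adj x y} => (u x)^2 + (v x)^2 := Summable.of_finite
      calc |∑' y : {y : Vtx // adj x y}, (u y.1 - u x) * (v y.1 - v x)|
          ≤ ∑' y : {y : Vtx // adj x y}, |(u y.1 - u x) * (v y.1 - v x)| := by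
            simpa [Real.norm_eq_abs] using norm_tsum_le_tsum_norm
              (f := fun y : {y : Vtx // adj x y} => (u y.1 - u x) * (v y.1 - v x))
              Summable.of_finite
        _ ≤ ∑' y : {y : Vtx // adj x y}, ((u y.1)^2 + (v y.1)^2 + ((u x)^2 + (v x)^2)) := by
            refine Summable.tsum_le_tsum (fun y => ?_) Summable.of_finite Summable.of_finite
            rw [abs_le]
            constructor
            · nlinarith [sq_nonneg (u y.1 - u x + (v y.1 - v x)), sq_nonneg (u y.1 + u x),
                sq_nonneg (v y.1 + v x)]
            · nlinarith [sq_nonneg (u y.1 - u x - (v y.1 - v x)), sq_nonneg (u y.1 + u x),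
                sq_nonneg (v y.1 + v x)]
        _ = Nu x + Nv x + ∑' y : {y : Vtx // adj x y}, ((u x)^2 + (v x)^2) := by
            rw [(s1.add s2).tsum_add s3, s1.tsum_add s2]
        _ ≤ _ := by
            gcongr
            exact sum_const_le hfin hdeg x _ (by positivity)
    have h2 : |Vp x * u x * v x| ≤ (1/2) * (C2 * ((u x)^2 + (v x)^2)) := by
      rw [mul_assoc, abs_mul, abs_of_nonneg (hV x).1]
      have h3 : |u x * v x| ≤ (1/2) * ((u x)^2 + (v x)^2) := by
        rw [abs_le]
        constructor <;> nlinarith [sq_nonneg (u x + v x), sq_nonneg (u x - v x)]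
      calc Vp x * |u x * v x| ≤ C2 * ((1/2) * ((u x)^2 + (v x)^2)) :=
            mul_le_mul (hV x).2 h3 (abs_nonneg _) ((hV x).1.trans (hV x).2)
        _ = _ := by ring
    calc _ ≤ _ := abs_add_le _ _
      _ ≤ _ := add_le_add h1 h2
      _ = _ := by ring
  have hsum : HasSum (fun x => (1/2) * (Nu x + Nv x + (D + C2) * ((u x)^2 + (v x)^2)))
      ((1/2) * (∑' x, Nu x + ∑' x, Nv x + (D + C2) * (‖u‖^2 + ‖v‖^2))) :=
    ((nu.hasSum.add nv.hasSum).add ((hu.add hv).mul_left _)).mul_left _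
  have hS := Summable.of_norm_bounded hsum.summable (fun x => by
    rw [Real.norm_eq_abs]; exact key x)
  refine ⟨hS, ?_⟩
  have h4 : |iprodH adj Vp u v| ≤
      (1/2) * (∑' x, Nu x + ∑' x, Nv x + (D + C2) * (‖u‖^2 + ‖v‖^2)) := by
    have := tsum_of_norm_bounded hsum (fun x => by rw [Real.norm_eq_abs]; exact key x)
    simpa [iprodH] using this
  refine h4.trans ?_
  rcases isEmpty_or_nonempty Vtx with hem | ⟨⟨x0⟩⟩
  · have z1 : ‖u‖^2 = 0 := by rw [← hu.tsum_eq]; simp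
    have z2 : ‖v‖^2 = 0 := by rw [← hv.tsum_eq]; simp
    simp [z1, z2]
  · have hC2 : 0 ≤ C2 := (hV x0).1.trans (hV x0).2
    nlinarith [mul_nonneg hC2 (add_nonneg (sq_nonneg ‖u‖) (sq_nonneg ‖v‖))]

theorem gamma_add (hfin : ∀ x, {y | adj x y}.Finite) (u v w : Vtx → ℝ) (x : Vtx) :
    gammaProd adj u (fun y => v y + w y) x = gammaProd adj u v x + gammaProd adj u w x := by
  have hE : ∀ x, Finite {y : Vtx // adj x y} := fun x => hfin x
  unfold gammaProd
  rw [← mul_add, ← Summable.tsum_add Summable.of_finite Summable.of_finite]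
  congr 2
  ext y
  ring

theorem gamma_smul (u v : Vtx → ℝ) (c : ℝ) (x : Vtx) :
    gammaProd adj u (fun y => c * v y) x = c * gammaProd adj u v x := by
  unfold gammaProd
  rw [mul_left_comm, ← tsum_mul_left (a := c)]
  congr 2
  ext y
  ring

theorem gamma_comm (u v : Vtx → ℝ) (x : Vtx) :
    gammaProd adj u v x = gammaProd adj v u x := by
  unfold gammaProd
  congr 2
  ext y
  ring

theorem iprod_comm (Vp : Vtx → ℝ) (u v : H1 Vtx) : iprodH adj Vp u v = iprodH adj Vp v u := by
  unfold iprodH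
  congr 1
  ext x
  rw [gamma_comm]
  ring

theorem iprod_smul (Vp : Vtx → ℝ) (u v : H1 Vtx) (c : ℝ) :
    iprodH adj Vp u (c • v) = c * iprodH adj Vp u v := by
  unfold iprodH
  rw [← tsum_mul_left]
  congr 1
  ext x
  have := gamma_smul (adj := adj) (fun y => u y) (fun y => v y) c x
  simp only [lp.coeFn_smul, Pi.smul_apply, smul_eq_mul]
  rw [this]
  ring

theorem iprod_add (hsym : ∀ x y, adj x y → adj y x) (hfin : ∀ x, {y | adj x y}.Finite)
    (hdeg : ∀ x, {y | adj x y}.ncard ≤ D) {Vp : Vtx → ℝ} {C2 : ℝ}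
    (hV : ∀ x, 0 ≤ Vp x ∧ Vp x ≤ C2) (u v w : H1 Vtx) :
    iprodH adj Vp u (v + w) = iprodH adj Vp u v + iprodH adj Vp u w := by
  unfold iprodH
  rw [← Summable.tsum_add (bil_bound hsym hfin hdeg hV u v).1 (bil_bound hsym hfin hdeg hV u w).1]
  congr 1
  ext x
  have := gamma_add hfin (fun y => u y) (fun y => v y) (fun y => w y) x
  simp only [lp.coeFn_add, Pi.add_apply]
  rw [this]
  ring

theorem quad_deriv (hsym : ∀ x y, adj x y → adj y x) (hfin : ∀ x, {y | adj x y}.Finite)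
    (hdeg : ∀ x, {y | adj x y}.ncard ≤ D) {Vp : Vtx → ℝ} {C2 : ℝ}
    (hV : ∀ x, 0 ≤ Vp x ∧ Vp x ≤ C2) (u : H1 Vtx) :
    ∃ L : H1 Vtx →L[ℝ] ℝ, (∀ v, L v = iprodH adj Vp u v) ∧
      HasFDerivAt (fun u : H1 Vtx => (1/2) * iprodH adj Vp u u) L u := by
  let l : H1 Vtx →ₗ[ℝ] ℝ :=
    { toFun := fun v => iprodH adj Vp u v
      map_add' := fun v w => iprod_add hsym hfin hdeg hV u v w
      map_smul' := fun c v => iprod_smul Vp u v c }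
  have hb := l.bound_of_sphere_bound one_pos ((D + C2) * (‖u‖^2 + 1)) (by
    intro z hz
    have hz' : ‖z‖ = 1 := by simpa using hz
    have := (bil_bound hsym hfin hdeg hV u z).2
    rw [hz', one_pow] at this
    rw [Real.norm_eq_abs]
    exact this)
  let L := l.mkContinuous _ hb
  have hL : ∀ v, L v = iprodH adj Vp u v := fun v => rfl
  refine ⟨L, hL, ?_⟩
  rw [hasFDerivAt_iff_isLittleO_nhds_zero]
  have hid : ∀ h : H1 Vtx, (1/2) * iprodH adj Vp (u + h) (u + h) - (1/2) * iprodH adj Vp u u - L h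
      = (1/2) * iprodH adj Vp h h := by
    intro h
    rw [hL, iprod_add hsym hfin hdeg hV, iprod_comm Vp (u+h) u, iprod_comm Vp (u+h) h,
      iprod_add hsym hfin hdeg hV, iprod_add hsym hfin hdeg hV, iprod_comm Vp h u]
    ring
  simp only [hid]
  have hO : (fun h : H1 Vtx => (1/2) * iprodH adj Vp h h) =O[nhds 0] fun h : H1 Vtx => ‖h‖^2 := by
    refine Asymptotics.IsBigO.of_bound (D + C2) (Filter.Eventually.of_forall fun h => ?_)
    have := (bil_bound hsym hfin hdeg hV h h).2
    rw [norm_mul, Real.norm_eq_abs, Real.norm_eq_abs, Real.norm_eq_abs,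
      abs_of_pos (by norm_num : (0:ℝ) < 1/2), abs_of_nonneg (sq_nonneg ‖h‖)]
    linarith
  refine hO.trans_isLittleO ?_
  simpa using Asymptotics.isLittleO_norm_pow_id (E' := H1 Vtx) one_lt_two

end quad

section nonlin
variable {Vtx : Type*} {f : Vtx → ℝ → ℝ} {a q : ℝ}

theorem growth' (ha : 0 < a) (hq : 2 < q)
    (hgrowth : ∀ x t, |f x t| ≤ a * (|t| + |t| ^ (q - 1))) (M : ℝ) (hM : 0 ≤ M) :
    ∃ C, 0 ≤ C ∧ ∀ x t, |t| ≤ M → |f x t| ≤ C * |t| := by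
  refine ⟨a * (1 + M ^ (q-2)), by positivity, fun x t ht => (hgrowth x t).trans ?_⟩
  rcases eq_or_ne t 0 with rfl | h0
  · have : (0:ℝ) ^ (q-1) = 0 := Real.zero_rpow (by linarith)
    simp [this]
  · have hp : 0 < |t| := abs_pos.2 h0
    have e : |t| ^ (q-1) = |t| ^ (q-2) * |t| := by
      rw [← Real.rpow_add_one hp.ne']
      congr 1
      ring
    have h2 : |t| ^ (q-2) ≤ M ^ (q-2) := Real.rpow_le_rpow hp.le ht (by linarith)
    rw [e, mul_assoc]
    gcongr
    nlinarith

theorem ray_mono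
    (hmono : ∀ x, StrictMonoOn (fun t => f x t / |t|) (Set.Iio 0) ∧
             StrictMonoOn (fun t => f x t / |t|) (Set.Ioi 0)) (x : Vtx) {t s s' : ℝ}
    (ht : t ≠ 0) (hs : 0 < s) (hss : s < s') :
    f x (s * t) * t / s < f x (s' * t) * t / s' := by
  have hs' : 0 < s' := hs.trans hss
  rcases lt_or_gt_of_ne ht with h | h
  · have h1 := (hmono x).1 (show s' * t ∈ Set.Iio 0 by simpa using mul_neg_of_pos_of_neg hs' h)
      (show s * t ∈ Set.Iio 0 by simpa using mul_neg_of_pos_of_neg hs h) (by nlinarith)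
    simp only [abs_mul, abs_of_pos hs, abs_of_pos hs', abs_of_neg h] at h1
    have h2 : 0 < t^2 := by positivity
    have e1 : f x (s * t) * t / s = - (f x (s*t) / (s * -t)) * t^2 := by field_simp
    have e2 : f x (s' * t) * t / s' = - (f x (s'*t) / (s' * -t)) * t^2 := by field_simp
    rw [e1, e2]
    nlinarith
  · have h1 := (hmono x).2 (show s * t ∈ Set.Ioi 0 by simpa using mul_pos hs h)
      (show s' * t ∈ Set.Ioi 0 by simpa using mul_pos hs' h) (by nlinarith)
    simp only [abs_mul, abs_of_pos hs, abs_of_pos hs', abs_of_pos h] at h1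
    have h2 : 0 < t^2 := by positivity
    have e1 : f x (s * t) * t / s = (f x (s*t) / (s * t)) * t^2 := by field_simp
    have e2 : f x (s' * t) * t / s' = (f x (s'*t) / (s' * t)) * t^2 := by field_simp
    rw [e1, e2]
    nlinarith

theorem ray_nonneg
    (hsmall : ∀ ε > 0, ∃ δ > 0, ∀ x t, t ≠ 0 → |t| < δ → |f x t| ≤ ε * |t|)
    (hmono : ∀ x, StrictMonoOn (fun t => f x t / |t|) (Set.Iio 0) ∧
             StrictMonoOn (fun t => f x t / |t|) (Set.Ioi 0)) (x : Vtx) (t : ℝ) :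
    0 ≤ f x t * t := by
  rcases eq_or_ne t 0 with rfl | h0
  · simp
  refine le_of_forall_pos_le_add fun ε hε => ?_
  have hp : 0 < |t| := abs_pos.2 h0
  obtain ⟨δ, hδ, h⟩ := hsmall (ε / t^2) (by positivity)
  obtain ⟨s, hs0, hs⟩ : ∃ s : ℝ, 0 < s ∧ s < min 1 (δ / |t|) :=
    exists_between (by positivity)
  have hs1 : s < 1 := hs.trans_le (min_le_left _ _)
  have hs2 : s * |t| < δ := (lt_div_iff₀ hp).1 (hs.trans_le (min_le_right _ _))
  have h1 := ray_mono hmono x h0 hs0 hs1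
  have h2 := h x (s * t) (by positivity) (by rwa [abs_mul, abs_of_pos hs0])
  rw [abs_mul, abs_of_pos hs0] at h2
  have h3 : |f x (s * t) * t / s| ≤ ε := by
    rw [abs_div, abs_mul, abs_of_pos hs0, div_le_iff₀ hs0]
    calc |f x (s * t)| * |t| ≤ (ε / t^2 * (s * |t|)) * |t| := by gcongr
      _ = ε * s * (|t|^2 / t^2) := by ring
      _ = ε * s := by rw [sq_abs, div_self (by positivity), mul_one]
  have := (abs_le.1 h3).1
  simp only [one_mul, div_one] at h1
  linarith

theorem abs_mono
    (hsmall : ∀ ε > 0, ∃ δ > 0, ∀ x t, t ≠ 0 → |t| < δ → |f x t| ≤ ε * |t|)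
    (hmono : ∀ x, StrictMonoOn (fun t => f x t / |t|) (Set.Iio 0) ∧
             StrictMonoOn (fun t => f x t / |t|) (Set.Ioi 0)) (x : Vtx) {t s : ℝ}
    (ht : t ≠ 0) (hs : 0 < s) (hs1 : s ≤ 1) : |f x (s * t)| ≤ |f x t| := by
  rcases hs1.eq_or_lt with rfl | hs1
  · simp
  have h1 := ray_mono hmono x ht hs hs1
  simp only [one_mul, div_one] at h1
  have h2 := ray_nonneg hsmall hmono x t
  have h3 := ray_nonneg hsmall hmono x (s * t)
  have hp : 0 < |t| := abs_pos.2 ht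
  rw [div_lt_iff₀ hs] at h1
  have h4 : 0 ≤ f x (s * t) * t := by
    rw [mul_left_comm] at h3
    exact nonneg_of_mul_nonneg_right h3 hs
  have h5 : |f x (s*t)| * |t| ≤ |f x t| * |t| := by
    rw [← abs_mul, ← abs_mul, abs_of_nonneg h2, abs_of_nonneg h4]
    nlinarith
  exact le_of_mul_le_mul_right h5 hp

theorem F_le (hf0 : ∀ x, f x 0 = 0)
    (hsmall : ∀ ε > 0, ∃ δ > 0, ∀ x t, t ≠ 0 → |t| < δ → |f x t| ≤ ε * |t|)
    (hmono : ∀ x, StrictMonoOn (fun t => f x t / |t|) (Set.Iio 0) ∧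
             StrictMonoOn (fun t => f x t / |t|) (Set.Ioi 0))
    {F : Vtx → ℝ → ℝ} (hF : ∀ x t, F x t = ∫ s in (0:ℝ)..t, f x s) (x : Vtx) (t : ℝ) :
    F x t ≤ f x t * t := by
  have h : ‖∫ s in (0:ℝ)..t, f x s‖ ≤ |f x t| * |t - 0| := by
    refine intervalIntegral.norm_integral_le_of_norm_le_const fun s hs => ?_
    rw [Real.norm_eq_abs]
    rcases lt_trichotomy t 0 with h | h | h
    · rw [Set.uIoc_of_ge h.le] at hs
      rcases hs.2.eq_or_lt with h0 | h0
      · rw [h0, hf0]; simp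
      have e : s = (s / t) * t := (div_mul_cancel₀ s (by exact h.ne)).symm
      rw [e]
      exact abs_mono hsmall hmono x h.ne (div_pos_of_neg_of_neg h0 h)
        (by rw [div_le_one_of_neg h]; exact hs.1.le)
    · subst h; simp at hs
    · rw [Set.uIoc_of_le h.le] at hs
      have e : s = (s / t) * t := by field_simp
      rw [e]
      exact abs_mono hsmall hmono x h.ne' (div_pos hs.1 h)
        (by rw [div_le_one h]; exact hs.2)
  rw [hF]
  refine (le_abs_self _).trans (h.trans_eq ?_)
  rw [sub_zero, ← abs_mul, abs_of_nonneg (ray_nonneg hsmall hmono x t)]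

theorem I_deriv (hcont : ∀ x, Continuous (f x)) (ha : 0 < a) (hq : 2 < q)
    (hgrowth : ∀ x t, |f x t| ≤ a * (|t| + |t| ^ (q - 1)))
    (hsmall : ∀ ε > 0, ∃ δ > 0, ∀ x t, t ≠ 0 → |t| < δ → |f x t| ≤ ε * |t|)
    {F : Vtx → ℝ → ℝ} (hF : ∀ x t, F x t = ∫ s in (0:ℝ)..t, f x s) (u : H1 Vtx) :
    ∃ L : H1 Vtx →L[ℝ] ℝ, (∀ v, L v = ∑' x, f x (u x) * v x) ∧
      HasFDerivAt (fun u : H1 Vtx => ∑' x, F x (u x)) L u := by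
  have hf0 : ∀ x, f x 0 = 0 := by
    intro x
    have := hgrowth x 0
    rw [abs_zero, Real.zero_rpow (by linarith)] at this
    simpa using this
  -- summability of `F x (v x)`
  have hFs : ∀ v : H1 Vtx, Summable fun x => F x (v x) := by
    intro v
    obtain ⟨C, hC, hCf⟩ := growth' ha hq hgrowth ‖v‖ (norm_nonneg _)
    refine Summable.of_norm_bounded ((sq_hasSum v).summable.mul_left C) fun x => ?_
    rw [hF]
    have : ‖∫ s in (0:ℝ)..(v x), f x s‖ ≤ (C * |v x|) * |v x - 0| := by
      refine intervalIntegral.norm_integral_le_of_norm_le_const fun s hs => ?_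
      have hs' : |s| ≤ |v x| := by
        have := Set.abs_sub_left_of_mem_uIcc (Set.uIoc_subset_uIcc hs)
        simpa using this
      rw [Real.norm_eq_abs]
      refine (hCf x s (hs'.trans (abs_le_nrm v x))).trans ?_
      gcongr
    refine this.trans_eq ?_
    rw [sub_zero, mul_assoc, abs_mul_abs_self, sq]
  obtain ⟨C, hC, hCf⟩ := growth' ha hq hgrowth ‖u‖ (norm_nonneg _)
  have hg : Memℓp (fun x => f x (u x)) 2 := by
    refine memℓp_gen ?_
    refine Summable.of_nonneg_of_le (fun x => by positivity) (fun x => ?_)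
      ((sq_hasSum u).summable.mul_left (C^2))
    have := hCf x (u x) (abs_le_nrm u x)
    simp only [ENNReal.toReal_ofNat, Real.rpow_ofNat, Real.norm_eq_abs]
    calc |f x (u x)|^2 ≤ (C * |u x|)^2 := by gcongr
      _ = _ := by rw [mul_pow, sq_abs]
  let g : H1 Vtx := ⟨fun x => f x (u x), hg⟩
  have hgx : ∀ x, g x = f x (u x) := fun x => rfl
  have hin : ∀ v : H1 Vtx, HasSum (fun x => f x (u x) * v x) (innerSL ℝ g v) := by
    intro v
    have := lp.hasSum_inner (𝕜 := ℝ) g v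
    simpa [hgx, mul_comm] using this
  refine ⟨innerSL ℝ g, fun v => (hin v).tsum_eq.symm, ?_⟩
  rw [hasFDerivAt_iff_isLittleO_nhds_zero, Asymptotics.isLittleO_iff]
  intro c hc
  let r : Vtx → ℝ → ℝ := fun x h => F x (u x + h) - F x (u x) - f x (u x) * h
  have hrs : ∀ v : H1 Vtx, HasSum (fun x => r x (v x))
      (∑' x, F x ((u + v) x) - ∑' x, F x (u x) - innerSL ℝ g v) := fun v =>
    ((hFs (u+v)).hasSum.sub (hFs u).hasSum).sub (hin v)
  -- tail estimate
  set ε := c / (4 * (‖u‖ + 1)) with hε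
  have hε0 : 0 < ε := by positivity
  obtain ⟨δ, hδ, hδf⟩ := hsmall ε hε0
  have htail : ∀ x h, |u x| < δ/2 → |h| < δ/2 → |r x h| ≤ 2 * ε * (|u x| * |h| + |h| * |h|) := by
    intro x h hu hh
    have hii : ∀ p q, IntervalIntegrable (f x) MeasureTheory.volume p q := fun p q =>
      (hcont x).intervalIntegrable p q
    have e : r x h = ∫ s in (u x)..(u x + h), (f x s - f x (u x)) := by
      rw [intervalIntegral.integral_sub (hii _ _) intervalIntegrable_const,
        intervalIntegral.integral_const]
      simp only [r, hF]
      rw [← intervalIntegral.integral_interval_sub_left (hii 0 (u x + h)) (hii 0 (u x))]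
      simp [mul_comm]
    have fb : ∀ t, |t| ≤ |u x| + |h| → |f x t| ≤ ε * (|u x| + |h|) := by
      intro t ht
      rcases eq_or_ne t 0 with rfl | h0
      · rw [hf0, abs_zero]; positivity
      · exact (hδf x t h0 (by linarith)).trans (by gcongr)
    have : ‖∫ s in (u x)..(u x + h), (f x s - f x (u x))‖ ≤
        (2 * ε * (|u x| + |h|)) * |u x + h - u x| := by
      refine intervalIntegral.norm_integral_le_of_norm_le_const fun s hs => ?_
      have hs' : |s - u x| ≤ |h| := by
        have := Set.abs_sub_left_of_mem_uIcc (Set.uIoc_subset_uIcc hs)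
        simpa using this
      have h1 : |s| ≤ |u x| + |h| := by
        have := abs_add_le (s - u x) (u x)
        rw [sub_add_cancel] at this
        linarith
      rw [Real.norm_eq_abs]
      have h2 := fb s h1
      have h3 := fb (u x) (by linarith [abs_nonneg h])
      have h4 := abs_sub (f x s) (f x (u x))
      linarith
    rw [e, ← Real.norm_eq_abs]
    refine this.trans_eq ?_
    rw [add_sub_cancel_left]
    ring
  -- finite exceptional set
  have hK : {x | ¬ |u x| < δ/2}.Finite := by
    have h0 := (sq_hasSum u).summable.tendsto_cofinite_zero
    have := h0.eventually (gt_mem_nhds (show (0:ℝ) < (δ/2)^2 by positivity))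
    rw [Filter.eventually_cofinite] at this
    refine this.subset fun x hx => ?_
    simp only [Set.mem_ofPred_eq, not_lt] at hx ⊢
    rw [← sq_abs (u x)]
    gcongr
  set K := hK.toFinset with hKdef
  have hhead : ∀ x ∈ K, ∀ᶠ v : H1 Vtx in nhds 0, |r x (v x)| ≤ (c / (2 * (K.card + 1))) * ‖v‖ := by
    intro x _
    have hd : HasDerivAt (F x) (f x (u x)) (u x) := by
      have : F x = fun t => ∫ s in (0:ℝ)..t, f x s := funext (hF x)
      rw [this]
      exact intervalIntegral.integral_hasDerivAt_right ((hcont x).intervalIntegrable _ _)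
        ((hcont x).stronglyMeasurableAtFilter _ _) (hcont x).continuousAt
    have ho := (hasDerivAt_iff_isLittleO_nhds_zero.1 hd)
    rw [Asymptotics.isLittleO_iff] at ho
    have ho1 := ho (show 0 < c / (2 * (K.card + 1 : ℝ)) by positivity)
    have ht : Filter.Tendsto (fun v : H1 Vtx => v x) (nhds 0) (nhds 0) := by
      rw [tendsto_zero_iff_abs_tendsto_zero]
      exact squeeze_zero (fun v => abs_nonneg _) (fun v => abs_le_nrm v x) tendsto_norm_zero
    filter_upwards [ht.eventually ho1] with v hv
    simp only [Real.norm_eq_abs, smul_eq_mul] at hv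
    calc |r x (v x)| = |F x (u x + v x) - F x (u x) - v x * f x (u x)| := by
          simp only [r]; rw [mul_comm (v x)]
      _ ≤ _ := hv
      _ ≤ _ := by
        have := abs_le_nrm v x
        gcongr
  have hhead' := (Filter.eventually_all_finset K).2 hhead
  have hnear : ∀ᶠ v : H1 Vtx in nhds 0, ‖v‖ < min (δ/2) 1 :=
    tendsto_norm_zero.eventually (gt_mem_nhds (by positivity))
  filter_upwards [hhead', hnear] with v hv1 hv2
  have hv3 : ‖v‖ < δ/2 := hv2.trans_le (min_le_left _ _)
  have hv4 : ‖v‖ < 1 := hv2.trans_le (min_le_right _ _)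
  have hm1 := mul_sum u v
  have hm2 := mul_sum v v
  have hS := (hrs v).summable
  rw [← (hrs v).tsum_eq, ← hS.sum_add_tsum_subtype_compl K]
  have hpart1 : ‖∑ x ∈ K, r x (v x)‖ ≤ c / 2 * ‖v‖ := by
    calc ‖∑ x ∈ K, r x (v x)‖ ≤ ∑ x ∈ K, (c / (2 * (K.card + 1))) * ‖v‖ :=
          norm_sum_le_of_le _ fun x hx => hv1 x hx
      _ = (K.card / (K.card + 1)) * (c / 2 * ‖v‖) := by
          rw [Finset.sum_const, nsmul_eq_mul]; field_simp
      _ ≤ 1 * (c / 2 * ‖v‖) := by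
          gcongr
          rw [div_le_one (by positivity)]
          linarith
      _ = _ := one_mul _
  have hsb : Summable fun x => 2 * ε * (|u x| * |v x| + |v x| * |v x|) :=
    (hm1.1.add hm2.1).mul_left _
  have hpart2 : ‖∑' x : {x // x ∉ K}, r x (v x)‖ ≤ c / 2 * ‖v‖ := by
    calc ‖∑' x : {x // x ∉ K}, r x (v x)‖
        ≤ ∑' x : {x // x ∉ K}, 2 * ε * (|u x| * |v x| + |v x| * |v x|) := by
          refine tsum_of_norm_bounded (hsb.subtype {x | x ∉ K}).hasSum fun x => ?_
          have hx := x.2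
          simp only [hKdef, Set.Finite.mem_toFinset, Set.mem_ofPred_eq, not_not] at hx
          exact htail x (v x) hx ((abs_le_nrm v x).trans_lt hv3)
      _ ≤ ∑' x, 2 * ε * (|u x| * |v x| + |v x| * |v x|) :=
          hsb.tsum_subtype_le _ {x | x ∉ K} (fun x => by positivity)
      _ = 2 * ε * (∑' x, |u x| * |v x| + ∑' x, |v x| * |v x|) := by
          rw [tsum_mul_left, hm1.1.tsum_add hm2.1]
      _ ≤ 2 * ε * (‖u‖ * ‖v‖ + 1 * ‖v‖) := by
          have h5 : ‖v‖ * ‖v‖ ≤ 1 * ‖v‖ := by gcongr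
          have h6 := hm1.2
          have h7 := hm2.2.trans h5
          gcongr
      _ = _ := by rw [hε]; field_simp; ring
  calc _ ≤ _ := norm_add_le _ _
    _ ≤ _ := add_le_add hpart1 hpart2
    _ = _ := by ring

end nonlin

theorem quad_eq {Vtx : Type*} (adj : Vtx → Vtx → Prop) (Vp : Vtx → ℝ) (u : H1 Vtx) :
    ∑' x, (gradSq adj (fun y => u y) x + Vp x * (u x)^2) = iprodH adj Vp u u := by
  unfold iprodH gradSq
  congr 1
  ext x
  ring

/-- Proposition 3.3 (i): for `w ≠ 0` and `α_w(s) = Φ(sw)`, with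
`α_w'(s) = s‖w‖² − I'(sw)w`, there is a unique `s_w > 0` with `α_w' > 0` on `(0,s_w)` and
`α_w' < 0` on `(s_w,∞)`; `s_w w` is the unique point of the ray `{sw : s>0}` on the
Nehari manifold. -/
theorem stmt8
    {Vtx : Type*} (adj : Vtx → Vtx → Prop) (D : ℕ)
    (hsym : ∀ x y, adj x y → adj y x)
    (hirr : ∀ x, ¬ adj x x)
    (hfin : ∀ x, {y | adj x y}.Finite)
    (hdeg : ∀ x, {y | adj x y}.ncard ≤ D)
    (Vp : Vtx → ℝ) (C1 C2 : ℝ) (hC1 : 0 < C1)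
    (hVbd : ∀ x, C1 ≤ Vp x ∧ Vp x ≤ C2)
    (f : Vtx → ℝ → ℝ) (hcont : ∀ x, Continuous (f x))
    (a q : ℝ) (ha : 0 < a) (hq : 2 < q)
    (hgrowth : ∀ x t, |f x t| ≤ a * (|t| + |t| ^ (q - 1)))
    (hsmall : ∀ ε > 0, ∃ δ > 0, ∀ x t, t ≠ 0 → |t| < δ → |f x t| ≤ ε * |t|)
    (hmono : ∀ x, StrictMonoOn (fun t => f x t / |t|) (Set.Iio 0) ∧
             StrictMonoOn (fun t => f x t / |t|) (Set.Ioi 0))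
    (F : Vtx → ℝ → ℝ) (hF : ∀ x t, F x t = ∫ s in (0:ℝ)..t, f x s)
    (hsuper : ∀ M : ℝ, ∃ R > 0, ∀ x t, R ≤ |t| → M ≤ F x t / t ^ 2)
    :
    ∀ w : H1 Vtx, w ≠ 0 →
      ∃! s_w : ℝ, 0 < s_w ∧
        (∀ s : ℝ, 0 < s → s < s_w →
          0 < s * (nrmH adj Vp w) ^ 2 - ∑' x, f x (s * w x) * w x) ∧
        (∀ s : ℝ, s_w < s →
          s * (nrmH adj Vp w) ^ 2 - ∑' x, f x (s * w x) * w x < 0) ∧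
        (∀ s : ℝ, 0 < s → (s • w ∈ Nehari adj Vp F ↔ s = s_w)) := by
  intro w hw
  have hV : ∀ x, 0 ≤ Vp x ∧ Vp x ≤ C2 := fun x => ⟨hC1.le.trans (hVbd x).1, (hVbd x).2⟩
  have hf0 : ∀ x, f x 0 = 0 := by
    intro x
    have := hgrowth x 0
    rw [abs_zero, Real.zero_rpow (by linarith)] at this
    simpa using this
  set Q := iprodH adj Vp w w with hQ
  have hwn : 0 < ‖w‖ := norm_pos_iff.2 hw
  have hQge : C1 * ‖w‖^2 ≤ Q := by
    rw [← (sq_hasSum w).tsum_eq, ← tsum_mul_left, hQ]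
    unfold iprodH
    refine Summable.tsum_le_tsum (fun x => ?_) ((sq_hasSum w).summable.mul_left _)
      (bil_bound hsym hfin hdeg hV w w).1
    have h1 : 0 ≤ gammaProd adj (fun y => w y) (fun y => w y) x := by
      unfold gammaProd
      exact mul_nonneg (by norm_num) (tsum_nonneg fun y => mul_self_nonneg _)
    nlinarith [mul_le_mul_of_nonneg_right (hVbd x).1 (sq_nonneg (w x))]
  have hQ0 : 0 < Q := lt_of_lt_of_le (by positivity) hQge
  have hnrm : nrmH adj Vp w ^ 2 = Q := by
    unfold nrmH nrmV
    rw [quad_eq, Real.sq_sqrt hQ0.le]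
  rw [hnrm]
  -- domination of the terms on bounded intervals
  have hdom : ∀ S : ℝ, 0 ≤ S → ∃ C, 0 ≤ C ∧ ∀ x s, s ∈ Set.Icc 0 S →
      ‖f x (s * w x) * w x‖ ≤ C * (w x)^2 := by
    intro S hS
    obtain ⟨C, hC, hCf⟩ := growth' ha hq hgrowth (S * ‖w‖) (by positivity)
    refine ⟨C * S, by positivity, fun x s hs => ?_⟩
    have h1 : |s * w x| ≤ S * |w x| := by
      rw [abs_mul, abs_of_nonneg hs.1]
      exact mul_le_mul_of_nonneg_right hs.2 (abs_nonneg _)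
    have h2 := hCf x (s * w x) (h1.trans (by gcongr; exact abs_le_nrm w x))
    rw [Real.norm_eq_abs, abs_mul]
    calc |f x (s * w x)| * |w x| ≤ (C * (S * |w x|)) * |w x| := by
          gcongr
          exact h2.trans (by gcongr)
      _ = C * S * |w x|^2 := by ring
      _ = _ := by rw [sq_abs]
  have hsum : ∀ s : ℝ, 0 ≤ s → Summable fun x => f x (s * w x) * w x := by
    intro s hs
    obtain ⟨C, hC, h⟩ := hdom s hs
    exact Summable.of_norm_bounded ((sq_hasSum w).summable.mul_left C)
      fun x => h x s ⟨hs, le_rfl⟩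
  set G : ℝ → ℝ := fun s => ∑' x, f x (s * w x) * w x with hG
  have hGcont : ∀ S : ℝ, 0 ≤ S → ContinuousOn G (Set.Icc 0 S) := by
    intro S hS
    obtain ⟨C, hC, h⟩ := hdom S hS
    exact continuousOn_tsum
      (fun x => (((hcont x).comp (continuous_id.mul continuous_const)).mul
        continuous_const).continuousOn)
      ((sq_hasSum w).summable.mul_left C) (fun x s hs => h x s hs)
  obtain ⟨x0, hx0⟩ : ∃ x, w x ≠ 0 := by
    by_contra hcon
    push Not at hcon
    exact hw (lp.ext (funext fun x => by simpa using hcon x))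
  have hGmono : ∀ s s' : ℝ, 0 < s → s < s' → G s / s < G s' / s' := by
    intro s s' hs hss
    have hs' := hs.trans hss
    simp only [hG]
    rw [← tsum_div_const, ← tsum_div_const]
    refine Summable.tsum_lt_tsum (i := x0) (fun x => ?_) (ray_mono hmono x0 hx0 hs hss)
      ((hsum s hs.le).div_const _) ((hsum s' hs'.le).div_const _)
    rcases eq_or_ne (w x) 0 with h0 | h0
    · simp [h0]
    · exact (ray_mono hmono x h0 hs hss).le
  -- small parameter
  obtain ⟨s1, hs1, hG1⟩ : ∃ s1 : ℝ, 0 < s1 ∧ G s1 / s1 < Q := by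
    obtain ⟨δ, hδ, h⟩ := hsmall (C1/2) (by positivity)
    refine ⟨δ / (2 * ‖w‖), by positivity, ?_⟩
    set s1 := δ / (2 * ‖w‖) with hs1
    have hs1p : 0 < s1 := by positivity
    have hsw : s1 * ‖w‖ < δ := by
      rw [hs1]; field_simp; linarith
    rw [div_lt_iff₀ hs1p]
    have hle : G s1 ≤ ∑' x, (C1/2 * s1) * (w x)^2 := by
      refine Summable.tsum_le_tsum (fun x => ?_) (hsum s1 hs1p.le)
        ((sq_hasSum w).summable.mul_left _)
      rcases eq_or_ne (w x) 0 with h0 | h0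
      · simp [h0]
      · have h1 := h x (s1 * w x) (mul_ne_zero hs1p.ne' h0) (by
          rw [abs_mul, abs_of_pos hs1p]
          exact lt_of_le_of_lt (by gcongr; exact abs_le_nrm w x) hsw)
        rw [abs_mul s1, abs_of_pos hs1p] at h1
        calc f x (s1 * w x) * w x ≤ |f x (s1 * w x)| * |w x| := by
              rw [← abs_mul]; exact le_abs_self _
          _ ≤ (C1/2 * (s1 * |w x|)) * |w x| := by gcongr
          _ = C1/2 * s1 * |w x|^2 := by ring
          _ = _ := by rw [sq_abs]
    rw [tsum_mul_left, (sq_hasSum w).tsum_eq] at hle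
    have : 0 < C1 * ‖w‖^2 := by positivity
    nlinarith
  -- large parameter
  obtain ⟨s2, hs2, hG2⟩ : ∃ s2 : ℝ, 0 < s2 ∧ Q < G s2 / s2 := by
    obtain ⟨R, hR, h⟩ := hsuper (2 * Q / (w x0)^2)
    have hp : 0 < |w x0| := abs_pos.2 hx0
    refine ⟨R / |w x0|, by positivity, ?_⟩
    set s2 := R / |w x0| with hs2
    have hs2p : 0 < s2 := by positivity
    have h1 := h x0 (s2 * w x0) (by
      rw [abs_mul, abs_of_pos hs2p, hs2, div_mul_cancel₀ _ hp.ne'])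
    have h2 := F_le hf0 hsmall hmono hF x0 (s2 * w x0)
    have h3 : f x0 (s2 * w x0) * w x0 ≤ G s2 := by
      refine (hsum s2 hs2p.le).le_tsum x0 fun x _ => ?_
      have := ray_nonneg hsmall hmono x (s2 * w x)
      rw [mul_left_comm] at this
      exact nonneg_of_mul_nonneg_right this hs2p
    have hw2 : 0 < (w x0)^2 := by positivity
    rw [le_div_iff₀ (by positivity)] at h1
    have h4 : 2 * Q / (w x0)^2 * (s2 * w x0)^2 = 2 * Q * s2 * s2 := by
      field_simp
    rw [h4] at h1
    have h5 : s2 * (2 * Q * s2) ≤ s2 * G s2 := by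
      calc s2 * (2 * Q * s2) ≤ f x0 (s2 * w x0) * (s2 * w x0) := by linarith
        _ = s2 * (f x0 (s2 * w x0) * w x0) := by ring
        _ ≤ _ := by gcongr
    have h6 := le_of_mul_le_mul_left h5 hs2p
    rw [lt_div_iff₀ hs2p]
    nlinarith [mul_pos hQ0 hs2p]
  have h12 : s1 < s2 := by
    by_contra hcon
    rcases (not_lt.1 hcon).eq_or_lt with h | h
    · rw [h] at hG2; linarith
    · linarith [hGmono s2 s1 hs2 h]
  obtain ⟨s0, hs0, hs0e⟩ : ∃ s0 ∈ Set.Icc s1 s2, G s0 / s0 = Q := by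
    have hc : ContinuousOn (fun s => G s / s) (Set.Icc s1 s2) :=
      ((hGcont s2 hs2.le).mono (Set.Icc_subset_Icc_left hs1.le)).div continuousOn_id
        (fun s hs => (hs1.trans_le hs.1).ne')
    exact intermediate_value_Icc h12.le hc ⟨hG1.le, hG2.le⟩
  have hs0p : 0 < s0 := hs1.trans_le hs0.1
  have hlow : ∀ s : ℝ, 0 < s → s < s0 → 0 < s * Q - G s := by
    intro s hs hss
    have := hGmono s s0 hs hss
    rw [hs0e, div_lt_iff₀ hs] at this
    linarith
  have hhigh : ∀ s : ℝ, s0 < s → s * Q - G s < 0 := by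
    intro s hss
    have := hGmono s0 s hs0p hss
    rw [hs0e, lt_div_iff₀ (hs0p.trans hss)] at this
    linarith
  have hzero : s0 * Q - G s0 = 0 := by
    rw [div_eq_iff hs0p.ne'] at hs0e
    linarith
  have hder : ∀ s : ℝ, fderiv ℝ (PhiF adj Vp F) (s • w) (s • w) = s * (s * Q - G s) := by
    intro s
    obtain ⟨L1, hL1, hd1⟩ := quad_deriv hsym hfin hdeg hV (s • w)
    obtain ⟨L2, hL2, hd2⟩ := I_deriv hcont ha hq hgrowth hsmall hF (s • w)
    have hP : PhiF adj Vp F = fun u : H1 Vtx => (1/2) * iprodH adj Vp u u - ∑' x, F x (u x) := by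
      ext u
      unfold PhiF
      rw [quad_eq]
    have hd : HasFDerivAt (PhiF adj Vp F) (L1 - L2) (s • w) := by
      rw [hP]
      exact hd1.sub hd2
    rw [hd.fderiv, ContinuousLinearMap.sub_apply, hL1, hL2, iprod_smul, iprod_comm, iprod_smul,
      ← hQ, mul_sub]
    congr 1
    simp only [hG]
    rw [← tsum_mul_left]
    congr 1
    ext x
    simp only [lp.coeFn_smul, Pi.smul_apply, smul_eq_mul]
    ring
  have hneh : ∀ s : ℝ, 0 < s → (s • w ∈ Nehari adj Vp F ↔ s = s0) := by
    intro s hs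
    constructor
    · rintro ⟨_, h2⟩
      rw [hder] at h2
      have h3 : s * Q - G s = 0 := by
        rcases mul_eq_zero.1 h2 with h | h
        · exact absurd h hs.ne'
        · exact h
      rcases lt_trichotomy s s0 with h | h | h
      · linarith [hlow s hs h]
      · exact h
      · linarith [hhigh s h]
    · rintro rfl
      refine ⟨smul_ne_zero hs.ne' hw, ?_⟩
      rw [hder, hzero, mul_zero]
  refine ⟨s0, ⟨hs0p, hlow, hhigh, hneh⟩, ?_⟩
  rintro s' ⟨_, _, _, h4⟩
  exact ((h4 s0 hs0p).1 ((hneh s0 hs0p).2 rfl)).symm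
end

section
/- In the Nehari setting, for each w ∈ H¹(V)\{0} let s_w > 0 be the unique value with Φ'(s_w w)(s_w w) = 0 (the unique maximizer of s ↦ Φ(sw) on (0,∞)). Then there exists δ > 0 such that s_w ≥ δ for all w in the unit sphere S = {w ∈ H¹(V) : ‖w‖ = 1}. -/
open scoped ENNReal

lemma h1_summable_sq {I : Type*} (u : lp (fun _ : I => ℝ) 2) : Summable (fun x => (u x)^2) := by
  have := lp.summable_inner (𝕜 := ℝ) u u
  simpa [pow_two] using this

lemma h1_norm_sq {I : Type*} (u : lp (fun _ : I => ℝ) 2) : ‖u‖^2 = ∑' x, (u x)^2 := by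
  rw [← real_inner_self_eq_norm_sq, lp.inner_eq_tsum]
  simp [pow_two]

lemma h1_coord_le {I : Type*} (u : lp (fun _ : I => ℝ) 2) (x : I) : |u x| ≤ ‖u‖ :=
  lp.norm_apply_le_norm (by norm_num) u x

lemma h1_mk {I : Type*} (v : I → ℝ) (hv : Summable (fun x => (v x)^2)) :
    ∃ u : lp (fun _ : I => ℝ) 2, ∀ x, u x = v x := by
  refine ⟨⟨v, ?_⟩, fun x => rfl⟩
  apply memℓp_gen
  simpa using hv

lemma h1_abs {I : Type*} (u h : lp (fun _ : I => ℝ) 2) :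
    Summable (fun x => |u x| * |h x|) ∧ ∑' x, |u x| * |h x| ≤ ‖u‖ * ‖h‖ := by
  obtain ⟨u', hu'⟩ := h1_mk (fun x => |u x|) (by simpa using h1_summable_sq u)
  obtain ⟨h', hh'⟩ := h1_mk (fun x => |h x|) (by simpa using h1_summable_sq h)
  have n1 : ‖u'‖ = ‖u‖ := by
    have : ‖u'‖^2 = ‖u‖^2 := by rw [h1_norm_sq, h1_norm_sq]; simp [hu']
    exact (sq_eq_sq₀ (norm_nonneg _) (norm_nonneg _)).1 this
  have n2 : ‖h'‖ = ‖h‖ := by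
    have : ‖h'‖^2 = ‖h‖^2 := by rw [h1_norm_sq, h1_norm_sq]; simp [hh']
    exact (sq_eq_sq₀ (norm_nonneg _) (norm_nonneg _)).1 this
  have s := lp.summable_inner (𝕜 := ℝ) h' u'
  have t := real_inner_le_norm h' u'
  rw [lp.inner_eq_tsum] at t
  simp only [RCLike.inner_apply, hu', hh', n1, n2, conj_trivial] at s t
  exact ⟨s, by linarith [mul_comm ‖u‖ ‖h‖]⟩

lemma quad_diff {E I : Type*} [NormedAddCommGroup E] [NormedSpace ℝ E]
    (L : I → E →ₗ[ℝ] ℝ) (C : ℝ) (hC : 0 ≤ C)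
    (hs : ∀ u, Summable (fun i => (L i u)^2))
    (hb : ∀ u, ∑' i, (L i u)^2 ≤ C * ‖u‖^2) :
    Differentiable ℝ (fun u => ∑' i, (L i u)^2) := by
  have hmem : ∀ u, Memℓp (fun i => L i u) 2 := fun u => by
    apply memℓp_gen
    simpa using hs u
  let T : E →ₗ[ℝ] lp (fun _ : I => ℝ) 2 :=
    { toFun := fun u => ⟨fun i => L i u, hmem u⟩
      map_add' := by intro u v; ext i; exact map_add (L i) u v
      map_smul' := by intro c u; ext i; exact map_smul (L i) c u }
  have hT : ∀ u i, T u i = L i u := fun u i => rfl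
  let T' : E →L[ℝ] lp (fun _ : I => ℝ) 2 := T.mkContinuous (Real.sqrt C) (fun u => by
    have h1 : ‖T u‖^2 ≤ (Real.sqrt C * ‖u‖)^2 := by
      rw [h1_norm_sq, mul_pow, Real.sq_sqrt hC]
      simpa [hT] using hb u
    exact (sq_le_sq₀ (norm_nonneg _) (by positivity)).1 h1)
  have : (fun u => ∑' i, (L i u)^2) = fun u => ‖T' u‖^2 := by
    ext u; rw [h1_norm_sq]; rfl
  rw [this]
  exact T'.differentiable.norm_sq ℝ

/-- the coordinate functional -/
def h1ev {I : Type*} (x : I) : lp (fun _ : I => ℝ) 2 →ₗ[ℝ] ℝ where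
  toFun u := u x
  map_add' u v := by simp
  map_smul' c u := by simp

lemma edge_sum {Vtx : Type*} (adj : Vtx → Vtx → Prop) (D : ℕ)
    (hsym : ∀ x y, adj x y → adj y x)
    (hfin : ∀ x, {y | adj x y}.Finite)
    (hdeg : ∀ x, {y | adj x y}.ncard ≤ D) (u : H1 Vtx) :
    Summable (fun p : (Σ x, {y // adj x y}) => (u p.2.1 - u p.1)^2) ∧
    ∑' p : (Σ x, {y // adj x y}), (u p.2.1 - u p.1)^2 ≤ (4 * D) * ‖u‖^2 := by
  have hft : ∀ x, Finite {y // adj x y} := fun x => (hfin x).to_subtype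
  have hcard : ∀ x, ∑' y : {y // adj x y}, (u x)^2 = ({y | adj x y}.ncard : ℝ) * (u x)^2 := by
    intro x
    rw [tsum_const, nsmul_eq_mul]; rfl
  have hle : ∀ x, ({y | adj x y}.ncard : ℝ) * (u x)^2 ≤ D * (u x)^2 := fun x =>
    mul_le_mul_of_nonneg_right (by exact_mod_cast hdeg x) (sq_nonneg _)
  have su := (h1_summable_sq u).mul_left (D : ℝ)
  have sd : Summable (fun x => ({y | adj x y}.ncard : ℝ) * (u x)^2) :=
    Summable.of_nonneg_of_le (fun x => by positivity) hle su
  have s1 : Summable (fun p : (Σ x, {y // adj x y}) => (u p.1)^2) := by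
    rw [summable_sigma_of_nonneg (fun p => sq_nonneg _)]
    refine ⟨fun x => ?_, ?_⟩
    · have := hft x
      exact Summable.of_finite
    · simpa only [hcard] using sd
  have t1 : ∑' p : (Σ x, {y // adj x y}), (u p.1)^2 ≤ D * ‖u‖^2 := by
    rw [s1.tsum_sigma' (fun x => by have := hft x; exact Summable.of_finite)]
    simp only [hcard]
    rw [h1_norm_sq, ← tsum_mul_left]
    exact sd.tsum_le_tsum hle su
  let e : (Σ x, {y // adj x y}) ≃ (Σ x, {y // adj x y}) :=
    { toFun := fun p => ⟨p.2.1, ⟨p.1, hsym _ _ p.2.2⟩⟩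
      invFun := fun p => ⟨p.2.1, ⟨p.1, hsym _ _ p.2.2⟩⟩
      left_inv := fun p => rfl
      right_inv := fun p => rfl }
  have s2 : Summable (fun p : (Σ x, {y // adj x y}) => (u p.2.1)^2) :=
    (e.summable_iff (f := fun p : (Σ x, {y // adj x y}) => (u p.1)^2)).2 s1
  have t2 : ∑' p : (Σ x, {y // adj x y}), (u p.2.1)^2 ≤ D * ‖u‖^2 := by
    have := e.tsum_eq (fun p : (Σ x, {y // adj x y}) => (u p.1)^2)
    rw [← this] at t1
    exact t1
  have hb : ∀ p : (Σ x, {y // adj x y}), (u p.2.1 - u p.1)^2 ≤ 2 * (u p.2.1)^2 + 2 * (u p.1)^2 :=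
    fun p => by nlinarith [sq_nonneg (u p.2.1 + u p.1)]
  have s3 := (s2.mul_left 2).add (s1.mul_left 2)
  have s4 := Summable.of_nonneg_of_le (fun p => sq_nonneg _) hb s3
  refine ⟨s4, (s4.tsum_le_tsum hb s3).trans ?_⟩
  rw [(s2.mul_left 2).tsum_add (s1.mul_left 2), tsum_mul_left, tsum_mul_left]
  linarith

lemma quad_part {Vtx : Type*} (adj : Vtx → Vtx → Prop) (D : ℕ)
    (hsym : ∀ x y, adj x y → adj y x)
    (hfin : ∀ x, {y | adj x y}.Finite)
    (hdeg : ∀ x, {y | adj x y}.ncard ≤ D)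
    (Vp : Vtx → ℝ) (C1 C2 : ℝ) (hC1 : 0 < C1)
    (hVbd : ∀ x, C1 ≤ Vp x ∧ Vp x ≤ C2) :
    Differentiable ℝ (fun u : H1 Vtx => ∑' x, (gradSq adj (fun y => u y) x + Vp x * (u x)^2)) ∧
    ∀ u : H1 Vtx, C1 * ‖u‖^2 ≤ ∑' x, (gradSq adj (fun y => u y) x + Vp x * (u x)^2) := by
  have hft : ∀ x, Finite {y // adj x y} := fun x => (hfin x).to_subtype
  have hsV : ∀ u : H1 Vtx, Summable (fun x => Vp x * (u x)^2) := fun u =>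
    Summable.of_nonneg_of_le (fun x => mul_nonneg (hC1.le.trans (hVbd x).1) (sq_nonneg _))
      (fun x => mul_le_mul_of_nonneg_right (hVbd x).2 (sq_nonneg _))
      ((h1_summable_sq u).mul_left C2)
  have hbV : ∀ u : H1 Vtx, ∑' x, Vp x * (u x)^2 ≤ |C2| * ‖u‖^2 := fun u => by
    rw [h1_norm_sq, ← tsum_mul_left]
    exact (hsV u).tsum_le_tsum (fun x => mul_le_mul_of_nonneg_right
      ((hVbd x).2.trans (le_abs_self _)) (sq_nonneg _)) ((h1_summable_sq u).mul_left _)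
  have hbV' : ∀ u : H1 Vtx, C1 * ‖u‖^2 ≤ ∑' x, Vp x * (u x)^2 := fun u => by
    rw [h1_norm_sq, ← tsum_mul_left]
    exact ((h1_summable_sq u).mul_left _).tsum_le_tsum
      (fun x => mul_le_mul_of_nonneg_right (hVbd x).1 (sq_nonneg _)) (hsV u)
  have hes := edge_sum adj D hsym hfin hdeg
  have hg : ∀ (u : H1 Vtx) x, gradSq adj (fun y => u y) x =
      (1/2) * ∑' y : {y // adj x y}, (u y.1 - u x)^2 := fun u x => by
    simp [gradSq, gammaProd, pow_two]
  have hsg : ∀ u : H1 Vtx, Summable (fun x => gradSq adj (fun y => u y) x) := fun u => by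
    simp only [hg]
    exact ((hes u).1.sigma).mul_left _
  have hgs : ∀ u : H1 Vtx, ∑' x, gradSq adj (fun y => u y) x =
      (1/2) * ∑' p : (Σ x, {y // adj x y}), (u p.2.1 - u p.1)^2 := fun u => by
    simp only [hg]
    rw [tsum_mul_left, (hes u).1.tsum_sigma]
  have hV' : ∀ (u : H1 Vtx) x, Vp x * (u x)^2 = ((Real.sqrt (Vp x) • h1ev x) u)^2 := fun u x => by
    have : (Real.sqrt (Vp x) • h1ev x) u = Real.sqrt (Vp x) * u x := rfl
    rw [this, mul_pow, Real.sq_sqrt (hC1.le.trans (hVbd x).1)]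
  have heq : ∀ u : H1 Vtx, ∑' x, (gradSq adj (fun y => u y) x + Vp x * (u x)^2) =
      (1/2) * ∑' p : (Σ x, {y // adj x y}), (u p.2.1 - u p.1)^2 + ∑' x, Vp x * (u x)^2 := fun u => by
    rw [(hsg u).tsum_add (hsV u), hgs]
  constructor
  · simp only [heq]
    refine Differentiable.add (Differentiable.const_mul ?_ _) ?_
    · exact quad_diff (fun p : (Σ x, {y // adj x y}) => h1ev p.2.1 - h1ev p.1) (4 * D)
        (by positivity) (fun u => (hes u).1) (fun u => (hes u).2)
    · simp only [hV'] at hsV hbV ⊢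
      exact quad_diff _ |C2| (abs_nonneg _) hsV hbV
  · intro u
    rw [heq]
    have : 0 ≤ ∑' p : (Σ x, {y // adj x y}), (u p.2.1 - u p.1)^2 :=
      tsum_nonneg fun p => sq_nonneg _
    linarith [hbV' u]

lemma cofin_small {I : Type*} (u : lp (fun _ : I => ℝ) 2) (δ : ℝ) (hδ : 0 < δ) :
    {x | δ ≤ |u x|}.Finite := by
  have h := (h1_summable_sq u).tendsto_cofinite_zero
  have h2 : ∀ᶠ x in Filter.cofinite, (u x)^2 < δ^2 := h.eventually_lt_const (by positivity)
  rw [Filter.eventually_cofinite] at h2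
  refine h2.subset fun x hx => ?_
  simp only [Set.mem_ofPred_eq, not_lt] at hx ⊢
  rw [← sq_abs (u x)]
  gcongr

lemma F_rem (f : ℝ → ℝ) (hcont : Continuous f) (t h C : ℝ)
    (hC : ∀ s, |s - t| ≤ |h| → |f s - f t| ≤ C) :
    |(∫ s in (0:ℝ)..(t+h), f s) - (∫ s in (0:ℝ)..t, f s) - f t * h| ≤ C * |h| := by
  have hi : ∀ a b, IntervalIntegrable f MeasureTheory.volume a b :=
    fun a b => hcont.intervalIntegrable a b
  rw [intervalIntegral.integral_interval_sub_left (hi _ _) (hi _ _)]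
  have : (∫ s in t..(t+h), f s) - f t * h = ∫ s in t..(t+h), (f s - f t) := by
    rw [intervalIntegral.integral_sub (hi _ _) (by simp)]
    simp [mul_comm]
  rw [this]
  have := intervalIntegral.norm_integral_le_of_norm_le_const (a := t) (b := t+h) (C := C)
    (f := fun s => f s - f t) (fun s hs => by
      apply hC
      have := Set.abs_sub_left_of_mem_uIcc (Set.uIoc_subset_uIcc hs)
      simpa using this)
  simpa using this

lemma J_part {Vtx : Type*} (f : Vtx → ℝ → ℝ) (hcont : ∀ x, Continuous (f x))
    (hf0 : ∀ x, f x 0 = 0)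
    (hsmall' : ∀ ε > 0, ∃ δ > 0, ∀ x t, t ≠ 0 → |t| < δ → |f x t| ≤ ε * |t|)
    (F : Vtx → ℝ → ℝ) (hF : ∀ x t, F x t = ∫ s in (0:ℝ)..t, f x s) (u : H1 Vtx) :
    ∃ g : H1 Vtx, (∀ x, g x = f x (u x)) ∧
      HasFDerivAt (fun u : H1 Vtx => ∑' x, F x (u x)) (innerSL ℝ g) u := by
  classical
  have hsmall : ∀ ε > 0, ∃ δ > 0, ∀ x t, |t| < δ → |f x t| ≤ ε * |t| := by
    intro ε hε
    obtain ⟨δ, hδ, h⟩ := hsmall' ε hε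
    refine ⟨δ, hδ, fun x t ht => ?_⟩
    by_cases h0 : t = 0
    · simp [h0, hf0]
    · exact h x t h0 ht
  obtain ⟨δ1, hδ1, h1⟩ := hsmall 1 one_pos
  have hFs : ∀ v : H1 Vtx, Summable (fun x => F x (v x)) := by
    intro v
    refine (h1_summable_sq v).of_norm_bounded_eventually ?_
    rw [Filter.eventually_cofinite]
    refine (cofin_small v δ1 hδ1).subset fun x hx => ?_
    by_contra hlt
    simp only [Set.mem_ofPred_eq, not_le] at hx hlt
    have := F_rem (f x) (hcont x) 0 (v x) |v x| (fun s hs => by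
      simp only [sub_zero, hf0] at hs ⊢
      have := h1 x s (hs.trans_lt hlt)
      linarith)
    simp only [zero_add, intervalIntegral.integral_same, sub_zero, hf0, zero_mul, ← hF] at this
    rw [Real.norm_eq_abs] at hx
    nlinarith [sq_abs (v x)]
  have hgs : Summable (fun x => (f x (u x))^2) := by
    refine (h1_summable_sq u).of_norm_bounded_eventually ?_
    rw [Filter.eventually_cofinite]
    refine (cofin_small u δ1 hδ1).subset fun x hx => ?_
    by_contra hlt
    simp only [Set.mem_ofPred_eq, not_le] at hx hlt
    have := h1 x _ hlt
    rw [one_mul] at this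
    have := sq_le_sq.2 this
    rw [Real.norm_eq_abs, abs_of_nonneg (sq_nonneg _)] at hx
    linarith
  obtain ⟨g, hg⟩ := h1_mk _ hgs
  refine ⟨g, hg, ?_⟩
  rw [hasFDerivAt_iff_isLittleO_nhds_zero, Asymptotics.isLittleO_iff]
  intro c hc
  set ε := c / (2 * (2 * ‖u‖ + 1)) with hε
  have hεp : 0 < ε := by positivity
  obtain ⟨δ, hδ, hd⟩ := hsmall ε hεp
  set K := (cofin_small u (δ/2) (by positivity)).toFinset with hK
  set η := c / (2 * ((K.card : ℝ) + 1)) with hη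
  have hηp : 0 < η := by positivity
  have ev1 : ∀ᶠ h : H1 Vtx in nhds 0, ∀ x ∈ K, ∀ s, |s - u x| ≤ |h x| → |f x s - f x (u x)| ≤ η := by
    rw [Filter.eventually_all_finset]
    intro x _
    obtain ⟨d, hdp, hdd⟩ := Metric.continuousAt_iff.1 ((hcont x).continuousAt (x := u x)) η hηp
    filter_upwards [Metric.ball_mem_nhds (0 : H1 Vtx) hdp] with h hh s hs
    rw [mem_ball_zero_iff] at hh
    have := hdd (x := s) (by
      rw [Real.dist_eq]
      exact (hs.trans (h1_coord_le h x)).trans_lt hh)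
    rw [Real.dist_eq] at this
    exact this.le
  filter_upwards [ev1, Metric.ball_mem_nhds (0 : H1 Vtx) one_pos,
    Metric.ball_mem_nhds (0 : H1 Vtx) (half_pos hδ)] with h hh1 hh2 hh3
  rw [mem_ball_zero_iff] at hh2 hh3
  have hin : innerSL ℝ g h = ∑' x, f x (u x) * h x := by
    rw [innerSL_apply_apply, lp.inner_eq_tsum]
    simp [hg, mul_comm]
  have hins : Summable (fun x => f x (u x) * h x) := by
    have := lp.summable_inner (𝕜 := ℝ) g h
    simpa [hg, mul_comm] using this
  rw [hin, ← (hFs _).tsum_sub (hFs _), ← ((hFs _).sub (hFs _)).tsum_sub hins]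
  obtain ⟨sa, ta⟩ := h1_abs u h
  have sh := h1_summable_sq h
  have S1 : HasSum (fun x => if x ∈ K then η * ‖h‖ else 0) (∑ x ∈ K, η * ‖h‖) := by
    have h0 : ∑ x ∈ K, (if x ∈ K then η * ‖h‖ else 0) = ∑ x ∈ K, η * ‖h‖ :=
      Finset.sum_congr rfl (fun x hx => by simp [hx])
    rw [← h0]
    exact hasSum_sum_of_ne_finset_zero (fun x hx => by simp [hx])
  have S2 := ((sa.mul_left 2).add sh).mul_left ε |>.hasSum
  have key := tsum_of_norm_bounded (f := fun x => F x ((u + h : H1 Vtx) x) - F x (u x) - f x (u x) * h x)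
    (S1.add S2) (fun x => by
      rw [Real.norm_eq_abs, hF, hF, lp.coeFn_add, Pi.add_apply]
      by_cases hx : x ∈ K
      · have := F_rem (f x) (hcont x) (u x) (h x) η (hh1 x hx)
        simp only [hx, if_true]
        have h3 : η * |h x| ≤ η * ‖h‖ := by gcongr; exact h1_coord_le h x
        have : 0 ≤ ε * (2 * (|u x| * |h x|) + (h x)^2) := by positivity
        linarith
      · have hux : |u x| < δ/2 := by simpa [hK] using hx
        have hhx := (h1_coord_le h x).trans_lt hh3
        have := F_rem (f x) (hcont x) (u x) (h x) (ε * (2 * |u x| + |h x|)) (fun s hs => by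
          have a1 : |s| ≤ |u x| + |h x| := by
            have := abs_add_le (u x) (s - u x)
            rw [add_sub_cancel] at this
            linarith
          have a2 := hd x s (by linarith)
          have a3 := hd x (u x) (by linarith)
          have a4 := abs_sub (f x s) (f x (u x))
          have a5 : ε * |s| ≤ ε * (|u x| + |h x|) := by gcongr
          linarith)
        simp only [hx, if_false]
        refine this.trans (le_of_eq ?_)
        rw [← sq_abs (h x)]
        ring)
  refine key.trans ?_
  rw [Finset.sum_const, nsmul_eq_mul, tsum_mul_left, (sa.mul_left 2).tsum_add sh, tsum_mul_left,
    ← h1_norm_sq]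
  have n0 := norm_nonneg h
  have b1 : (K.card : ℝ) * (η * ‖h‖) ≤ c/2 * ‖h‖ := by
    have : ((K.card : ℝ) + 1) * η = c/2 := by rw [hη]; field_simp
    nlinarith [mul_nonneg hηp.le n0]
  have b2 : ε * (2 * (∑' x, |u x| * |h x|) + ‖h‖^2) ≤ c/2 * ‖h‖ := by
    have e1 : ε * (2 * ‖u‖ + 1) = c/2 := by rw [hε]; field_simp
    have e2 : 2 * (∑' x, |u x| * |h x|) + ‖h‖^2 ≤ (2 * ‖u‖ + 1) * ‖h‖ := by nlinarith
    calc _ ≤ ε * ((2 * ‖u‖ + 1) * ‖h‖) := by gcongr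
      _ = _ := by rw [← mul_assoc, e1]
  linarith

/-- Proposition 3.3 (ii): `s_w` is bounded away from `0` on the unit sphere `S`. -/
theorem stmt9
    {Vtx : Type*} (adj : Vtx → Vtx → Prop) (D : ℕ)
    (hsym : ∀ x y, adj x y → adj y x)
    (hirr : ∀ x, ¬ adj x x)
    (hfin : ∀ x, {y | adj x y}.Finite)
    (hdeg : ∀ x, {y | adj x y}.ncard ≤ D)
    (Vp : Vtx → ℝ) (C1 C2 : ℝ) (hC1 : 0 < C1)
    (hVbd : ∀ x, C1 ≤ Vp x ∧ Vp x ≤ C2)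
    (f : Vtx → ℝ → ℝ) (hcont : ∀ x, Continuous (f x))
    (a q : ℝ) (ha : 0 < a) (hq : 2 < q)
    (hgrowth : ∀ x t, |f x t| ≤ a * (|t| + |t| ^ (q - 1)))
    (hsmall : ∀ ε > 0, ∃ δ > 0, ∀ x t, t ≠ 0 → |t| < δ → |f x t| ≤ ε * |t|)
    (hmono : ∀ x, StrictMonoOn (fun t => f x t / |t|) (Set.Iio 0) ∧
             StrictMonoOn (fun t => f x t / |t|) (Set.Ioi 0))
    (F : Vtx → ℝ → ℝ) (hF : ∀ x t, F x t = ∫ s in (0:ℝ)..t, f x s)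
    (hsuper : ∀ M : ℝ, ∃ R > 0, ∀ x t, R ≤ |t| → M ≤ F x t / t ^ 2)
    (sw : H1 Vtx → ℝ)
    (hsw : ∀ w : H1 Vtx, w ≠ 0 → 0 < sw w ∧
      fderiv ℝ (PhiF adj Vp F) (sw w • w) (sw w • w) = 0 ∧
      ∀ s : ℝ, 0 < s → fderiv ℝ (PhiF adj Vp F) (s • w) (s • w) = 0 → s = sw w)
    :
    ∃ δ > 0, ∀ w : H1 Vtx, nrmH adj Vp w = 1 → δ ≤ sw w := by
  have hf0 : ∀ x, f x 0 = 0 := fun x => by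
    have := hgrowth x 0
    rw [abs_zero, Real.zero_rpow (by linarith)] at this
    simpa using this
  obtain ⟨hQd, hQl⟩ := quad_part adj D hsym hfin hdeg Vp C1 C2 hC1 hVbd
  obtain ⟨d, hd, hds⟩ := hsmall (C1/2) (by positivity)
  refine ⟨d * Real.sqrt C1, by positivity, fun w hw => ?_⟩
  have hQw : ∑' x, (gradSq adj (fun y => w y) x + Vp x * (w x)^2) = 1 := by
    simpa [nrmH, nrmV] using hw
  have hw0 : w ≠ 0 := by
    rintro rfl
    simp [gradSq, gammaProd] at hQw
  obtain ⟨hs, hder, -⟩ := hsw w hw0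
  by_contra! hlt
  set s := sw w
  set u : H1 Vtx := s • w with hu
  set Q : H1 Vtx → ℝ := fun u => ∑' x, (gradSq adj (fun y => u y) x + Vp x * (u x)^2) with hQ
  have hhom : ∀ (c : ℝ) (v : H1 Vtx), Q (c • v) = c^2 * Q v := by
    intro c v
    simp only [hQ]
    rw [← tsum_mul_left]
    congr 1; ext x
    simp only [gradSq, gammaProd, lp.coeFn_smul, Pi.smul_apply, smul_eq_mul]
    have : ∀ y : {y // adj x y}, (c * v y.1 - c * v x) * (c * v y.1 - c * v x) =
      c^2 * ((v y.1 - v x) * (v y.1 - v x)) := fun y => by ring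
    simp only [this, tsum_mul_left]
    ring
  have hQu : Q u = s^2 := by rw [hu, hhom]; simp [hQ, hQw]
  have hQ' : fderiv ℝ Q u u = 2 * Q u := by
    have c1 : HasDerivAt (fun t : ℝ => t • u) u 1 := by
      simpa using (hasDerivAt_id (1:ℝ)).smul_const u
    have c2 : HasDerivAt (fun t : ℝ => Q (t • u)) (fderiv ℝ Q u u) 1 := by
      have hq1 : HasFDerivAt Q (fderiv ℝ Q u) ((1:ℝ) • u) := by
        rw [one_smul]; exact (hQd u).hasFDerivAt
      exact hq1.comp_hasDerivAt (1:ℝ) c1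
    have c3 : HasDerivAt (fun t : ℝ => Q (t • u)) (2 * Q u) 1 := by
      simp only [hhom]
      simpa using ((hasDerivAt_pow 2 (1:ℝ)).mul_const (Q u))
    exact c2.unique c3
  obtain ⟨g, hg, hJ⟩ := J_part f hcont hf0 hsmall F hF u
  have hPhi : HasFDerivAt (PhiF adj Vp F) ((1/2 : ℝ) • fderiv ℝ Q u - innerSL ℝ g) u :=
    ((hQd u).hasFDerivAt.const_mul (1/2 : ℝ)).sub hJ
  rw [hPhi.fderiv] at hder
  have hin : innerSL ℝ g u = ∑' x, f x (u x) * u x := by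
    rw [innerSL_apply_apply, lp.inner_eq_tsum]
    simp [hg, mul_comm]
  have hins : Summable (fun x => f x (u x) * u x) := by
    have := lp.summable_inner (𝕜 := ℝ) g u
    simpa [hg, mul_comm] using this
  have hder2 : (1/2) * fderiv ℝ Q u u - innerSL ℝ g u = 0 := hder
  rw [hQ', hin, hQu] at hder2
  have hl := hQl u
  change C1 * ‖u‖^2 ≤ Q u at hl
  rw [hQu] at hl
  have hnd : ‖u‖ < d := by
    by_contra! hge
    have h1 : d^2 ≤ ‖u‖^2 := by gcongr
    have h2 : s^2 < (d * Real.sqrt C1)^2 := by gcongr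
    rw [mul_pow, Real.sq_sqrt hC1.le] at h2
    nlinarith
  have hsum : ∑' x, f x (u x) * u x ≤ C1/2 * ‖u‖^2 := by
    rw [h1_norm_sq, ← tsum_mul_left]
    refine hins.tsum_le_tsum (fun x => ?_) ((h1_summable_sq u).mul_left _)
    by_cases h0 : u x = 0
    · simp [h0]
    · have h1 := hds x _ h0 ((h1_coord_le u x).trans_lt hnd)
      calc f x (u x) * u x ≤ |f x (u x)| * |u x| := by rw [← abs_mul]; exact le_abs_self _
        _ ≤ (C1/2 * |u x|) * |u x| := by gcongr
        _ = _ := by rw [← sq_abs (u x)]; ring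
  have : 0 < s^2 := by positivity
  linarith
end

section
/- In the Nehari setting, for each w ∈ H¹(V)\{0} let s_w > 0 be the unique value with Φ'(s_w w)(s_w w) = 0. Then for each compact subset K of the unit sphere S = {w ∈ H¹(V) : ‖w‖ = 1} (norm topology), there exists a constant C_K such that s_w ≤ C_K for all w ∈ K. -/
open scoped ENNReal

open Filter Topology in
theorem aux_sq_summable {ι : Type*} (u : lp (fun _ : ι => ℝ) 2) : Summable fun x => (u x)^2 := by
  have := lp.summable_inner (𝕜 := ℝ) u u
  simpa [pow_two] using this

theorem aux_sq_norm {ι : Type*} (u : lp (fun _ : ι => ℝ) 2) : ∑' x, (u x)^2 = ‖u‖^2 := by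
  have := lp.inner_eq_tsum (𝕜 := ℝ) u u
  rw [real_inner_self_eq_norm_sq] at this
  rw [this]
  simp [pow_two]

theorem aux_memlp {ι : Type*} (u : ι → ℝ) (h : Summable fun x => (u x)^2) : Memℓp u 2 := by
  apply memℓp_gen
  simpa using h

theorem aux_sum_le {ι : Type*} (u : lp (fun _ : ι => ℝ) 2) (t : Finset ι) :
    ∑ x ∈ t, (u x)^2 ≤ ‖u‖^2 := by
  rw [← aux_sq_norm]
  exact (aux_sq_summable u).sum_le_tsum t (fun _ _ => sq_nonneg _)

open Filter Topology in
theorem aux_small {ι : Type*} (u : lp (fun _ : ι => ℝ) 2) (δ : ℝ) (hδ : 0 < δ) :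
    ∀ᶠ x in cofinite, |u x| < δ := by
  have h := (aux_sq_summable u).tendsto_cofinite_zero.eventually_lt_const (show 0 < δ^2 by positivity)
  filter_upwards [h] with x hx
  exact abs_lt_of_sq_lt_sq hx hδ.le

theorem aux_mvt (G g : ℝ → ℝ) (hG : ∀ t, HasDerivAt G (g t) t) (A δ : ℝ)
    (hA : 0 ≤ A) (hg : ∀ t, |t| < δ → |g t| ≤ A * |t|) (a b : ℝ) (hab : |a| + |b| < δ) :
    |G (a + b) - G a| ≤ A * (|a| + |b|) * |b| := by
  have h := Convex.norm_image_sub_le_of_norm_hasDerivWithin_le (f := G) (f' := g)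
    (s := Metric.closedBall 0 (|a| + |b|)) (x := a) (y := a + b) (C := A * (|a| + |b|))
    (fun x _ => (hG x).hasDerivWithinAt) ?_ (convex_closedBall _ _) ?_ ?_
  · simpa using h
  · intro x hx
    have hx' : |x| ≤ |a| + |b| := by simpa using hx
    exact (hg x (lt_of_le_of_lt hx' hab)).trans (by gcongr)
  · simp
  · simpa using abs_add_le a b

theorem aux_G_summable {ι : Type*} (G g : ι → ℝ → ℝ) (hG : ∀ x t, HasDerivAt (G x) (g x t) t)
    (hG0 : ∀ x, G x 0 = 0) (A δ : ℝ)
    (hA : 0 ≤ A) (hδ : 0 < δ) (hg : ∀ x t, |t| < δ → |g x t| ≤ A * |t|)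
    (u : lp (fun _ : ι => ℝ) 2) : Summable fun x => G x (u x) := by
  refine Summable.of_norm_bounded_eventually ((aux_sq_summable u).mul_left A) ?_
  filter_upwards [aux_small u δ hδ] with x hx
  have := aux_mvt (G x) (g x) (hG x) A δ hA (hg x) 0 (u x) (by simpa using hx)
  simp only [hG0, zero_add, sub_zero, abs_zero] at this
  rw [Real.norm_eq_abs]
  refine this.trans (le_of_eq ?_)
  rw [mul_assoc, ← sq, sq_abs]

theorem aux_g_mem {ι : Type*} (g : ι → ℝ → ℝ) (A δ : ℝ)
    (hδ : 0 < δ) (hg : ∀ x t, |t| < δ → |g x t| ≤ A * |t|)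
    (u : lp (fun _ : ι => ℝ) 2) : Memℓp (fun x => g x (u x)) 2 := by
  apply aux_memlp
  refine Summable.of_norm_bounded_eventually ((aux_sq_summable u).mul_left (A^2)) ?_
  filter_upwards [aux_small u δ hδ] with x hx
  have := hg x _ hx
  rw [Real.norm_eq_abs, abs_pow, ← sq_abs (u x), ← mul_pow]
  gcongr

open Filter Topology in
theorem aux_hasFDeriv {ι : Type*} (G g : ι → ℝ → ℝ) (hG : ∀ x t, HasDerivAt (G x) (g x t) t)
    (hG0 : ∀ x, G x 0 = 0) (A δ : ℝ)
    (hA : 0 < A) (hδ : 0 < δ) (hg : ∀ x t, |t| < δ → |g x t| ≤ A * |t|)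
    (u : lp (fun _ : ι => ℝ) 2) :
    HasFDerivAt (fun u : lp (fun _ : ι => ℝ) 2 => ∑' x, G x (u x))
      (innerSL ℝ (⟨fun x => g x (u x), aux_g_mem g A δ hδ hg u⟩ : lp (fun _ : ι => ℝ) 2)) u := by
  classical
  set p : lp (fun _ : ι => ℝ) 2 := ⟨fun x => g x (u x), aux_g_mem g A δ hδ hg u⟩ with hp
  rw [hasFDerivAt_iff_isLittleO_nhds_zero, Asymptotics.isLittleO_iff]
  intro ε hε
  -- tail
  set η : ℝ := min (δ/2) (ε / (8 * A)) with hη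
  have hηpos : 0 < η := by positivity
  obtain ⟨s, hs⟩ := summable_iff_vanishing_norm.1 (aux_sq_summable u) (η^2) (by positivity)
  have hs' : ∀ t, Disjoint t s → ∑ x ∈ t, (u x)^2 ≤ η^2 := fun t ht =>
    (le_abs_self _).trans (hs t ht).le
  -- finite part
  have hfinp : (fun h : lp (fun _ : ι => ℝ) 2 =>
      ∑ x ∈ s, (G x (u x + h x) - G x (u x) - g x (u x) * h x)) =o[𝓝 0] fun h => h := by
    suffices key : ∀ x ∈ s, (fun h : lp (fun _ : ι => ℝ) 2 =>
        (G x (u x + h x) - G x (u x) - g x (u x) * h x)) =o[𝓝 0] fun h => h by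
      have := Asymptotics.IsLittleO.sum key
      refine this.congr_left ?_
      intro h
      simp
    intro x _
    have h1 := (hasDerivAt_iff_isLittleO_nhds_zero.1 (hG x (u x)))
    have hev : Tendsto (fun h : lp (fun _ : ι => ℝ) 2 => h x) (𝓝 0) (𝓝 0) := by
      have := (lp.evalCLM ℝ (fun _ : ι => ℝ) (p := 2) x).continuous.tendsto 0
      rw [map_zero] at this
      exact this
    have h2 := h1.comp_tendsto hev
    have h3 : (fun h : lp (fun _ : ι => ℝ) 2 => h x) =O[𝓝 0] fun h => h :=
      Asymptotics.IsBigO.of_bound 1 (Eventually.of_forall fun h => by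
        rw [one_mul]; exact lp.norm_apply_le_norm (by simp) h x)
    refine (h2.trans_isBigO h3).congr_left ?_
    intro h
    simp [mul_comm]
  have hfin' := (Asymptotics.isLittleO_iff.1 hfinp) (show 0 < ε/2 by positivity)
  have hball : ∀ᶠ h : lp (fun _ : ι => ℝ) 2 in 𝓝 0, ‖h‖ < η := by
    have := Metric.ball_mem_nhds (0 : lp (fun _ : ι => ℝ) 2) hηpos
    filter_upwards [this] with h hh
    simpa using hh
  filter_upwards [hfin', hball] with h hf1 hb
  have S1 := (aux_G_summable G g hG hG0 A δ hA.le hδ hg (u + h)).hasSum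
  have S2 := (aux_G_summable G g hG hG0 A δ hA.le hδ hg u).hasSum
  have S3 := lp.hasSum_inner (𝕜 := ℝ) p h
  have S := (S1.sub S2).sub S3
  refine le_of_tendsto (S.norm) ?_
  filter_upwards [eventually_ge_atTop s] with t hst
  have hterm : ∀ x, (G x ((u + h : lp (fun _ : ι => ℝ) 2) x) - G x (u x) - inner ℝ (p x) (h x))
      = G x (u x + h x) - G x (u x) - g x (u x) * h x := by
    intro x
    simp [hp, mul_comm]
  rw [Finset.sum_congr rfl (fun x _ => hterm x), ← Finset.sum_sdiff hst]
  have htail : ‖∑ x ∈ t \ s, (G x (u x + h x) - G x (u x) - g x (u x) * h x)‖ ≤ ε/2 * ‖h‖ := by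
    have hb1 : ∀ x ∈ t \ s, ‖G x (u x + h x) - G x (u x) - g x (u x) * h x‖
        ≤ 2 * A * (|u x| * |h x|) + A * (h x)^2 := by
      intro x hx
      have hxs : x ∉ s := (Finset.mem_sdiff.1 hx).2
      have hux : |u x| < δ/2 := by
        have := hs {x} (by simpa using hxs)
        simp only [Finset.sum_singleton, Real.norm_eq_abs, abs_pow, sq_abs] at this
        exact (abs_lt_of_sq_lt_sq this hηpos.le).trans_le (min_le_left _ _)
      have hhx : |h x| < δ/2 :=
        ((lp.norm_apply_le_norm (by simp) h x).trans_lt hb).trans_le (min_le_left _ _)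
      have m1 := aux_mvt (G x) (g x) (hG x) A δ hA.le (hg x) (u x) (h x) (by linarith)
      have m2 := hg x (u x) (by linarith)
      have m3 : |g x (u x) * h x| ≤ A * |u x| * |h x| := by
        rw [abs_mul]; gcongr
      rw [Real.norm_eq_abs]
      refine (abs_sub _ _).trans ?_
      rw [← sq_abs (h x)]
      nlinarith
    refine (norm_sum_le _ _).trans ((Finset.sum_le_sum hb1).trans ?_)
    rw [Finset.sum_add_distrib, ← Finset.mul_sum, ← Finset.mul_sum]
    have cs := Real.sum_mul_le_sqrt_mul_sqrt (t \ s) (fun x => |u x|) (fun x => |h x|)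
    simp only [sq_abs] at cs
    have c1 : √(∑ x ∈ t \ s, (u x)^2) ≤ η :=
      Real.sqrt_le_iff.2 ⟨hηpos.le, hs' _ Finset.sdiff_disjoint⟩
    have c2 : √(∑ x ∈ t \ s, (h x)^2) ≤ ‖h‖ :=
      Real.sqrt_le_iff.2 ⟨norm_nonneg _, aux_sum_le h _⟩
    have c3 : ∑ x ∈ t \ s, |u x| * |h x| ≤ η * ‖h‖ := cs.trans (by gcongr)
    have c4 : ∑ x ∈ t \ s, (h x)^2 ≤ η * ‖h‖ := by
      refine (aux_sum_le h _).trans ?_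
      rw [sq]; gcongr
    have c5 : A * η ≤ ε / 8 := by
      have : η ≤ ε / (8 * A) := min_le_right _ _
      rw [le_div_iff₀ (by positivity)] at this
      linarith
    have c6 : A * η * ‖h‖ ≤ ε/8 * ‖h‖ := by gcongr
    have hn := norm_nonneg h
    have c7 : 2 * A * ∑ x ∈ t \ s, |u x| * |h x| ≤ 2 * A * (η * ‖h‖) := by gcongr
    have c8 : A * ∑ x ∈ t \ s, (h x)^2 ≤ A * (η * ‖h‖) := by gcongr
    nlinarith
  calc _ ≤ _ := norm_add_le _ _
    _ ≤ ε/2 * ‖h‖ + ε/2 * ‖h‖ := add_le_add htail hf1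
    _ = _ := by ring

/-- edge set -/
abbrev EdgeT {Vtx : Type*} (adj : Vtx → Vtx → Prop) := Σ x : Vtx, {y : Vtx // adj x y}

theorem aux_edge_fst {Vtx : Type*} (adj : Vtx → Vtx → Prop) (D : ℕ)
    (hfin : ∀ x, {y | adj x y}.Finite)
    (hdeg : ∀ x, {y | adj x y}.ncard ≤ D) (u : H1 Vtx) :
    (Summable fun e : EdgeT adj => (u e.1)^2) ∧
      ∑' e : EdgeT adj, (u e.1)^2 ≤ D * ‖u‖^2 := by
  have : ∀ x, Finite {y : Vtx // adj x y} := fun x => hfin x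
  have hv : ∀ x, ∑' _ : {y : Vtx // adj x y}, (u x)^2 = ({y | adj x y}.ncard : ℝ) * (u x)^2 := by
    intro x
    rw [tsum_const]
    rw [nsmul_eq_mul]
    rfl
  have hle : ∀ x, ({y | adj x y}.ncard : ℝ) * (u x)^2 ≤ D * (u x)^2 := by
    intro x
    have : ({y | adj x y}.ncard : ℝ) ≤ D := by exact_mod_cast hdeg x
    gcongr
  have hsumD := (aux_sq_summable u).mul_left (D : ℝ)
  have hs1 : Summable fun x => ({y | adj x y}.ncard : ℝ) * (u x)^2 :=
    Summable.of_nonneg_of_le (fun x => by positivity) hle hsumD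
  have hs : Summable fun e : EdgeT adj => (u e.1)^2 := by
    rw [summable_sigma_of_nonneg (fun _ => sq_nonneg _)]
    refine ⟨fun x => Summable.of_finite, ?_⟩
    simpa only [hv] using hs1
  refine ⟨hs, ?_⟩
  rw [hs.tsum_sigma]
  simp only [hv]
  refine (hs1.tsum_le_tsum hle hsumD).trans (le_of_eq ?_)
  rw [tsum_mul_left, aux_sq_norm]

theorem aux_edge_diff {Vtx : Type*} (adj : Vtx → Vtx → Prop) (D : ℕ)
    (hsym : ∀ x y, adj x y → adj y x)
    (hfin : ∀ x, {y | adj x y}.Finite)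
    (hdeg : ∀ x, {y | adj x y}.ncard ≤ D) (u : H1 Vtx) :
    (Summable fun e : EdgeT adj => (u e.2.1 - u e.1)^2) ∧
      ∑' e : EdgeT adj, (u e.2.1 - u e.1)^2 ≤ 4 * D * ‖u‖^2 := by
  obtain ⟨h1, h1'⟩ := aux_edge_fst adj D hfin hdeg u
  let σ : EdgeT adj ≃ EdgeT adj :=
    { toFun := fun e => ⟨e.2.1, ⟨e.1, hsym _ _ e.2.2⟩⟩
      invFun := fun e => ⟨e.2.1, ⟨e.1, hsym _ _ e.2.2⟩⟩
      left_inv := fun _ => rfl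
      right_inv := fun _ => rfl }
  have h2 : Summable fun e : EdgeT adj => (u e.2.1)^2 := σ.summable_iff.2 h1
  have h2' : ∑' e : EdgeT adj, (u e.2.1)^2 = ∑' e : EdgeT adj, (u e.1)^2 :=
    σ.tsum_eq (fun e : EdgeT adj => (u e.1)^2)
  have hle : ∀ e : EdgeT adj, (u e.2.1 - u e.1)^2 ≤ 2 * ((u e.2.1)^2 + (u e.1)^2) := by
    intro e
    nlinarith [sq_nonneg (u e.2.1 + u e.1)]
  have hS := (h2.add h1).mul_left 2
  have hs := Summable.of_nonneg_of_le (fun e : EdgeT adj => sq_nonneg (u e.2.1 - u e.1)) hle hS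
  refine ⟨hs, (hs.tsum_le_tsum hle hS).trans ?_⟩
  rw [tsum_mul_left, h2.tsum_add h1, h2']
  linarith

/-- gradient operator -/
noncomputable def gradOp {Vtx : Type*} (adj : Vtx → Vtx → Prop) (D : ℕ)
    (hsym : ∀ x y, adj x y → adj y x)
    (hfin : ∀ x, {y | adj x y}.Finite)
    (hdeg : ∀ x, {y | adj x y}.ncard ≤ D) :
    H1 Vtx →L[ℝ] lp (fun _ : EdgeT adj => ℝ) 2 :=
  LinearMap.mkContinuous
    { toFun := fun u => ⟨fun e => u e.2.1 - u e.1,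
        aux_memlp _ (aux_edge_diff adj D hsym hfin hdeg u).1⟩
      map_add' := by
        intro u v
        ext e
        change (u e.2.1 + v e.2.1) - (u e.1 + v e.1) = (u e.2.1 - u e.1) + (v e.2.1 - v e.1)
        ring
      map_smul' := by
        intro c u
        ext e
        change c * u e.2.1 - c * u e.1 = c * (u e.2.1 - u e.1)
        ring }
    (√(4 * D)) (by
      intro u
      apply le_of_sq_le_sq _ (by positivity)
      rw [mul_pow, Real.sq_sqrt (by positivity), ← aux_sq_norm]
      exact (aux_edge_diff adj D hsym hfin hdeg u).2)

theorem aux_grad {Vtx : Type*} (adj : Vtx → Vtx → Prop) (D : ℕ)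
    (hsym : ∀ x y, adj x y → adj y x)
    (hfin : ∀ x, {y | adj x y}.Finite)
    (hdeg : ∀ x, {y | adj x y}.ncard ≤ D) (u : H1 Vtx) :
    HasSum (fun x => gradSq adj (fun y => u y) x) (1/2 * ‖gradOp adj D hsym hfin hdeg u‖^2) := by
  obtain ⟨h1, -⟩ := aux_edge_diff adj D hsym hfin hdeg u
  have h2 : ‖gradOp adj D hsym hfin hdeg u‖^2 = ∑' e : EdgeT adj, (u e.2.1 - u e.1)^2 := by
    rw [← aux_sq_norm]
    rfl
  rw [h2, h1.tsum_sigma]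
  have h3 := ((summable_sigma_of_nonneg (fun e : EdgeT adj => sq_nonneg (u e.2.1 - u e.1))).1 h1).2
  have h4 := h3.hasSum.mul_left (1/2 : ℝ)
  have h5 : (fun x => gradSq adj (fun y => u y) x) =
      fun x => 1/2 * ∑' y : {y : Vtx // adj x y}, (u y.1 - u x)^2 := by
    funext x
    simp only [gradSq, gammaProd, sq]
  rw [h5]
  exact h4

theorem aux_f_sign (f : ℝ → ℝ)
    (hsmall : ∀ ε > 0, ∃ δ > 0, ∀ t, t ≠ 0 → |t| < δ → |f t| ≤ ε * |t|)
    (h1 : StrictMonoOn (fun t => f t / |t|) (Set.Iio 0))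
    (h2 : StrictMonoOn (fun t => f t / |t|) (Set.Ioi 0)) :
    (∀ t, 0 < t → 0 ≤ f t) ∧ (∀ t, t < 0 → f t ≤ 0) := by
  constructor
  · intro t ht
    by_contra hn
    push Not at hn
    have hc : 0 < - (f t / |t|) := by
      rw [← neg_div]; have := abs_pos.2 ht.ne'; apply div_pos <;> linarith
    obtain ⟨δ, hδ, h⟩ := hsmall _ hc
    set r := min (t/2) (δ/2) with hr
    have hr0 : 0 < r := by positivity
    have hrt : r < t := (min_le_left _ _).trans_lt (by linarith)
    have hrδ : r < δ := (min_le_right _ _).trans_lt (by linarith)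
    have hm := h2 (show r ∈ Set.Ioi 0 from hr0) ht hrt
    have hb := h r hr0.ne' (by rwa [abs_of_pos hr0])
    have hra : 0 < |r| := abs_pos.2 hr0.ne'
    simp only at hm
    rw [div_lt_iff₀ hra] at hm
    have := neg_abs_le (f r)
    linarith
  · intro t ht
    by_contra hn
    push Not at hn
    have hc : 0 < (f t / |t|) := by
      have := abs_pos.2 ht.ne; positivity
    obtain ⟨δ, hδ, h⟩ := hsmall _ hc
    set r := max (t/2) (-(δ/2)) with hr
    have hr0 : r < 0 := max_lt (by linarith) (by linarith)
    have hrt : t < r := lt_of_lt_of_le (by linarith) (le_max_left _ _)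
    have hrδ : -δ < r := lt_of_lt_of_le (by linarith) (le_max_right _ _)
    have hm := h1 ht (show r ∈ Set.Iio 0 from hr0) hrt
    have hb := h r hr0.ne (by rw [abs_of_neg hr0]; linarith)
    have hra : 0 < |r| := abs_pos.2 hr0.ne
    simp only at hm
    rw [lt_div_iff₀ hra] at hm
    have := le_abs_self (f r)
    linarith

theorem aux_f_nonneg (f : ℝ → ℝ)
    (hsmall : ∀ ε > 0, ∃ δ > 0, ∀ t, t ≠ 0 → |t| < δ → |f t| ≤ ε * |t|)
    (h1 : StrictMonoOn (fun t => f t / |t|) (Set.Iio 0))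
    (h2 : StrictMonoOn (fun t => f t / |t|) (Set.Ioi 0)) (t : ℝ) : 0 ≤ f t * t := by
  obtain ⟨hp, hn⟩ := aux_f_sign f hsmall h1 h2
  rcases lt_trichotomy t 0 with h | h | h
  · exact mul_nonneg_of_nonpos_of_nonpos (hn t h) h.le
  · simp [h]
  · exact mul_nonneg (hp t h) h.le

theorem aux_F_le (f : ℝ → ℝ)
    (hsmall : ∀ ε > 0, ∃ δ > 0, ∀ t, t ≠ 0 → |t| < δ → |f t| ≤ ε * |t|)
    (h1 : StrictMonoOn (fun t => f t / |t|) (Set.Iio 0))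
    (h2 : StrictMonoOn (fun t => f t / |t|) (Set.Ioi 0)) (t : ℝ) (ht : t ≠ 0) :
    ∫ s in (0:ℝ)..t, f s ≤ f t * t := by
  obtain ⟨hp, hn⟩ := aux_f_sign f hsmall h1 h2
  have hft := aux_f_nonneg f hsmall h1 h2 t
  have key : ∀ s ∈ Set.uIoc 0 t, s ≠ 0 → ‖f s‖ ≤ |f t| := by
    intro s hs hs0
    have hsa : 0 < |s| := abs_pos.2 hs0
    have hta : 0 < |t| := abs_pos.2 ht
    rcases lt_or_gt_of_ne ht with h | h
    · rw [Set.uIoc_of_ge h.le] at hs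
      have hs' : s < 0 := lt_of_le_of_ne hs.2 hs0
      have hm := h1.monotoneOn h hs' hs.1.le
      rw [div_le_div_iff₀ hta hsa, abs_of_neg h, abs_of_neg hs'] at hm
      rw [Real.norm_eq_abs, abs_of_nonpos (hn s hs'), abs_of_nonpos (hn t h)]
      have := hn t h
      by_contra hc
      push Not at hc
      nlinarith [hs.1]
    · rw [Set.uIoc_of_le h.le] at hs
      have hs' : 0 < s := hs.1
      have hm := h2.monotoneOn hs' h hs.2
      rw [div_le_div_iff₀ hsa hta, abs_of_pos h, abs_of_pos hs'] at hm
      rw [Real.norm_eq_abs, abs_of_nonneg (hp s hs'), abs_of_nonneg (hp t h)]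
      have := hp t h
      by_contra hc
      push Not at hc
      nlinarith [hs.2]
  have hb := intervalIntegral.norm_integral_le_of_norm_le_const_ae (a := (0:ℝ)) (b := t)
    (f := f) (C := |f t|) (by
      have : ∀ᵐ s : ℝ, s ≠ 0 := MeasureTheory.Measure.ae_ne MeasureTheory.volume 0
      filter_upwards [this] with s hs hsm
      exact key s hsm hs)
  rw [sub_zero, ← abs_mul, abs_of_nonneg hft] at hb
  exact (le_abs_self _).trans hb

/-- Proposition 3.3 (iii): `s_w` is bounded above on every (norm-)compact subset of the
unit sphere `S`. -/
theorem stmt10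
    {Vtx : Type*} (adj : Vtx → Vtx → Prop) (D : ℕ)
    (hsym : ∀ x y, adj x y → adj y x)
    (hirr : ∀ x, ¬ adj x x)
    (hfin : ∀ x, {y | adj x y}.Finite)
    (hdeg : ∀ x, {y | adj x y}.ncard ≤ D)
    (Vp : Vtx → ℝ) (C1 C2 : ℝ) (hC1 : 0 < C1)
    (hVbd : ∀ x, C1 ≤ Vp x ∧ Vp x ≤ C2)
    (f : Vtx → ℝ → ℝ) (hcont : ∀ x, Continuous (f x))
    (a q : ℝ) (ha : 0 < a) (hq : 2 < q)
    (hgrowth : ∀ x t, |f x t| ≤ a * (|t| + |t| ^ (q - 1)))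
    (hsmall : ∀ ε > 0, ∃ δ > 0, ∀ x t, t ≠ 0 → |t| < δ → |f x t| ≤ ε * |t|)
    (hmono : ∀ x, StrictMonoOn (fun t => f x t / |t|) (Set.Iio 0) ∧
             StrictMonoOn (fun t => f x t / |t|) (Set.Ioi 0))
    (F : Vtx → ℝ → ℝ) (hF : ∀ x t, F x t = ∫ s in (0:ℝ)..t, f x s)
    (hsuper : ∀ M : ℝ, ∃ R > 0, ∀ x t, R ≤ |t| → M ≤ F x t / t ^ 2)
    (sw : H1 Vtx → ℝ)
    (hsw : ∀ w : H1 Vtx, w ≠ 0 → 0 < sw w ∧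
      fderiv ℝ (PhiF adj Vp F) (sw w • w) (sw w • w) = 0 ∧
      ∀ s : ℝ, 0 < s → fderiv ℝ (PhiF adj Vp F) (s • w) (s • w) = 0 → s = sw w)
    :
    ∀ K : Set (H1 Vtx), K ⊆ {w | nrmH adj Vp w = 1} → IsCompact K →
      ∃ C : ℝ, ∀ w ∈ K, sw w ≤ C := by
  classical
  obtain ⟨δ, hδ, hδf⟩ := hsmall 1 one_pos
  have hf0 : ∀ x, f x 0 = 0 := by
    intro x
    have := hgrowth x 0
    rw [abs_zero, Real.zero_rpow (by linarith)] at this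
    simpa using this
  have hsmall' : ∀ x, ∀ ε > 0, ∃ δ > 0, ∀ t, t ≠ 0 → |t| < δ → |f x t| ≤ ε * |t| := by
    intro x ε hε
    obtain ⟨d, hd, h⟩ := hsmall ε hε
    exact ⟨d, hd, h x⟩
  have hVabs : ∀ x, |Vp x| ≤ |C2| := by
    intro x
    rw [abs_of_pos (hC1.trans_le (hVbd x).1)]
    exact (hVbd x).2.trans (le_abs_self _)
  set g : Vtx → ℝ → ℝ := fun x t => Vp x * t - f x t with hgdef
  set G : Vtx → ℝ → ℝ := fun x t => 1/2 * (Vp x * t^2) - F x t with hGdef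
  have hFd : ∀ x t, HasDerivAt (F x) (f x t) t := by
    intro x t
    have : F x = fun t => ∫ s in (0:ℝ)..t, f x s := funext (hF x)
    rw [this]
    exact intervalIntegral.integral_hasDerivAt_right ((hcont x).intervalIntegrable _ _)
      ((hcont x).stronglyMeasurableAtFilter _ _) (hcont x).continuousAt
  have hF0 : ∀ x, F x 0 = 0 := by intro x; simp [hF]
  have hGd : ∀ x t, HasDerivAt (G x) (g x t) t := by
    intro x t
    have h := (((hasDerivAt_pow 2 t).const_mul (Vp x)).const_mul (1/2 : ℝ)).sub (hFd x t)
    refine h.congr_deriv ?_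
    simp only [hgdef]
    norm_num
    ring
  have hG0 : ∀ x, G x 0 = 0 := by intro x; simp [hGdef, hF0]
  have hfb : ∀ x t, |t| < δ → |f x t| ≤ |t| := by
    intro x t ht
    by_cases h0 : t = 0
    · simp [h0, hf0]
    · simpa using hδf x t h0 ht
  have hgb : ∀ x t, |t| < δ → |g x t| ≤ (|C2| + 1) * |t| := by
    intro x t ht
    have h1 := hfb x t ht
    have h2 : |Vp x * t| ≤ |C2| * |t| := by
      rw [abs_mul]; exact mul_le_mul_of_nonneg_right (hVabs x) (abs_nonneg _)
    refine (abs_sub _ _).trans ?_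
    linarith
  have hA : 0 < |C2| + 1 := by positivity
  set T := gradOp adj D hsym hfin hdeg with hT
  have hVs : ∀ u : H1 Vtx, Summable fun x => Vp x * (u x)^2 := by
    intro u
    refine Summable.of_norm_bounded ((aux_sq_summable u).mul_left |C2|) ?_
    intro x
    rw [Real.norm_eq_abs, abs_mul, abs_pow, sq_abs]
    exact mul_le_mul_of_nonneg_right (hVabs x) (sq_nonneg _)
  have hFs : ∀ u : H1 Vtx, Summable fun x => F x (u x) := fun u =>
    aux_G_summable F f hFd hF0 1 δ zero_le_one hδ (fun x t h => by simpa using hfb x t h) u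
  have hQ : ∀ u : H1 Vtx, ∑' x, (gradSq adj (fun y => u y) x + Vp x * (u x)^2) =
      1/2 * ‖T u‖^2 + ∑' x, Vp x * (u x)^2 := by
    intro u
    have h := aux_grad adj D hsym hfin hdeg u
    rw [h.summable.tsum_add (hVs u), h.tsum_eq]
  have hPhi : PhiF adj Vp F = fun u => 1/4 * ‖T u‖^2 + ∑' x, G x (u x) := by
    funext u
    unfold PhiF
    rw [hQ u]
    simp only [hGdef]
    rw [((hVs u).mul_left (1/2)).tsum_sub (hFs u), tsum_mul_left]
    ring
  have hderiv : ∀ u : H1 Vtx, fderiv ℝ (PhiF adj Vp F) u u =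
      1/2 * ‖T u‖^2 + ∑' x, g x (u x) * u x := by
    intro u
    have h1 := aux_hasFDeriv G g hGd hG0 _ δ hA hδ hgb u
    have h2 := ((T.hasFDerivAt (x := u)).norm_sq).const_mul (1/4 : ℝ)
    have h3 := h2.add h1
    rw [hPhi]
    have h4 := h3.fderiv
    refine (congrArg (fun L : H1 Vtx →L[ℝ] ℝ => L u) h4).trans ?_
    simp only [add_apply, smul_apply, innerSL_apply_apply,
      ContinuousLinearMap.comp_apply, smul_eq_mul, real_inner_self_eq_norm_sq, lp.inner_eq_tsum]
    congr 1
    · rw [← aux_sq_norm (T u)]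
      simp [← sq]
      ring
    · refine tsum_congr fun x => ?_
      simp [mul_comm]
  have hfus : ∀ u : H1 Vtx, Summable fun x => f x (u x) * u x := by
    intro u
    have := lp.summable_inner (𝕜 := ℝ)
      (⟨fun x => f x (u x), aux_g_mem f 1 δ hδ (fun x t h => by simpa using hfb x t h) u⟩ : H1 Vtx) u
    refine this.congr fun x => ?_
    simp [mul_comm]
  have hident : ∀ w : H1 Vtx, nrmH adj Vp w = 1 → ∀ s : ℝ,
      fderiv ℝ (PhiF adj Vp F) (s • w) (s • w) = 0 →
      s^2 = ∑' x, f x (s * w x) * (s * w x) := by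
    intro w hw s hs
    rw [hderiv] at hs
    have hq1 : 1/2 * ‖T w‖^2 + ∑' x, Vp x * (w x)^2 = 1 := by
      rw [← hQ w]
      exact Real.sqrt_eq_one.1 hw
    have e1 : ∑' x, g x ((s • w : H1 Vtx) x) * (s • w : H1 Vtx) x =
        s^2 * ∑' x, Vp x * (w x)^2 - ∑' x, f x (s * w x) * (s * w x) := by
      rw [← tsum_mul_left]
      have := hfus (s • w)
      rw [← ((hVs w).mul_left (s^2)).tsum_sub (by simpa using this)]
      refine tsum_congr fun x => ?_
      simp [hgdef]
      ring
    rw [e1, map_smul, norm_smul, mul_pow, Real.norm_eq_abs, sq_abs] at hs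
    linear_combination (-s^2) * hq1 + hs
  intro K hKS hK
  have hne : ∀ w ∈ K, w ≠ 0 := by
    rintro w hw rfl
    have h1 := hKS hw
    have h2 : nrmH adj Vp (0 : H1 Vtx) = 0 := by
      simp [nrmH, nrmV, gradSq, gammaProd]
    have h3 : nrmH adj Vp (0 : H1 Vtx) = 1 := h1
    linarith
  suffices hmain : ∃ C : ℝ, ∀ w ∈ K, w ∈ K → sw w ≤ C by
    obtain ⟨C, hC⟩ := hmain
    exact ⟨C, fun w hw => hC w hw hw⟩
  refine hK.induction_on (p := fun S => ∃ C : ℝ, ∀ w ∈ S, w ∈ K → sw w ≤ C) ?_ ?_ ?_ ?_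
  · exact ⟨0, by simp⟩
  · rintro s t hst ⟨C, hC⟩
    exact ⟨C, fun w hw => hC w (hst hw)⟩
  · rintro s t ⟨C, hC⟩ ⟨C', hC'⟩
    refine ⟨max C C', ?_⟩
    rintro w (hw | hw) hwK
    · exact (hC w hw hwK).trans (le_max_left _ _)
    · exact (hC' w hw hwK).trans (le_max_right _ _)
  · intro w0 hw0
    obtain ⟨x0, hx0⟩ : ∃ x, w0 x ≠ 0 := by
      by_contra hcon
      push Not at hcon
      apply hne w0 hw0
      ext x
      simpa using hcon x
    set c := |w0 x0| / 2 with hc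
    have hcpos : 0 < c := by have := abs_pos.2 hx0; positivity
    have hcont0 : Continuous fun w : H1 Vtx => |w x0| :=
      (lp.evalCLM ℝ (fun _ : Vtx => ℝ) (p := 2) x0).continuous.abs
    have hU : {w : H1 Vtx | c < |w x0|} ∈ nhds w0 :=
      (isOpen_lt continuous_const hcont0).mem_nhds (by
        show c < |w0 x0|
        linarith)
    refine ⟨_, mem_nhdsWithin_of_mem_nhds hU, ?_⟩
    obtain ⟨R, hR, hRF⟩ := hsuper (2 / c^2)
    refine ⟨R / c, ?_⟩
    intro w hwc hwK
    have hwc' : c < |w x0| := hwc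
    obtain ⟨hs0, hs1, -⟩ := hsw w (hne w hwK)
    by_contra hcon
    push Not at hcon
    set s := sw w with hsdef
    have hid := hident w (hKS hwK) s hs1
    rw [div_lt_iff₀ hcpos] at hcon
    have hτa : |s * w x0| = s * |w x0| := by rw [abs_mul, abs_of_pos hs0]
    have hτ : R ≤ |s * w x0| := by
      rw [hτa]
      nlinarith
    have hτ0 : s * w x0 ≠ 0 := abs_pos.1 (hR.trans_le hτ)
    have hM := hRF x0 _ hτ
    rw [le_div_iff₀ (by positivity)] at hM
    have hFle : F x0 (s * w x0) ≤ f x0 (s * w x0) * (s * w x0) := by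
      rw [hF]
      exact aux_F_le (f x0) (hsmall' x0) (hmono x0).1 (hmono x0).2 _ hτ0
    have hsum : f x0 (s * w x0) * (s * w x0) ≤ ∑' x, f x (s * w x) * (s * w x) := by
      have hS : Summable fun x => f x (s * w x) * (s * w x) := by
        simpa using hfus (s • w)
      exact hS.le_tsum x0 (fun x _ => aux_f_nonneg (f x) (hsmall' x) (hmono x).1 (hmono x).2 _)
    have hbig : 2 * s^2 ≤ 2 / c^2 * (s * w x0)^2 := by
      rw [div_mul_eq_mul_div, le_div_iff₀ (by positivity), mul_pow, ← sq_abs (w x0)]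
      have : c^2 ≤ |w x0|^2 := by gcongr
      nlinarith [sq_nonneg s]
    have : 0 < s^2 := by positivity
    linarith
end

section
/- In the Nehari setting, define m̂ : H¹(V)\{0} → N by m̂(w) = s_w w, where s_w > 0 is the unique value with Φ'(s_w w)(s_w w) = 0, and let m = m̂|_S where S = {w ∈ H¹(V) : ‖w‖ = 1}. Then m̂ is continuous, and m is a homeomorphism between S and the Nehari manifold N = {u ∈ H¹\{0} : Φ'(u)u = 0} (with their subspace topologies), with inverse m⁻¹(u) = u/‖u‖. -/
open scoped ENNReal

namespace NehariAux

variable {Vtx : Type*}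

lemma l2_hasSum (u : H1 Vtx) : HasSum (fun x => (u x)^2) (‖u‖^2) := by
  have h := lp.hasSum_inner (𝕜 := ℝ) u u
  rw [real_inner_self_eq_norm_sq] at h
  have e : (fun i => inner ℝ (u i) (u i)) = fun x => (u x)^2 := by
    funext x
    simp [pow_two]
  rw [e] at h
  exact h

lemma l2_sum (u : H1 Vtx) : Summable (fun x => (u x)^2) := (l2_hasSum u).summable

lemma l2_fin (u : H1 Vtx) (s : Finset Vtx) : ∑ x ∈ s, (u x)^2 ≤ ‖u‖^2 :=
  sum_le_hasSum s (fun _ _ => sq_nonneg _) (l2_hasSum u)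

lemma abs_le_norm (u : H1 Vtx) (x : Vtx) : |u x| ≤ ‖u‖ := by
  simpa using lp.norm_apply_le_norm (p := 2) (by norm_num) u x

/-- neighbour sum of squares -/
noncomputable def nbr (adj : Vtx → Vtx → Prop) (u : Vtx → ℝ) (x : Vtx) : ℝ :=
  ∑' y : {y : Vtx // adj x y}, (u y.1)^2

lemma nbr_nonneg (adj : Vtx → Vtx → Prop) (u : Vtx → ℝ) (x : Vtx) : 0 ≤ nbr adj u x :=
  tsum_nonneg fun _ => sq_nonneg _

lemma nbr_fin (adj : Vtx → Vtx → Prop) (D : ℕ)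
    (hsym : ∀ x y, adj x y → adj y x)
    (hfin : ∀ x, {y | adj x y}.Finite)
    (hdeg : ∀ x, {y | adj x y}.ncard ≤ D) (u : H1 Vtx) (s : Finset Vtx) :
    ∑ x ∈ s, nbr adj (fun y => u y) x ≤ D * ‖u‖^2 := by
  classical
  have h1 : ∀ x, nbr adj (fun y => u y) x = ∑ y ∈ (hfin x).toFinset, (u y)^2 := by
    intro x
    unfold nbr
    have : Fintype {y : Vtx // adj x y} := (hfin x).fintype
    rw [tsum_fintype]
    exact Finset.sum_subtype (hfin x).toFinset (fun y => by simp) (fun y => (u y)^2) |>.symm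
  simp_rw [h1]
  set t := s.biUnion (fun x => (hfin x).toFinset) with ht
  have h2 : ∀ x ∈ s, ∑ y ∈ (hfin x).toFinset, (u y)^2 = ∑ y ∈ t, if adj x y then (u y)^2 else 0 := by
    intro x hx
    rw [← Finset.sum_filter]
    congr 1
    ext y
    simp only [Set.Finite.mem_toFinset, Set.mem_ofPred_eq, Finset.mem_filter, ht, Finset.mem_biUnion]
    exact ⟨fun h => ⟨⟨x, hx, h⟩, h⟩, fun h => h.2⟩
  rw [Finset.sum_congr rfl h2, Finset.sum_comm]
  calc ∑ y ∈ t, ∑ x ∈ s, (if adj x y then (u y)^2 else 0)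
      ≤ ∑ y ∈ t, D * (u y)^2 := by
        refine Finset.sum_le_sum fun y _ => ?_
        rw [← Finset.sum_filter, Finset.sum_const, nsmul_eq_mul]
        refine mul_le_mul_of_nonneg_right ?_ (sq_nonneg _)
        have : (s.filter (fun x => adj x y)).card ≤ (hfin y).toFinset.card := by
          refine Finset.card_le_card fun x hx => ?_
          simp only [Finset.mem_filter] at hx
          simpa using hsym _ _ hx.2
        have h3 := hdeg y
        rw [Set.ncard_eq_toFinset_card _ (hfin y)] at h3
        exact_mod_cast this.trans h3
    _ = D * ∑ y ∈ t, (u y)^2 := by rw [Finset.mul_sum]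
    _ ≤ D * ‖u‖^2 := by
        exact mul_le_mul_of_nonneg_left (l2_fin u t) (by positivity)

lemma nbr_summable (adj : Vtx → Vtx → Prop) (D : ℕ)
    (hsym : ∀ x y, adj x y → adj y x)
    (hfin : ∀ x, {y | adj x y}.Finite)
    (hdeg : ∀ x, {y | adj x y}.ncard ≤ D) (u : H1 Vtx) :
    Summable (nbr adj (fun y => u y)) :=
  summable_of_sum_le (fun x => nbr_nonneg _ _ x) (nbr_fin adj D hsym hfin hdeg u)

lemma nbr_tsum (adj : Vtx → Vtx → Prop) (D : ℕ)
    (hsym : ∀ x y, adj x y → adj y x)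
    (hfin : ∀ x, {y | adj x y}.Finite)
    (hdeg : ∀ x, {y | adj x y}.ncard ≤ D) (u : H1 Vtx) :
    ∑' x, nbr adj (fun y => u y) x ≤ D * ‖u‖^2 :=
  (nbr_summable adj D hsym hfin hdeg u).tsum_le_of_sum_le (nbr_fin adj D hsym hfin hdeg u)

lemma gamma_bound (adj : Vtx → Vtx → Prop) (D : ℕ)
    (hfin : ∀ x, {y | adj x y}.Finite)
    (hdeg : ∀ x, {y | adj x y}.ncard ≤ D) (u v : Vtx → ℝ) (x : Vtx) :
    |gammaProd adj u v x| ≤ 1/2 * (nbr adj u x + nbr adj v x + D * (u x)^2 + D * (v x)^2) := by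
  have : Fintype {y : Vtx // adj x y} := (hfin x).fintype
  unfold gammaProd nbr
  rw [tsum_fintype, tsum_fintype, tsum_fintype, abs_mul, abs_of_pos (by norm_num : (0:ℝ) < 1/2)]
  refine mul_le_mul_of_nonneg_left ?_ (by norm_num)
  have hc : ((Fintype.card {y : Vtx // adj x y} : ℕ) : ℝ) ≤ D := by
    have h3 := hdeg x
    rw [← Nat.card_coe_set_eq] at h3
    have h4 : Nat.card {y : Vtx // adj x y} ≤ D := h3
    rw [Nat.card_eq_fintype_card] at h4
    exact_mod_cast h4
  calc |∑ y : {y : Vtx // adj x y}, (u y.1 - u x) * (v y.1 - v x)|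
      ≤ ∑ y : {y : Vtx // adj x y}, |(u y.1 - u x) * (v y.1 - v x)| := Finset.abs_sum_le_sum_abs _ _
    _ ≤ ∑ y : {y : Vtx // adj x y}, ((u y.1)^2 + (v y.1)^2 + ((u x)^2 + (v x)^2)) := by
        refine Finset.sum_le_sum fun y _ => ?_
        rw [abs_le]
        constructor <;> nlinarith [sq_nonneg (u y.1 + u x), sq_nonneg (v y.1 + v x),
          sq_nonneg ((u y.1 - u x) + (v y.1 - v x)), sq_nonneg ((u y.1 - u x) - (v y.1 - v x))]
    _ = ∑ y : {y : Vtx // adj x y}, (u y.1)^2 + ∑ y : {y : Vtx // adj x y}, (v y.1)^2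
          + Fintype.card {y : Vtx // adj x y} * ((u x)^2 + (v x)^2) := by
        rw [Finset.sum_add_distrib, Finset.sum_add_distrib, Finset.sum_const, nsmul_eq_mul]
        rfl
    _ ≤ _ := by
        have := mul_le_mul_of_nonneg_right hc (by positivity : 0 ≤ (u x)^2 + (v x)^2)
        linarith

lemma gamma_add (adj : Vtx → Vtx → Prop)
    (hfin : ∀ x, {y | adj x y}.Finite) (u u' v : Vtx → ℝ) (x : Vtx) :
    gammaProd adj (fun y => u y + u' y) v x = gammaProd adj u v x + gammaProd adj u' v x := by
  have : Fintype {y : Vtx // adj x y} := (hfin x).fintype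
  unfold gammaProd
  rw [tsum_fintype, tsum_fintype, tsum_fintype, ← mul_add, ← Finset.sum_add_distrib]
  congr 1
  exact Finset.sum_congr rfl fun y _ => by ring

lemma gamma_smul (adj : Vtx → Vtx → Prop) (c : ℝ) (u v : Vtx → ℝ) (x : Vtx) :
    gammaProd adj (fun y => c * u y) v x = c * gammaProd adj u v x := by
  unfold gammaProd
  rw [mul_left_comm, ← tsum_mul_left (a := c)]
  congr 1
  exact tsum_congr fun y => by ring

lemma gamma_comm (adj : Vtx → Vtx → Prop) (u v : Vtx → ℝ) (x : Vtx) :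
    gammaProd adj u v x = gammaProd adj v u x := by
  unfold gammaProd
  congr 1
  exact tsum_congr fun y => by ring

lemma iprod_comm (adj : Vtx → Vtx → Prop) (Vp : Vtx → ℝ) (u v : H1 Vtx) :
    iprodH adj Vp u v = iprodH adj Vp v u := by
  unfold iprodH
  refine tsum_congr fun x => ?_
  rw [gamma_comm]; ring

lemma iprod_smul (adj : Vtx → Vtx → Prop) (Vp : Vtx → ℝ) (c : ℝ) (u v : H1 Vtx) :
    iprodH adj Vp (c • u) v = c * iprodH adj Vp u v := by
  unfold iprodH
  rw [← tsum_mul_left]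
  refine tsum_congr fun x => ?_
  have := gamma_smul adj c (fun y => u y) (fun y => v y) x
  simp only [lp.coeFn_smul, Pi.smul_apply, smul_eq_mul]
  rw [this]; ring

section
variable (adj : Vtx → Vtx → Prop) (D : ℕ)
    (hsym : ∀ x y, adj x y → adj y x)
    (hfin : ∀ x, {y | adj x y}.Finite)
    (hdeg : ∀ x, {y | adj x y}.ncard ≤ D)
    (Vp : Vtx → ℝ) (C1 C2 : ℝ) (hC1 : 0 < C1)
    (hVbd : ∀ x, C1 ≤ Vp x ∧ Vp x ≤ C2)

include hfin hdeg hC1 hVbd in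
lemma term_bound (u v : H1 Vtx) (x : Vtx) :
    |gammaProd adj (fun y => u y) (fun y => v y) x + Vp x * u x * v x| ≤
      1/2 * nbr adj (fun y => u y) x + 1/2 * nbr adj (fun y => v y) x
        + (D + C2) * (u x)^2 + (D + C2) * (v x)^2 := by
  have h1 := gamma_bound adj D hfin hdeg (fun y => u y) (fun y => v y) x
  have hC2 : 0 ≤ C2 := by linarith [hVbd x]
  have h2 : |Vp x * u x * v x| ≤ C2 * ((u x)^2 + (v x)^2) := by
    rw [mul_assoc, abs_mul, abs_of_pos (by linarith [hVbd x] : 0 < Vp x)]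
    refine mul_le_mul (hVbd x).2 ?_ (abs_nonneg _) hC2
    rw [abs_le]
    constructor <;> nlinarith [sq_nonneg (u x - v x), sq_nonneg (u x + v x)]
  have h3 := abs_add_le (gammaProd adj (fun y => u y) (fun y => v y) x) (Vp x * u x * v x)
  have hD : (0:ℝ) ≤ D := by positivity
  nlinarith [mul_nonneg hD (sq_nonneg (u x)), mul_nonneg hD (sq_nonneg (v x))]

include hsym hfin hdeg hC1 hVbd

lemma bd_hasSum (u v : H1 Vtx) :
    ∃ S, HasSum (fun x => 1/2 * nbr adj (fun y => u y) x + 1/2 * nbr adj (fun y => v y) x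
        + (D + C2) * (u x)^2 + (D + C2) * (v x)^2) S ∧
      S ≤ (2 * D + C2) * (‖u‖^2 + ‖v‖^2) := by
  refine ⟨_, ((((nbr_summable adj D hsym hfin hdeg u).hasSum.mul_left (1/2)).add
    ((nbr_summable adj D hsym hfin hdeg v).hasSum.mul_left (1/2))).add
    ((l2_hasSum u).mul_left _)).add ((l2_hasSum v).mul_left _), ?_⟩
  have h1 := nbr_tsum adj D hsym hfin hdeg u
  have h2 := nbr_tsum adj D hsym hfin hdeg v
  have hD : (0:ℝ) ≤ D := by positivity
  nlinarith [mul_nonneg hD (sq_nonneg ‖u‖), mul_nonneg hD (sq_nonneg ‖v‖)]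

lemma term_summable (u v : H1 Vtx) :
    Summable (fun x => gammaProd adj (fun y => u y) (fun y => v y) x + Vp x * u x * v x) := by
  obtain ⟨S, hS, -⟩ := bd_hasSum adj D hsym hfin hdeg Vp C1 C2 hC1 hVbd u v
  exact Summable.of_norm_bounded hS.summable
    (term_bound adj D hfin hdeg Vp C1 C2 hC1 hVbd u v)

lemma iprod_bound (u v : H1 Vtx) :
    |iprodH adj Vp u v| ≤ (2 * D + C2) * (‖u‖^2 + ‖v‖^2) := by
  obtain ⟨S, hS, h⟩ := bd_hasSum adj D hsym hfin hdeg Vp C1 C2 hC1 hVbd u v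
  exact (tsum_of_norm_bounded (f := fun x => gammaProd adj (fun y => u y) (fun y => v y) x
    + Vp x * u x * v x) hS (term_bound adj D hfin hdeg Vp C1 C2 hC1 hVbd u v)).trans h

lemma iprod_add (u u' v : H1 Vtx) :
    iprodH adj Vp (u + u') v = iprodH adj Vp u v + iprodH adj Vp u' v := by
  unfold iprodH
  rw [← (term_summable adj D hsym hfin hdeg Vp C1 C2 hC1 hVbd u v).tsum_add
    (term_summable adj D hsym hfin hdeg Vp C1 C2 hC1 hVbd u' v)]
  refine tsum_congr fun x => ?_
  have := gamma_add adj hfin (fun y => u y) (fun y => u' y) (fun y => v y) x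
  simp only [lp.coeFn_add, Pi.add_apply]
  rw [this]; ring

lemma iprod_bound' (u v : H1 Vtx) :
    |iprodH adj Vp u v| ≤ (2 * (2 * D + C2)) * ‖u‖ * ‖v‖ := by
  have hz : ∀ v, iprodH adj Vp 0 v = 0 := fun v => by
    simpa using iprod_smul adj Vp 0 0 v
  by_cases hu : u = 0
  · subst hu; simp [hz]
  by_cases hv : v = 0
  · subst hv; rw [iprod_comm]; simp [hz]
  have hu' := norm_pos_iff.2 hu
  have hv' := norm_pos_iff.2 hv
  have h := iprod_bound adj D hsym hfin hdeg Vp C1 C2 hC1 hVbd (‖u‖⁻¹ • u) (‖v‖⁻¹ • v)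
  rw [iprod_smul, iprod_comm, iprod_smul, iprod_comm, norm_smul, norm_smul, norm_inv, norm_inv,
    norm_norm, norm_norm, inv_mul_cancel₀ hu'.ne', inv_mul_cancel₀ hv'.ne', abs_mul, abs_mul,
    abs_of_pos (inv_pos.2 hu'), abs_of_pos (inv_pos.2 hv'), inv_mul_le_iff₀ hu',
    inv_mul_le_iff₀ hv'] at h
  linarith

/-- the bilinear form as a continuous bilinear map -/
lemma exists_bilin : ∃ B : H1 Vtx →L[ℝ] H1 Vtx →L[ℝ] ℝ, ∀ u v, B u v = iprodH adj Vp u v := by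
  refine ⟨(LinearMap.mk₂ ℝ (iprodH adj Vp)
    (iprod_add adj D hsym hfin hdeg Vp C1 C2 hC1 hVbd) (fun c u v => iprod_smul adj Vp c u v)
    (fun u v v' => ?_) (fun c u v => ?_)).mkContinuous₂ (2 * (2 * D + C2))
    (iprod_bound' adj D hsym hfin hdeg Vp C1 C2 hC1 hVbd), fun u v => rfl⟩
  · rw [iprod_comm, iprod_add adj D hsym hfin hdeg Vp C1 C2 hC1 hVbd, iprod_comm,
      iprod_comm adj Vp v']
  · rw [iprod_comm, iprod_smul, iprod_comm]; rfl

lemma iprod_pos (u : H1 Vtx) (hu : u ≠ 0) : 0 < iprodH adj Vp u u := by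
  have h := term_summable adj D hsym hfin hdeg Vp C1 C2 hC1 hVbd u u
  have hg : ∀ x, 0 ≤ gammaProd adj (fun y => u y) (fun y => u y) x := fun x => by
    unfold gammaProd
    exact mul_nonneg (by norm_num) (tsum_nonneg fun y => mul_self_nonneg _)
  have : ∃ x, u x ≠ 0 := by
    by_contra! hc
    exact hu (lp.ext (funext hc))
  obtain ⟨x, hx⟩ := this
  refine h.tsum_pos (fun y => ?_) x ?_
  · have := mul_nonneg (hC1.le.trans (hVbd y).1) (mul_self_nonneg (u y))
    linarith [hg y]
  · have := mul_pos (hC1.trans_le (hVbd x).1) (mul_self_pos.2 hx)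
    linarith [hg x]

end

lemma quad_eq (adj : Vtx → Vtx → Prop) (Vp : Vtx → ℝ) (u : H1 Vtx) :
    ∑' x, (gradSq adj (fun y => u y) x + Vp x * (u x)^2) = iprodH adj Vp u u := by
  unfold iprodH gradSq
  exact tsum_congr fun x => by ring

lemma nrmH_eq (adj : Vtx → Vtx → Prop) (Vp : Vtx → ℝ) (u : H1 Vtx) :
    nrmH adj Vp u = Real.sqrt (iprodH adj Vp u u) := by
  unfold nrmH nrmV
  rw [quad_eq]

lemma nrmH_smul (adj : Vtx → Vtx → Prop) (Vp : Vtx → ℝ) (c : ℝ) (hc : 0 ≤ c) (u : H1 Vtx) :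
    nrmH adj Vp (c • u) = c * nrmH adj Vp u := by
  rw [nrmH_eq, nrmH_eq, iprod_smul, iprod_comm, iprod_smul, ← mul_assoc,
    Real.sqrt_mul (mul_self_nonneg c), Real.sqrt_mul_self hc]

lemma l2_tail (u : H1 Vtx) (ε : ℝ) (hε : 0 < ε) :
    ∃ s : Finset Vtx, ∀ t, Disjoint t s → ∑ x ∈ t, (u x)^2 < ε := by
  obtain ⟨s, hs⟩ := summable_iff_vanishing_norm.1 (l2_sum u) ε hε
  exact ⟨s, fun t ht => (le_abs_self _).trans_lt (hs t ht)⟩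

lemma split_bound (R : Vtx → ℝ) (s : Finset Vtx) (c : ℝ)
    (h : ∀ t, Disjoint t s → ∑ x ∈ t, |R x| ≤ c) :
    |∑' x, R x| ≤ ∑ x ∈ s, |R x| + c := by
  classical
  have h1 : ∀ t : Finset Vtx, ∑ x ∈ t, |R x| ≤ ∑ x ∈ s, |R x| + c := by
    intro t
    rw [← Finset.sum_inter_add_sum_sdiff t s]
    refine add_le_add ?_ (h _ Finset.sdiff_disjoint)
    exact Finset.sum_le_sum_of_subset_of_nonneg Finset.inter_subset_right
      (fun _ _ _ => abs_nonneg _)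
  have h2 : Summable fun x => |R x| := summable_of_sum_le (fun x => abs_nonneg _) h1
  exact (norm_tsum_le_tsum_norm (f := R) h2).trans (h2.tsum_le_of_sum_le h1)

lemma cont_eval (x : Vtx) : Continuous (fun u : H1 Vtx => u x) := by
  refine (LipschitzWith.of_dist_le_mul (K := 1) fun u v => ?_).continuous
  have := abs_le_norm (u - v) x
  simpa [dist_eq_norm, Real.dist_eq] using this

lemma summable_G (G : Vtx → ℝ → ℝ)
    (hG : ∀ M : ℝ, ∃ K > 0, ∀ x t, |t| ≤ M → |G x t| ≤ K * t^2) (u : H1 Vtx) :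
    Summable (fun x => G x (u x)) := by
  obtain ⟨K, hK, h⟩ := hG ‖u‖
  exact Summable.of_norm_bounded ((l2_sum u).mul_left K) (fun x => h x _ (abs_le_norm u x))

open Filter Topology in
lemma cont_tsum (G : Vtx → ℝ → ℝ) (hGc : ∀ x, Continuous (G x))
    (hG : ∀ M : ℝ, ∃ K > 0, ∀ x t, |t| ≤ M → |G x t| ≤ K * t^2) :
    Continuous (fun u : H1 Vtx => ∑' x, G x (u x)) := by
  rw [continuous_iff_continuousAt]
  intro u
  rw [ContinuousAt, Metric.tendsto_nhds]
  intro ε hε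
  obtain ⟨K, hK, hb⟩ := hG (‖u‖ + 1)
  obtain ⟨s, hs⟩ := l2_tail u (ε / (12 * K)) (by positivity)
  have c1 : Continuous fun v : H1 Vtx => ∑ x ∈ s, |G x (v x) - G x (u x)| := by
    refine continuous_finsetSum _ fun x _ => ?_
    exact (((hGc x).comp (cont_eval x)).sub continuous_const).abs
  have e1 : ∀ᶠ v in 𝓝 u, ∑ x ∈ s, |G x (v x) - G x (u x)| < ε / 4 :=
    c1.continuousAt.eventually_lt continuousAt_const (by simpa using hε)
  have c2 : Continuous fun v : H1 Vtx => 2 * K * ‖v - u‖^2 := by fun_prop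
  have e2 : ∀ᶠ v in 𝓝 u, 2 * K * ‖v - u‖^2 < ε / 4 :=
    c2.continuousAt.eventually_lt continuousAt_const (by simpa using hε)
  have c3 : Continuous fun v : H1 Vtx => ‖v - u‖ := by fun_prop
  have e3 : ∀ᶠ v in 𝓝 u, ‖v - u‖ < 1 :=
    c3.continuousAt.eventually_lt continuousAt_const (by simp)
  filter_upwards [e1, e2, e3] with v h1 h2 h3
  rw [Real.dist_eq, ← (summable_G G hG v).tsum_sub (summable_G G hG u)]
  have hv : ‖v‖ ≤ ‖u‖ + 1 := by
    have := norm_add_le u (v - u)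
    rw [add_sub_cancel] at this
    linarith
  have := split_bound (fun x => G x (v x) - G x (u x)) s (2 * K * ‖v - u‖^2 + ε / 4) ?_
  · linarith
  intro t ht
  calc ∑ x ∈ t, |G x (v x) - G x (u x)|
      ≤ ∑ x ∈ t, (2 * K * ((v - u : H1 Vtx) x)^2 + 3 * K * (u x)^2) := by
        refine Finset.sum_le_sum fun x _ => ?_
        have b1 := hb x (v x) ((abs_le_norm v x).trans hv)
        have b2 := hb x (u x) ((abs_le_norm u x).trans (by linarith))
        have b3 := abs_sub (G x (v x)) (G x (u x))
        have b4 : (v - u : H1 Vtx) x = v x - u x := by simp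
        rw [b4]
        nlinarith [mul_nonneg hK.le (sq_nonneg (v x - 2 * u x))]
    _ = 2 * K * ∑ x ∈ t, ((v - u : H1 Vtx) x)^2 + 3 * K * ∑ x ∈ t, (u x)^2 := by
        rw [Finset.sum_add_distrib, Finset.mul_sum, Finset.mul_sum]
    _ ≤ _ := by
        have b1 := mul_le_mul_of_nonneg_left (l2_fin (v - u) t) (by positivity : 0 ≤ 2 * K)
        have b2 := mul_le_mul_of_nonneg_left (hs t ht).le (by positivity : 0 ≤ 3 * K)
        have b3 : 3 * K * (ε / (12 * K)) = ε / 4 := by field_simp; norm_num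
        linarith

section
variable (f : Vtx → ℝ → ℝ) (hcont : ∀ x, Continuous (f x))
    (hlin : ∀ M : ℝ, ∃ K > 0, ∀ x t, |t| ≤ M → |f x t| ≤ K * |t|)
    (F : Vtx → ℝ → ℝ) (hF : ∀ x t, F x t = ∫ s in (0:ℝ)..t, f x s)

lemma lin_of_growth (a q : ℝ) (ha : 0 < a) (hq : 2 < q)
    (hgrowth : ∀ x t, |f x t| ≤ a * (|t| + |t| ^ (q - 1))) :
    ∀ M : ℝ, ∃ K > 0, ∀ x t, |t| ≤ M → |f x t| ≤ K * |t| := by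
  intro M
  refine ⟨a * (1 + |M| ^ (q - 2)), by positivity, fun x t ht => (hgrowth x t).trans ?_⟩
  rw [mul_assoc]
  refine mul_le_mul_of_nonneg_left ?_ ha.le
  rcases eq_or_ne t 0 with rfl | h0
  · rw [abs_zero, Real.zero_rpow (by linarith)]; simp
  have h1 : |t| ^ (q - 1) = |t| ^ (q - 2) * |t| := by
    rw [← Real.rpow_add_one (abs_pos.2 h0).ne']; congr 1; ring
  have h2 : |t| ^ (q - 2) ≤ |M| ^ (q - 2) :=
    Real.rpow_le_rpow (abs_nonneg _) (ht.trans (le_abs_self M)) (by linarith)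
  rw [h1]
  nlinarith [mul_le_mul_of_nonneg_right h2 (abs_nonneg t)]

include hlin in
lemma fu_quad : ∀ M : ℝ, ∃ K > 0, ∀ x t, |t| ≤ M → |f x t * t| ≤ K * t^2 := by
  intro M
  obtain ⟨K, hK, h⟩ := hlin M
  refine ⟨K, hK, fun x t ht => ?_⟩
  rw [abs_mul, ← sq_abs t]
  nlinarith [mul_le_mul_of_nonneg_right (h x t ht) (abs_nonneg t)]

include hcont hF

lemma F_diff (M K : ℝ) (hb : ∀ x t, |t| ≤ M → |f x t| ≤ K * |t|) (hK : 0 < K)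
    (x : Vtx) (p h : ℝ) (hM : |p| + |h| ≤ M) :
    |F x (p + h) - F x p| ≤ K * (|p| + |h|) * |h| := by
  rw [hF, hF, intervalIntegral.integral_interval_sub_left
    ((hcont x).intervalIntegrable _ _) ((hcont x).intervalIntegrable _ _)]
  have := intervalIntegral.norm_integral_le_of_norm_le_const (a := p) (b := p + h) (f := f x)
    (C := K * (|p| + |h|)) ?_
  · simpa using this
  intro t ht
  have h1 : |t| ≤ |p| + |h| := by
    have h2 := Set.abs_sub_left_of_mem_uIcc (Set.uIoc_subset_uIcc ht)
    rw [add_sub_cancel_left] at h2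
    have := abs_add_le p (t - p)
    rw [add_sub_cancel] at this
    linarith
  exact (hb x t (h1.trans hM)).trans (mul_le_mul_of_nonneg_left h1 hK.le)

include hlin

lemma F_quad : ∀ M : ℝ, ∃ K > 0, ∀ x t, |t| ≤ M → |F x t| ≤ K * t^2 := by
  intro M
  obtain ⟨K, hK, h⟩ := hlin M
  refine ⟨K, hK, fun x t ht => ?_⟩
  have := F_diff f hcont F hF M K h hK x 0 t (by simpa using ht)
  have h0 : F x 0 = 0 := by rw [hF]; simp
  rw [zero_add, h0, sub_zero, abs_zero, zero_add, mul_assoc, ← pow_two, sq_abs] at this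
  exact this

open Filter Topology Asymptotics in
lemma N_hasFDerivAt (u : H1 Vtx) :
    ∃ L : H1 Vtx →L[ℝ] ℝ, HasFDerivAt (fun u : H1 Vtx => ∑' x, F x (u x)) L u ∧
      L u = ∑' x, f x (u x) * u x := by
  obtain ⟨K, hK, hb⟩ := hlin (‖u‖ + 1)
  have hbu : ∀ x, |f x (u x)| ≤ K * |u x| := fun x =>
    hb x _ ((abs_le_norm u x).trans (by linarith))
  have hmem : Memℓp (fun x => f x (u x)) 2 := by
    apply memℓp_gen
    refine Summable.of_nonneg_of_le (fun x => by positivity) (fun x => ?_)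
      ((l2_sum u).mul_left (K^2))
    simp only [ENNReal.toReal_ofNat, Real.rpow_ofNat, Real.norm_eq_abs]
    rw [← sq_abs (u x), ← mul_pow]
    exact pow_le_pow_left₀ (abs_nonneg _) (hbu x) 2
  let g : H1 Vtx := ⟨fun x => f x (u x), hmem⟩
  have hgx : ∀ x, g x = f x (u x) := fun x => rfl
  have hL : ∀ h : H1 Vtx, HasSum (fun x => f x (u x) * h x) (inner ℝ g h) := by
    intro h
    have := lp.hasSum_inner (𝕜 := ℝ) g h
    have e : (fun i => inner ℝ (g i) (h i)) = fun x => f x (u x) * h x := by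
      funext x
      rw [hgx]
      simp [mul_comm]
    rw [e] at this
    exact this
  refine ⟨innerSL ℝ g, ?_, ?_⟩
  swap
  · rw [(hL u).tsum_eq]; rfl
  rw [hasFDerivAt_iff_isLittleO_nhds_zero, isLittleO_iff]
  intro c hc
  obtain ⟨s, hs⟩ := l2_tail u ((c / (8 * K))^2) (by positivity)
  have e1 : ∀ᶠ h : H1 Vtx in 𝓝 0,
      ‖∑ x ∈ s, |F x (u x + h x) - F x (u x) - f x (u x) * h x|‖ ≤ c / 4 * ‖h‖ := by
    suffices hlo : (fun h : H1 Vtx => ∑ x ∈ s, |F x (u x + h x) - F x (u x) - f x (u x) * h x|)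
        =o[𝓝 0] (fun h : H1 Vtx => h) from hlo.bound (by positivity)
    refine IsLittleO.fun_sum (g' := fun h : H1 Vtx => h) (A := fun x (h : H1 Vtx) =>
      |F x (u x + h x) - F x (u x) - f x (u x) * h x|) fun x _ => ?_
    have hd : HasDerivAt (F x) (f x (u x)) (u x) := by
      have : F x = fun t => ∫ s in (0:ℝ)..t, f x s := funext (hF x)
      rw [this]
      exact intervalIntegral.integral_hasDerivAt_right ((hcont x).intervalIntegrable _ _)
        ((hcont x).stronglyMeasurableAtFilter _ _) (hcont x).continuousAt
    rw [hasDerivAt_iff_isLittleO_nhds_zero] at hd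
    have ht : Tendsto (fun h : H1 Vtx => h x) (𝓝 0) (𝓝 0) := by
      have := (cont_eval x).tendsto (0 : H1 Vtx)
      simpa using this
    have h1 := IsLittleO.norm_left (hd.comp_tendsto ht)
    have h2 : (fun h : H1 Vtx => h x) =O[𝓝 0] (fun h : H1 Vtx => h) :=
      IsBigO.of_bound 1 (Eventually.of_forall fun h => by simpa using abs_le_norm h x)
    refine (h1.trans_isBigO h2).congr_left fun h => ?_
    simp [mul_comm]
  have c2 : Continuous fun h : H1 Vtx => ‖h‖ := continuous_norm
  have e2 : ∀ᶠ h : H1 Vtx in 𝓝 0, ‖h‖ < 1 :=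
    c2.continuousAt.eventually_lt continuousAt_const (by simp)
  have e3 : ∀ᶠ h : H1 Vtx in 𝓝 0, ‖h‖ < c / (8 * K) :=
    c2.continuousAt.eventually_lt continuousAt_const (by simp; positivity)
  filter_upwards [e1, e2, e3] with h h1 h2 h3
  have hq := F_quad f hcont hlin F hF
  have s1 := summable_G F hq (u + h)
  have s2 := summable_G F hq u
  have ei : (innerSL ℝ g) h = ∑' x, f x (u x) * h x := by rw [(hL h).tsum_eq]; rfl
  rw [ei, ← s1.tsum_sub s2, ← (s1.sub s2).tsum_sub (hL h).summable]
  have := split_bound (fun x => F x ((u + h : H1 Vtx) x) - F x (u x) - f x (u x) * h x) s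
    (c / 2 * ‖h‖) ?_
  · rw [Real.norm_eq_abs] at h1 ⊢
    have h1' := (le_abs_self _).trans h1
    refine this.trans ?_
    simp only [lp.coeFn_add, Pi.add_apply]
    have : 0 ≤ c * ‖h‖ := by positivity
    linarith
  intro t ht
  have hD : ∀ x, |F x ((u + h : H1 Vtx) x) - F x (u x) - f x (u x) * h x| ≤
      2 * K * (|u x| * |h x|) + K * (h x)^2 := by
    intro x
    have b1 := F_diff f hcont F hF (‖u‖ + 1) K hb hK x (u x) (h x)
      (by linarith [abs_le_norm u x, abs_le_norm h x])
    have b2 := mul_le_mul_of_nonneg_right (hbu x) (abs_nonneg (h x))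
    rw [← abs_mul] at b2
    have b3 := abs_sub (F x (u x + h x) - F x (u x)) (f x (u x) * h x)
    simp only [lp.coeFn_add, Pi.add_apply]
    rw [← sq_abs (h x)]
    nlinarith
  have hn := norm_nonneg h
  have hcs : ∑ x ∈ t, |u x| * |h x| ≤ c / (8 * K) * ‖h‖ := by
    have b := Finset.sum_mul_sq_le_sq_mul_sq t (fun x => |u x|) (fun x => |h x|)
    simp only [sq_abs] at b
    refine abs_le_of_sq_le_sq' (b := c / (8 * K) * ‖h‖) ?_ (by positivity) |>.2
    rw [mul_pow]
    exact b.trans (mul_le_mul (hs t ht).le (l2_fin h t)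
      (Finset.sum_nonneg fun _ _ => sq_nonneg _) (by positivity))
  calc _ ≤ ∑ x ∈ t, (2 * K * (|u x| * |h x|) + K * (h x)^2) := Finset.sum_le_sum fun x _ => hD x
    _ = 2 * K * ∑ x ∈ t, |u x| * |h x| + K * ∑ x ∈ t, (h x)^2 := by
        rw [Finset.sum_add_distrib, Finset.mul_sum, Finset.mul_sum]
    _ ≤ 2 * K * (c / (8 * K) * ‖h‖) + K * (c / (8 * K) * ‖h‖) := by
        refine add_le_add (mul_le_mul_of_nonneg_left hcs (by positivity))
          (mul_le_mul_of_nonneg_left ?_ hK.le)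
        refine (l2_fin h t).trans ?_
        rw [pow_two]
        exact mul_le_mul_of_nonneg_right h3.le hn
    _ = 3 / 8 * (c * ‖h‖) := by field_simp; norm_num
    _ ≤ _ := by
        have : 0 ≤ c * ‖h‖ := by positivity
        linarith

end

end NehariAux

/-- Proposition 3.4: `m̂(w) = s_w w` is continuous on `H¹\{0}`, and its restriction `m`
to the unit sphere `S` is a homeomorphism onto the Nehari manifold `N`, with inverse
`m⁻¹(u) = u/‖u‖`. -/
theorem stmt11
    {Vtx : Type*} (adj : Vtx → Vtx → Prop) (D : ℕ)
    (hsym : ∀ x y, adj x y → adj y x)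
    (hirr : ∀ x, ¬ adj x x)
    (hfin : ∀ x, {y | adj x y}.Finite)
    (hdeg : ∀ x, {y | adj x y}.ncard ≤ D)
    (Vp : Vtx → ℝ) (C1 C2 : ℝ) (hC1 : 0 < C1)
    (hVbd : ∀ x, C1 ≤ Vp x ∧ Vp x ≤ C2)
    (f : Vtx → ℝ → ℝ) (hcont : ∀ x, Continuous (f x))
    (a q : ℝ) (ha : 0 < a) (hq : 2 < q)
    (hgrowth : ∀ x t, |f x t| ≤ a * (|t| + |t| ^ (q - 1)))
    (hsmall : ∀ ε > 0, ∃ δ > 0, ∀ x t, t ≠ 0 → |t| < δ → |f x t| ≤ ε * |t|)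
    (hmono : ∀ x, StrictMonoOn (fun t => f x t / |t|) (Set.Iio 0) ∧
             StrictMonoOn (fun t => f x t / |t|) (Set.Ioi 0))
    (F : Vtx → ℝ → ℝ) (hF : ∀ x t, F x t = ∫ s in (0:ℝ)..t, f x s)
    (hsuper : ∀ M : ℝ, ∃ R > 0, ∀ x t, R ≤ |t| → M ≤ F x t / t ^ 2)
    (sw : H1 Vtx → ℝ)
    (hsw : ∀ w : H1 Vtx, w ≠ 0 → 0 < sw w ∧
      fderiv ℝ (PhiF adj Vp F) (sw w • w) (sw w • w) = 0 ∧
      ∀ s : ℝ, 0 < s → fderiv ℝ (PhiF adj Vp F) (s • w) (s • w) = 0 → s = sw w)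
    :
    ContinuousOn (fun w : H1 Vtx => sw w • w) {w : H1 Vtx | w ≠ 0} ∧
    Set.BijOn (fun w : H1 Vtx => sw w • w)
      {w : H1 Vtx | nrmH adj Vp w = 1} (Nehari adj Vp F) ∧
    ContinuousOn (fun u : H1 Vtx => (nrmH adj Vp u)⁻¹ • u) (Nehari adj Vp F) ∧
    (∀ u ∈ Nehari adj Vp F,
      sw ((nrmH adj Vp u)⁻¹ • u) • ((nrmH adj Vp u)⁻¹ • u) = u) ∧
    (∀ w : H1 Vtx, nrmH adj Vp w = 1 →
      (nrmH adj Vp (sw w • w))⁻¹ • (sw w • w) = w) := by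
  classical
  have hlin := NehariAux.lin_of_growth f a q ha hq hgrowth
  obtain ⟨B, hB⟩ := NehariAux.exists_bilin adj D hsym hfin hdeg Vp C1 C2 hC1 hVbd
  have hpos := NehariAux.iprod_pos adj D hsym hfin hdeg Vp C1 C2 hC1 hVbd
  -- formula for the derivative
  have hJ : ∀ u : H1 Vtx, fderiv ℝ (PhiF adj Vp F) u u =
      iprodH adj Vp u u - ∑' x, f x (u x) * u x := by
    intro u
    obtain ⟨L, hL, hLu⟩ := NehariAux.N_hasFDerivAt f hcont hlin F hF u
    have h1 := B.hasFDerivAt_of_bilinear (hasFDerivAt_id u) (hasFDerivAt_id u)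
    have h2 := (h1.const_mul (1/2 : ℝ)).sub hL
    have h3 : PhiF adj Vp F = fun y : H1 Vtx => (1/2 : ℝ) * B (id y) (id y) - ∑' x, F x (y x) := by
      funext y
      rw [hB]
      unfold PhiF
      rw [NehariAux.quad_eq]
      rfl
    rw [h3]
    have h4 := HasFDerivAt.fderiv (f := fun y : H1 Vtx =>
      (1/2 : ℝ) * B (id y) (id y) - ∑' x, F x (y x)) h2
    rw [h4]
    simp [hLu, hB]
    ring
  have hQc : Continuous fun u : H1 Vtx => iprodH adj Vp u u := by
    have : (fun u : H1 Vtx => iprodH adj Vp u u) = fun u => B u u := by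
      funext u; rw [hB]
    rw [this]
    fun_prop
  have hquad := NehariAux.fu_quad f hlin
  have hJc : Continuous fun u : H1 Vtx => iprodH adj Vp u u - ∑' x, f x (u x) * u x :=
    hQc.sub (NehariAux.cont_tsum (fun x t => f x t * t)
      (fun x => (hcont x).mul continuous_id) hquad)
  have hnc : Continuous (nrmH adj Vp) := by
    have : nrmH adj Vp = fun u => Real.sqrt (iprodH adj Vp u u) :=
      funext (NehariAux.nrmH_eq adj Vp)
    rw [this]
    exact hQc.sqrt
  have hnpos : ∀ u : H1 Vtx, u ≠ 0 → 0 < nrmH adj Vp u := fun u hu => by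
    rw [NehariAux.nrmH_eq]
    exact Real.sqrt_pos.2 (hpos u hu)
  have hn0 : ∀ w : H1 Vtx, nrmH adj Vp w = 1 → w ≠ 0 := by
    rintro w hw rfl
    have := NehariAux.nrmH_smul adj Vp 0 le_rfl (0 : H1 Vtx)
    rw [zero_smul, hw] at this
    norm_num at this
  -- monotonicity along rays
  have hray : ∀ w : H1 Vtx, w ≠ 0 → ∀ s r : ℝ, 0 < s → s < r →
      fderiv ℝ (PhiF adj Vp F) (r • w) (r • w) / r ^ 2 <
        fderiv ℝ (PhiF adj Vp F) (s • w) (s • w) / s ^ 2 := by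
    intro w hw s r hs hsr
    have hr : 0 < r := hs.trans hsr
    have key : ∀ c : ℝ, 0 < c → fderiv ℝ (PhiF adj Vp F) (c • w) (c • w) / c ^ 2 =
        iprodH adj Vp w w - ∑' x, f x (c * w x) * w x / c := by
      intro c hc
      rw [hJ, NehariAux.iprod_smul, NehariAux.iprod_comm, NehariAux.iprod_smul]
      have : ∑' x, f x (c * w x) * w x / c = (∑' x, f x ((c • w : H1 Vtx) x) * (c • w : H1 Vtx) x) / c ^ 2 := by
        rw [← tsum_div_const]
        refine tsum_congr fun x => ?_
        simp only [lp.coeFn_smul, Pi.smul_apply, smul_eq_mul]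
        field_simp
      rw [this]
      field_simp
    have hsum : ∀ c : ℝ, 0 < c → Summable fun x => f x (c * w x) * w x / c := by
      intro c hc
      refine ((NehariAux.summable_G (fun x t => f x t * t) hquad (c • w)).div_const (c ^ 2)).congr
        fun x => ?_
      simp only [lp.coeFn_smul, Pi.smul_apply, smul_eq_mul]
      field_simp
    have hlt : ∀ x, w x ≠ 0 → f x (s * w x) * w x / s < f x (r * w x) * w x / r := by
      intro x hx
      rcases lt_or_gt_of_ne hx with hx | hx
      · have h := (hmono x).1 (show r * w x ∈ Set.Iio 0 from mul_neg_of_pos_of_neg hr hx)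
          (show s * w x ∈ Set.Iio 0 from mul_neg_of_pos_of_neg hs hx) (by nlinarith)
        simp only [abs_mul, abs_of_neg hx, abs_of_pos hr, abs_of_pos hs] at h
        have h2 := mul_lt_mul_of_pos_right h (pow_pos (neg_pos.2 hx) 2)
        have hx' := hx.ne
        have e : ∀ c : ℝ, 0 < c → f x (c * w x) / (c * -w x) * (-w x) ^ 2
            = - (f x (c * w x) * w x / c) := by
          intro c hc
          field_simp
        rw [e r hr, e s hs] at h2
        linarith
      · have h := (hmono x).2 (show s * w x ∈ Set.Ioi 0 from mul_pos hs hx)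
          (show r * w x ∈ Set.Ioi 0 from mul_pos hr hx) (by nlinarith)
        simp only [abs_mul, abs_of_pos hx, abs_of_pos hr, abs_of_pos hs] at h
        have h2 := mul_lt_mul_of_pos_right h (pow_pos hx 2)
        have e : ∀ c : ℝ, 0 < c → f x (c * w x) / (c * w x) * (w x) ^ 2
            = f x (c * w x) * w x / c := by
          intro c hc
          field_simp
        rw [e r hr, e s hs] at h2
        exact h2
    have hex : ∃ x, w x ≠ 0 := by
      by_contra! hc
      exact hw (lp.ext (funext hc))
    obtain ⟨x, hx⟩ := hex
    rw [key r hr, key s hs]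
    have := Summable.tsum_lt_tsum (i := x) (fun y => ?_) (hlt x hx) (hsum s hs) (hsum r hr)
    · linarith
    by_cases hy : w y = 0
    · simp [hy]
    · exact (hlt y hy).le
  have hgt : ∀ w : H1 Vtx, w ≠ 0 → ∀ s : ℝ, 0 < s →
      0 < fderiv ℝ (PhiF adj Vp F) (s • w) (s • w) → s < sw w := by
    intro w hw s hs h
    by_contra! hc
    obtain ⟨h1, h2, h3⟩ := hsw w hw
    rcases hc.eq_or_lt with hc | hc
    · rw [← hc, h2] at h; exact lt_irrefl _ h
    · have := hray w hw _ _ h1 hc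
      rw [h2, zero_div] at this
      exact absurd this (not_lt.2 (by positivity))
  have hlt : ∀ w : H1 Vtx, w ≠ 0 → ∀ s : ℝ, 0 < s →
      fderiv ℝ (PhiF adj Vp F) (s • w) (s • w) < 0 → sw w < s := by
    intro w hw s hs h
    by_contra! hc
    obtain ⟨h1, h2, h3⟩ := hsw w hw
    rcases hc.eq_or_lt with hc | hc
    · rw [hc, h2] at h; exact lt_irrefl _ h
    · have := hray w hw _ _ hs hc
      rw [h2, zero_div] at this
      exact absurd this (not_lt.2 (div_nonpos_of_nonpos_of_nonneg h.le (by positivity)))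
  have hJc' : ∀ s : ℝ, Continuous fun w : H1 Vtx => fderiv ℝ (PhiF adj Vp F) (s • w) (s • w) := by
    intro s
    have : (fun w : H1 Vtx => fderiv ℝ (PhiF adj Vp F) (s • w) (s • w)) =
        (fun u : H1 Vtx => iprodH adj Vp u u - ∑' x, f x (u x) * u x) ∘ fun w => s • w :=
      funext fun w => hJ _
    rw [this]
    exact hJc.comp (continuous_const_smul s)
  have hopen : IsOpen {w : H1 Vtx | w ≠ 0} := isOpen_ne
  have hswc : ContinuousOn sw {w : H1 Vtx | w ≠ 0} := by
    intro w hw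
    have hw' : w ≠ 0 := hw
    obtain ⟨h1, h2, h3⟩ := hsw w hw'
    refine ContinuousAt.continuousWithinAt ?_
    have hne := hopen.mem_nhds hw
    refine tendsto_order.2 ⟨fun b hb => ?_, fun b hb => ?_⟩
    · obtain ⟨c, hc1, hc2⟩ := exists_between (max_lt hb h1)
      have hc0 : 0 < c := (le_max_right _ _).trans_lt hc1
      have hcb : b < c := (le_max_left _ _).trans_lt hc1
      have h4 : 0 < fderiv ℝ (PhiF adj Vp F) (c • w) (c • w) := by
        have := hray w hw' _ _ hc0 hc2
        rw [h2, zero_div] at this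
        by_contra! hn
        exact absurd this (not_lt.2 (div_nonpos_of_nonpos_of_nonneg hn (by positivity)))
      filter_upwards [hne, (hJc' c).continuousAt.eventually_const_lt h4] with v hv hv2
      exact hcb.trans (hgt v hv c hc0 hv2)
    · have h4 : fderiv ℝ (PhiF adj Vp F) (b • w) (b • w) < 0 := by
        have := hray w hw' _ _ h1 hb
        rw [h2, zero_div] at this
        by_contra! hn
        exact absurd this (not_lt.2 (by positivity))
      filter_upwards [hne, (hJc' b).continuousAt.eventually_lt_const h4] with v hv hv2
      exact hlt v hv b (h1.trans hb) hv2
  have hinv1 : ∀ u ∈ Nehari adj Vp F,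
      sw ((nrmH adj Vp u)⁻¹ • u) • ((nrmH adj Vp u)⁻¹ • u) = u := by
    rintro u ⟨hu, hu2⟩
    have hp := hnpos u hu
    have e : nrmH adj Vp u • ((nrmH adj Vp u)⁻¹ • u) = u := smul_inv_smul₀ hp.ne' u
    have hw : (nrmH adj Vp u)⁻¹ • u ≠ 0 := smul_ne_zero (inv_ne_zero hp.ne') hu
    have := (hsw _ hw).2.2 _ hp (by rw [e]; exact hu2)
    rw [← this, e]
  have hinv2 : ∀ w : H1 Vtx, nrmH adj Vp w = 1 →
      (nrmH adj Vp (sw w • w))⁻¹ • (sw w • w) = w := by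
    intro w hw
    have h1 := (hsw w (hn0 w hw)).1
    rw [NehariAux.nrmH_smul adj Vp _ h1.le, hw, mul_one]
    exact inv_smul_smul₀ h1.ne' w
  refine ⟨hswc.smul continuousOn_id, ⟨?_, ?_, ?_⟩, ?_, hinv1, hinv2⟩
  · intro w hw
    have h := hsw w (hn0 w hw)
    exact ⟨smul_ne_zero h.1.ne' (hn0 w hw), h.2.1⟩
  · intro w hw w' hw' h
    have h' : sw w • w = sw w' • w' := h
    rw [← hinv2 w hw, ← hinv2 w' hw', h']
  · intro u hu
    refine ⟨(nrmH adj Vp u)⁻¹ • u, ?_, hinv1 u hu⟩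
    have hp := hnpos u hu.1
    show nrmH adj Vp _ = 1
    rw [NehariAux.nrmH_smul adj Vp _ (inv_nonneg.2 hp.le), inv_mul_cancel₀ hp.ne']
  · exact (hnc.continuousOn.inv₀ fun u hu => (hnpos u hu.1).ne').smul continuousOn_id
end

section
/- In the Nehari setting, define Ψ̂ : H¹(V)\{0} → ℝ by Ψ̂(w) = Φ(m̂(w)), where m̂(w) = s_w w and s_w > 0 is the unique value with Φ'(s_w w)(s_w w) = 0. Then Ψ̂ is continuously differentiable on H¹(V)\{0} and Ψ̂'(w)z = (‖m̂(w)‖/‖w‖) · Φ'(m̂(w))z for all w ∈ H¹(V)\{0} and all z ∈ H¹(V). -/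
open scoped ENNReal

section Helpers

open Topology Filter


theorem nehari_abstract {E : Type*} [NormedAddCommGroup E] [NormedSpace ℝ E]
    (Φ : E → ℝ) (Φ' : E → E →L[ℝ] ℝ) (hd : ∀ u, HasFDerivAt Φ (Φ' u) u) (hc : Continuous Φ')
    (sw : E → ℝ) (hpos : ∀ w, w ≠ 0 → 0 < sw w)
    (hroot : ∀ w, w ≠ 0 → Φ' (sw w • w) w = 0)
    (huniq : ∀ w, w ≠ 0 → ∀ s, 0 < s → Φ' (s • w) w = 0 → s = sw w)
    (hmono : ∀ w, ∀ s t, 0 < s → s ≤ t → Φ' (t • w) w / t ≤ Φ' (s • w) w / s) :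
    ContDiffOn ℝ 1 (fun w => Φ (sw w • w)) {w | w ≠ 0} ∧
    ∀ w, w ≠ 0 → HasFDerivAt (fun w => Φ (sw w • w)) (sw w • Φ' (sw w • w)) w := by
  have hopen : IsOpen {w : E | w ≠ 0} := isOpen_ne
  have hP : ∀ w, w ≠ 0 → ∀ s, 0 < s → s < sw w → 0 < Φ' (s • w) w := by
    intro w hw s hs hlt
    have h := hmono w s (sw w) hs hlt.le
    rw [hroot w hw, zero_div] at h
    have h0 : 0 ≤ Φ' (s • w) w := by
      by_contra hneg
      exact absurd h (not_le.2 (div_neg_of_neg_of_pos (not_le.1 hneg) hs))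
    refine lt_of_le_of_ne h0 fun h1 => hlt.ne (huniq w hw s hs h1.symm)
  have hN : ∀ w, w ≠ 0 → ∀ s, sw w < s → Φ' (s • w) w < 0 := by
    intro w hw s hlt
    have hs := (hpos w hw).trans hlt
    have h := hmono w (sw w) s (hpos w hw) hlt.le
    rw [hroot w hw, zero_div] at h
    have h0 : Φ' (s • w) w ≤ 0 := by
      by_contra hneg
      exact absurd h (not_le.2 (div_pos (not_le.1 hneg) hs))
    refine lt_of_le_of_ne h0 fun h1 => hlt.ne' (huniq w hw s hs h1)
  have hG : ∀ s : ℝ, Continuous fun w => Φ' (s • w) w := fun s =>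
    (hc.comp (continuous_const_smul s)).clm_apply continuous_id
  have hsc : ∀ w, w ≠ 0 → ContinuousAt sw w := by
    intro w hw
    have hne : ∀ᶠ v in 𝓝 w, v ≠ 0 := hopen.mem_nhds hw
    refine tendsto_order.2 ⟨fun b hb => ?_, fun b hb => ?_⟩
    · rcases le_or_gt b 0 with h | h
      · filter_upwards [hne] with v hv using h.trans_lt (hpos v hv)
      · have := (hG b).continuousAt.eventually (lt_mem_nhds (hP w hw b h hb))
        filter_upwards [hne, this] with v hv h1
        by_contra hcon
        rcases (not_lt.1 hcon).lt_or_eq with h2 | h2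
        · exact absurd h1 (hN v hv b h2).not_gt
        · rw [← h2, hroot v hv] at h1; exact lt_irrefl _ h1
    · have hb0 := (hpos w hw).trans hb
      have := (hG b).continuousAt.eventually (gt_mem_nhds (hN w hw b hb))
      filter_upwards [hne, this] with v hv h1
      by_contra hcon
      rcases (not_lt.1 hcon).lt_or_eq with h2 | h2
      · exact absurd h1 (hP v hv b hb0 h2).not_gt
      · rw [h2, hroot v hv] at h1; exact lt_irrefl _ h1
  have hray : ∀ w : E, ∀ s : ℝ, HasDerivAt (fun s : ℝ => Φ (s • w)) (Φ' (s • w) w) s := by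
    intro w s
    have h1 : HasDerivAt (fun s : ℝ => s • w) w s := by
      simpa using (hasDerivAt_id s).smul_const w
    exact (hd (s • w)).comp_hasDerivAt s h1
  have hmax : ∀ w, w ≠ 0 → ∀ s : ℝ, 0 < s → Φ (s • w) ≤ Φ (sw w • w) := by
    intro w hw s hs
    have hcon : Continuous (fun s : ℝ => Φ (s • w)) :=
      continuous_iff_continuousAt.2 fun s => (hray w s).continuousAt
    rcases le_total s (sw w) with h | h
    · refine monotoneOn_of_deriv_nonneg (convex_Icc s (sw w)) hcon.continuousOn
        (fun x _ => (hray w x).differentiableAt.differentiableWithinAt) (fun x hx => ?_)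
        (Set.left_mem_Icc.2 h) (Set.right_mem_Icc.2 h) h
      rw [interior_Icc] at hx
      rw [(hray w x).deriv]
      exact (hP w hw x (hs.trans hx.1) hx.2).le
    · refine antitoneOn_of_deriv_nonpos (convex_Icc (sw w) s) hcon.continuousOn
        (fun x _ => (hray w x).differentiableAt.differentiableWithinAt) (fun x hx => ?_)
        (Set.left_mem_Icc.2 h) (Set.right_mem_Icc.2 h) h
      rw [interior_Icc] at hx
      rw [(hray w x).deriv]
      exact (hN w hw x hx.1).le
  have hder : ∀ w, w ≠ 0 → HasFDerivAt (fun w => Φ (sw w • w)) (sw w • Φ' (sw w • w)) w := by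
    intro w hw
    have hne : ∀ᶠ v in 𝓝 w, v ≠ 0 := hopen.mem_nhds hw
    have hst : HasStrictFDerivAt Φ (Φ' (sw w • w)) (sw w • w) :=
      hasStrictFDerivAt_of_hasFDerivAt_of_continuousAt (Eventually.of_forall hd) hc.continuousAt
    set L := Φ' (sw w • w) with hL
    have hS := hsc w hw
    rw [hasFDerivAt_iff_isLittleO, Asymptotics.isLittleO_iff]
    intro ε hε
    have hst' := hst.isLittleO
    set K := sw w + 1 with hK
    have hK0 : 0 < K := by have := hpos w hw; linarith
    have hη : 0 < ε / (2 * K) := by positivity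
    have hst2 := (Asymptotics.isLittleO_iff.1 hst') hη
    have ht1 : Tendsto (fun v : E => (sw w • v, sw w • w)) (𝓝 w) (𝓝 (sw w • w, sw w • w)) := by
      have : Continuous (fun v : E => (sw w • v, sw w • w)) := by fun_prop
      exact this.tendsto w
    have ht2 : Tendsto (fun v : E => (sw v • v, sw v • w)) (𝓝 w) (𝓝 (sw w • w, sw w • w)) :=
      (hS.smul continuousAt_id).prodMk_nhds (hS.smul continuousAt_const)
    have hη2 : 0 < ε / (2 * (‖L‖ + 1)) := by positivity
    have hη3 : 0 < min 1 (ε / (2 * (‖L‖ + 1))) := lt_min one_pos hη2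
    filter_upwards [hne, ht1.eventually hst2, ht2.eventually hst2,
      hS.eventually (Metric.ball_mem_nhds _ hη3)] with v hv h1 h2 h3
    have h3' : |sw v - sw w| < min 1 (ε / (2 * (‖L‖ + 1))) := by
      simpa [Real.dist_eq] using h3
    have h4 := h3'.trans_le (min_le_left _ _)
    have h5 := h3'.trans_le (min_le_right _ _)
    simp only [← smul_sub, norm_smul, map_smul, smul_eq_mul, Real.norm_eq_abs] at h1 h2
    have hwp := hpos w hw
    have hvp := hpos v hv
    rw [abs_of_pos hwp] at h1
    rw [abs_of_pos hvp] at h2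
    have hvK : sw v ≤ K := by have := (abs_lt.1 h4).2; linarith
    have hb : ∀ r, r ≤ K → ε / (2 * K) * (r * ‖v - w‖) ≤ ε / 2 * ‖v - w‖ := by
      intro r hr
      have : ε / 2 * ‖v - w‖ = ε / (2 * K) * (K * ‖v - w‖) := by field_simp
      rw [this]; gcongr
    have h1' := h1.trans (hb _ (by linarith))
    have h2' := h2.trans (hb _ hvK)
    have h6 : |(sw v - sw w) * L (v - w)| ≤ ε / 2 * ‖v - w‖ := by
      rw [abs_mul]
      have hLn : |L (v - w)| ≤ (‖L‖ + 1) * ‖v - w‖ := by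
        refine (L.le_opNorm _).trans ?_
        gcongr; linarith
      calc |sw v - sw w| * |L (v - w)|
          ≤ ε / (2 * (‖L‖ + 1)) * ((‖L‖ + 1) * ‖v - w‖) := by gcongr
        _ = ε / 2 * ‖v - w‖ := by field_simp
    have m1 := hmax v hv (sw w) hwp
    have m2 := hmax w hw (sw v) hvp
    have hnn : 0 ≤ ε / 2 * ‖v - w‖ := by positivity
    rw [Real.norm_eq_abs, abs_le]
    rw [abs_le] at h1' h2' h6
    simp only [smul_apply, smul_eq_mul]
    constructor <;> linarith [h1'.1, h1'.2, h2'.1, h2'.2, h6.1, h6.2]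
  refine ⟨?_, hder⟩
  rw [show (1 : WithTop ℕ∞) = 0 + 1 by simp, contDiffOn_succ_iff_fderiv_of_isOpen hopen]
  refine ⟨fun w hw => (hder w hw).differentiableAt.differentiableWithinAt, by simp, ?_⟩
  rw [contDiffOn_zero]
  refine ContinuousOn.congr (f := fun w => sw w • Φ' (sw w • w)) ?_
    (fun w hw => (hder w hw).fderiv)
  intro w hw
  have hS := hsc w hw
  exact (hS.smul ((hc.continuousAt).comp (hS.smul continuousAt_id))).continuousWithinAt


abbrev L2 (ι : Type*) := lp (fun _ : ι => ℝ) 2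

lemma L2.hasSum_sq {ι : Type*} (u : L2 ι) : HasSum (fun x => (u x) ^ 2) (‖u‖ ^ 2) := by
  have h := lp.hasSum_inner (𝕜 := ℝ) u u
  rw [real_inner_self_eq_norm_sq] at h
  have e : (fun x => (u x) ^ 2) = fun x => inner ℝ (u x) (u x) := by
    funext x
    simp
  rw [e]
  exact h

lemma L2.hasSum_mul {ι : Type*} (u v : L2 ι) : HasSum (fun x => u x * v x) (inner ℝ u v) := by
  have h := lp.hasSum_inner (𝕜 := ℝ) u v
  have e : (fun x => u x * v x) = fun x => inner ℝ (u x) (v x) := by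
    funext x
    simp [mul_comm]
  rw [e]
  exact h

lemma L2.mem {ι : Type*} {u : ι → ℝ} (h : Summable fun x => (u x) ^ 2) :
    Memℓp (E := fun _ : ι => ℝ) u 2 := by
  apply memℓp_gen
  simpa using h

/-- weighted composition operator -/
lemma L2.exists_comp {ι κ : Type*} (φ : κ → ι) (c : κ → ℝ) (C : ℝ) (D : ℕ)
    (hc : ∀ e, (c e) ^ 2 ≤ C) (hφ : ∀ x, ∀ S : Finset κ, (∀ e ∈ S, φ e = x) → S.card ≤ D) :
    ∃ T : L2 ι →L[ℝ] L2 κ, ∀ u e, T u e = c e * u (φ e) := by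
  classical
  have key : ∀ (u : L2 ι) (S : Finset κ), ∑ e ∈ S, (c e * u (φ e)) ^ 2 ≤ |C| * D * ‖u‖ ^ 2 := by
    intro u S
    calc ∑ e ∈ S, (c e * u (φ e)) ^ 2 ≤ ∑ e ∈ S, |C| * (u (φ e)) ^ 2 := by
          refine Finset.sum_le_sum fun e _ => ?_
          rw [mul_pow]
          gcongr
          exact (hc e).trans (le_abs_self C)
      _ = |C| * ∑ x ∈ S.image φ, ({e ∈ S | φ e = x}.card : ℝ) * (u x) ^ 2 := by
          rw [← Finset.mul_sum, Finset.sum_comp (fun x => (u x) ^ 2) φ]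
          simp
      _ ≤ |C| * ∑ x ∈ S.image φ, (D : ℝ) * (u x) ^ 2 := by
          gcongr with x hx
          exact hφ x _ (by simp)
      _ = |C| * D * ∑ x ∈ S.image φ, (u x) ^ 2 := by rw [← Finset.mul_sum, mul_assoc]
      _ ≤ |C| * D * ‖u‖ ^ 2 := by
          gcongr
          exact sum_le_hasSum _ (fun x _ => sq_nonneg _) (L2.hasSum_sq u)
  have hmem : ∀ u : L2 ι, Memℓp (E := fun _ : κ => ℝ) (fun e => c e * u (φ e)) 2 := fun u =>
    L2.mem (summable_of_sum_le (fun e => sq_nonneg _) (key u))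
  let T0 : L2 ι →ₗ[ℝ] L2 κ :=
    { toFun := fun u => ⟨fun e => c e * u (φ e), hmem u⟩
      map_add' := fun u v => by
        ext e
        simp [mul_add]
        rfl
      map_smul' := fun r u => by
        ext e
        simp
        ring }
  refine ⟨T0.mkContinuous (Real.sqrt (|C| * D)) fun u => ?_, fun u e => rfl⟩
  refine (sq_le_sq₀ (norm_nonneg _) (by positivity)).1 ?_
  rw [mul_pow, Real.sq_sqrt (by positivity)]
  exact hasSum_le_of_sum_le (L2.hasSum_sq (T0 u)) (key u)

lemma lin_bound {ι : Type*} (f : ι → ℝ → ℝ) (a q : ℝ) (ha : 0 < a) (hq : 2 < q)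
    (hgrowth : ∀ x t, |f x t| ≤ a * (|t| + |t| ^ (q - 1))) (R : ℝ) (hR : 0 ≤ R) :
    ∃ C, 0 ≤ C ∧ ∀ x t, |t| ≤ R → |f x t| ≤ C * |t| := by
  refine ⟨a * (1 + R ^ (q - 2)), by positivity, fun x t ht => (hgrowth x t).trans ?_⟩
  have h1 : |t| ^ (q - 1) = |t| ^ (q - 2) * |t| := by
    rcases (abs_nonneg t).eq_or_lt with h | h
    · rw [← h, Real.zero_rpow (by linarith), mul_zero]
    · rw [show q - 1 = (q - 2) + 1 by ring, Real.rpow_add_one h.ne']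
  have h2 : |t| ^ (q - 2) ≤ R ^ (q - 2) :=
    Real.rpow_le_rpow (abs_nonneg t) ht (by linarith)
  rw [h1, mul_assoc]
  gcongr
  nlinarith [mul_le_mul_of_nonneg_right h2 (abs_nonneg t)]

lemma L2.abs_le {ι : Type*} (u : L2 ι) (x : ι) : |u x| ≤ ‖u‖ :=
  lp.norm_apply_le_norm (by norm_num) u x

lemma nemytskii_mem {ι : Type*} (f : ι → ℝ → ℝ)
    (hb : ∀ R : ℝ, 0 ≤ R → ∃ C, 0 ≤ C ∧ ∀ x t, |t| ≤ R → |f x t| ≤ C * |t|) (u : L2 ι) :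
    Memℓp (E := fun _ : ι => ℝ) (fun x => f x (u x)) 2 := by
  obtain ⟨C, hC, h⟩ := hb ‖u‖ (norm_nonneg _)
  refine L2.mem (Summable.of_nonneg_of_le (fun x => sq_nonneg _) (fun x => ?_)
    ((L2.hasSum_sq u).summable.mul_left (C ^ 2)))
  have := h x (u x) (L2.abs_le u x)
  rw [← mul_pow]
  apply sq_le_sq.2
  rwa [abs_mul, abs_of_nonneg hC]

/-- the Nemytskii operator -/
noncomputable def nemytskii {ι : Type*} (f : ι → ℝ → ℝ)
    (hb : ∀ R : ℝ, 0 ≤ R → ∃ C, 0 ≤ C ∧ ∀ x t, |t| ≤ R → |f x t| ≤ C * |t|) (u : L2 ι) : L2 ι :=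
  ⟨fun x => f x (u x), nemytskii_mem f hb u⟩

lemma nemytskii_cont {ι : Type*} (f : ι → ℝ → ℝ) (hf : ∀ x, Continuous (f x))
    (hb : ∀ R : ℝ, 0 ≤ R → ∃ C, 0 ≤ C ∧ ∀ x t, |t| ≤ R → |f x t| ≤ C * |t|) :
    Continuous (nemytskii f hb) := by
  rw [continuous_iff_continuousAt]
  intro u
  obtain ⟨C, hC, h⟩ := hb (‖u‖ + 1) (by positivity)
  rw [ContinuousAt, tendsto_iff_norm_sub_tendsto_zero]
  have happ : ∀ v x, nemytskii f hb v x = f x (v x) := fun v x => rfl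
  have hcoord : ∀ x, Tendsto (fun v : L2 ι => v x) (𝓝 u) (𝓝 (u x)) := by
    intro x
    rw [tendsto_iff_norm_sub_tendsto_zero]
    refine squeeze_zero (fun v => norm_nonneg _) (fun v => ?_)
      (tendsto_iff_norm_sub_tendsto_zero.1 (tendsto_id (x := 𝓝 u)))
    exact L2.abs_le (v - u) x
  let g : L2 ι → ι → ℝ := fun v x =>
    max ((f x (v x) - f x (u x)) ^ 2 - 4 * C ^ 2 * (v x - u x) ^ 2) 0
  have hball : ∀ᶠ v : L2 ι in 𝓝 u, ‖v‖ ≤ ‖u‖ + 1 := by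
    have : Tendsto (fun v : L2 ι => ‖v‖) (𝓝 u) (𝓝 ‖u‖) := continuous_norm.tendsto u
    exact (this.eventually (gt_mem_nhds (lt_add_one _))).mono fun v hv => le_of_lt hv
  have hg0 : ∀ x, Tendsto (fun v => g v x) (𝓝 u) (𝓝 0) := by
    intro x
    have h1 : Tendsto (fun v : L2 ι => f x (v x)) (𝓝 u) (𝓝 (f x (u x))) :=
      ((hf x).tendsto _).comp (hcoord x)
    have h2 := (((h1.sub_const (f x (u x))).pow 2).sub
      ((((hcoord x).sub_const (u x)).pow 2).const_mul (4 * C ^ 2))).max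
        (tendsto_const_nhds (x := (0 : ℝ)))
    simpa using h2
  have hbd : ∀ᶠ v in 𝓝 u, ∀ x, ‖g v x‖ ≤ 6 * C ^ 2 * (u x) ^ 2 := by
    filter_upwards [hball] with v hv x
    have a1 := h x (v x) ((L2.abs_le v x).trans hv)
    have a2 := h x (u x) ((L2.abs_le u x).trans (by linarith))
    have b1 : (f x (v x)) ^ 2 ≤ C ^ 2 * (v x) ^ 2 := by
      rw [← mul_pow]; apply sq_le_sq.2; rwa [abs_mul, abs_of_nonneg hC]
    have b2 : (f x (u x)) ^ 2 ≤ C ^ 2 * (u x) ^ 2 := by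
      rw [← mul_pow]; apply sq_le_sq.2; rwa [abs_mul, abs_of_nonneg hC]
    have b3 : C ^ 2 * (v x) ^ 2 ≤ C ^ 2 * (2 * (v x - u x) ^ 2 + 2 * (u x) ^ 2) := by
      gcongr
      nlinarith [sq_nonneg (v x - u x - u x)]
    rw [Real.norm_of_nonneg (le_max_right _ _)]
    refine max_le ?_ (by positivity)
    nlinarith [sq_nonneg (f x (v x) + f x (u x))]
  have hlim := tendsto_tsum_of_dominated_convergence
    ((L2.hasSum_sq u).summable.mul_left (6 * C ^ 2)) hg0 hbd
  rw [tsum_zero] at hlim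
  have hsq : Tendsto (fun v => ‖nemytskii f hb v - nemytskii f hb u‖ ^ 2) (𝓝 u) (𝓝 0) := by
    have hn : Tendsto (fun v : L2 ι => 4 * C ^ 2 * ‖v - u‖ ^ 2) (𝓝 u) (𝓝 0) := by
      have := ((tendsto_iff_norm_sub_tendsto_zero.1 (tendsto_id (x := 𝓝 u))).pow 2).const_mul
        (4 * C ^ 2)
      simpa using this
    have hsum := hlim.add hn
    rw [add_zero] at hsum
    refine squeeze_zero' (Eventually.of_forall fun v => sq_nonneg _) ?_ hsum
    filter_upwards [hbd] with v hv
    have s1 : Summable (g v) :=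
      Summable.of_norm_bounded ((L2.hasSum_sq u).summable.mul_left (6 * C ^ 2)) hv
    refine hasSum_le (fun x => ?_) (L2.hasSum_sq (nemytskii f hb v - nemytskii f hb u))
      (s1.hasSum.add ((L2.hasSum_sq (v - u)).mul_left (4 * C ^ 2)))
    have : (f x (v x) - f x (u x)) ^ 2 - 4 * C ^ 2 * (v x - u x) ^ 2 ≤ g v x := le_max_left _ _
    change (f x (v x) - f x (u x)) ^ 2 ≤ g v x + 4 * C ^ 2 * (v x - u x) ^ 2
    linarith
  have := (Real.continuous_sqrt.tendsto 0).comp hsq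
  simpa [Function.comp_def, Real.sqrt_sq] using this

lemma mvt_prim (f F : ℝ → ℝ) (hF : ∀ t, HasDerivAt F (f t) t) (s t : ℝ) :
    ∃ ξ, |ξ - s| ≤ |t - s| ∧ F t - F s = f ξ * (t - s) := by
  have hc : Continuous F := continuous_iff_continuousAt.2 fun t => (hF t).continuousAt
  rcases lt_trichotomy s t with h | h | h
  · obtain ⟨c, hc, h1⟩ := exists_hasDerivAt_eq_slope F f h hc.continuousOn fun x _ => hF x
    refine ⟨c, ?_, ?_⟩
    · rw [abs_of_pos (by linarith [hc.1]), abs_of_pos (by linarith)]; linarith [hc.2]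
    · rw [h1, div_mul_cancel₀]; linarith
  · exact ⟨s, by simp, by simp [h]⟩
  · obtain ⟨c, hc, h1⟩ := exists_hasDerivAt_eq_slope F f h hc.continuousOn fun x _ => hF x
    refine ⟨c, ?_, ?_⟩
    · rw [abs_of_neg (by linarith [hc.2]), abs_of_neg (by linarith)]; linarith [hc.1]
    · rw [h1]
      have : s - t ≠ 0 := by linarith
      field_simp
      ring

lemma nemytskii_prim {ι : Type*} (f F : ι → ℝ → ℝ) (hf : ∀ x, Continuous (f x))
    (hb : ∀ R : ℝ, 0 ≤ R → ∃ C, 0 ≤ C ∧ ∀ x t, |t| ≤ R → |f x t| ≤ C * |t|)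
    (hF : ∀ x t, HasDerivAt (F x) (f x t) t) (hF0 : ∀ x, F x 0 = 0) (u : L2 ι) :
    HasFDerivAt (fun u : L2 ι => ∑' x, F x (u x)) (innerSL ℝ (nemytskii f hb u)) u := by
  have hmem : ∀ (w : L2 ι) (ξ : ι → ℝ), (∀ x, |ξ x| ≤ |w x|) →
      Memℓp (E := fun _ : ι => ℝ) ξ 2 := fun w ξ h =>
    L2.mem (Summable.of_nonneg_of_le (fun x => sq_nonneg _) (fun x => sq_le_sq.2 (h x))
      (L2.hasSum_sq w).summable)
  have hsum : ∀ v : L2 ι, Summable fun x => F x (v x) := by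
    intro v
    choose ξ h1 h2 using fun x => mvt_prim (f x) (F x) (hF x) 0 (v x)
    simp only [sub_zero, hF0] at h1 h2
    let Ξ : L2 ι := ⟨ξ, hmem v ξ h1⟩
    convert (L2.hasSum_mul (nemytskii f hb Ξ) v).summable using 1
    funext x
    exact h2 x
  rw [hasFDerivAt_iff_isLittleO, Asymptotics.isLittleO_iff]
  intro ε hε
  obtain ⟨δ, hδ, hcon⟩ := Metric.continuousAt_iff.1
    ((nemytskii_cont f hf hb).continuousAt (x := u)) ε hε
  filter_upwards [Metric.ball_mem_nhds u hδ] with v hv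
  choose ξ h1 h2 using fun x => mvt_prim (f x) (F x) (hF x) (u x) (v x)
  let Z : L2 ι := ⟨fun x => ξ x - u x, hmem (v - u) _ h1⟩
  have hZ : ‖Z‖ ≤ ‖v - u‖ := by
    refine (sq_le_sq₀ (norm_nonneg _) (norm_nonneg _)).1 ?_
    exact hasSum_le (fun x => sq_le_sq.2 (h1 x)) (L2.hasSum_sq Z) (L2.hasSum_sq (v - u))
  have hd : dist (u + Z) u < δ := by
    rw [dist_eq_norm, add_sub_cancel_left]
    exact hZ.trans_lt (by rwa [Metric.mem_ball, dist_eq_norm] at hv)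
  have hN := hcon hd
  rw [dist_eq_norm] at hN
  have heq : ∑' x, F x (v x) - ∑' x, F x (u x) - innerSL ℝ (nemytskii f hb u) (v - u)
      = inner ℝ (nemytskii f hb (u + Z) - nemytskii f hb u) (v - u) := by
    rw [inner_sub_left, innerSL_apply_apply, ← (hsum v).tsum_sub (hsum u),
      ← (L2.hasSum_mul (nemytskii f hb (u + Z)) (v - u)).tsum_eq]
    congr 1
    refine tsum_congr fun x => ?_
    have e1 : nemytskii f hb (u + Z) x = f x (ξ x) := by
      change f x (u x + (ξ x - u x)) = _
      rw [add_sub_cancel]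
    rw [e1, h2 x]
    rfl
  rw [heq]
  refine (norm_inner_le_norm _ _).trans ?_
  gcongr

lemma quad_form {Vtx : Type*} (adj : Vtx → Vtx → Prop) (D : ℕ)
    (hsym : ∀ x y, adj x y → adj y x)
    (hfin : ∀ x, {y | adj x y}.Finite)
    (hdeg : ∀ x, {y | adj x y}.ncard ≤ D)
    (Vp : Vtx → ℝ) (C1 C2 : ℝ) (hC1 : 0 < C1)
    (hVbd : ∀ x, C1 ≤ Vp x ∧ Vp x ≤ C2) :
    ∃ (T : L2 Vtx →L[ℝ] L2 (Σ x : Vtx, {y : Vtx // adj x y})) (M : L2 Vtx →L[ℝ] L2 Vtx),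
      (∀ u, u ≠ 0 → M u ≠ 0) ∧
      ∀ u : L2 Vtx, ∑' x, (gradSq adj (fun y => u y) x + Vp x * (u x) ^ 2)
        = 1 / 2 * ‖T u‖ ^ 2 + ‖M u‖ ^ 2 := by
  classical
  have hV : ∀ x, 0 < Vp x := fun x => hC1.trans_le (hVbd x).1
  obtain ⟨T1, hT1⟩ := L2.exists_comp (fun e : (Σ x : Vtx, {y : Vtx // adj x y}) => e.1)
    (fun _ => 1) 1 D (by simp) (by
      intro x S hS
      refine le_trans ?_ (hdeg x)
      rw [← Set.ncard_coe_finset]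
      refine Set.ncard_le_ncard_of_injOn (fun e => e.2.1) ?_ ?_ (hfin x)
      · intro e he
        have := hS e he
        subst this
        exact e.2.2
      · rintro ⟨x1, y1⟩ h1 ⟨x2, y2⟩ h2 h
        obtain rfl : x1 = x := hS _ h1
        obtain rfl : x2 = x1 := hS _ h2
        obtain rfl : y1 = y2 := Subtype.ext h
        rfl)
  obtain ⟨T2, hT2⟩ := L2.exists_comp (fun e : (Σ x : Vtx, {y : Vtx // adj x y}) => e.2.1)
    (fun _ => 1) 1 D (by simp) (by
      intro x S hS
      refine le_trans ?_ (hdeg x)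
      rw [← Set.ncard_coe_finset]
      refine Set.ncard_le_ncard_of_injOn (fun e => e.1) ?_ ?_ (hfin x)
      · intro e he
        have := hS e he
        subst this
        exact hsym _ _ e.2.2
      · rintro ⟨x1, y1, p1⟩ h1 ⟨x2, y2, p2⟩ h2 h
        obtain rfl : y1 = x := hS _ h1
        obtain rfl : y2 = y1 := hS _ h2
        obtain rfl : x1 = x2 := h
        rfl)
  obtain ⟨M, hM⟩ := L2.exists_comp (fun x : Vtx => x) (fun x => Real.sqrt (Vp x)) C2 1
    (fun x => by rw [Real.sq_sqrt (hV x).le]; exact (hVbd x).2) (by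
      intro x S hS
      rw [Finset.card_le_one]
      intro y hy z hz
      exact (hS y hy).trans (hS z hz).symm)
  refine ⟨T2 - T1, M, ?_, ?_⟩
  · intro u hu h0
    apply hu
    ext x
    have := hM u x
    rw [h0] at this
    have h2 : Real.sqrt (Vp x) ≠ 0 := (Real.sqrt_pos.2 (hV x)).ne'
    have h3 : Real.sqrt (Vp x) * u x = 0 := this.symm
    exact (mul_eq_zero.1 h3).resolve_left h2
  · intro u
    have hT : HasSum (fun e : (Σ x : Vtx, {y : Vtx // adj x y}) => (u e.2.1 - u e.1) ^ 2)
        (‖(T2 - T1) u‖ ^ 2) := by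
      convert! L2.hasSum_sq ((T2 - T1) u) using 3 with e
      change _ = T2 u e - T1 u e
      rw [hT1, hT2]
      simp
    have hM2 : HasSum (fun x => Vp x * (u x) ^ 2) (‖M u‖ ^ 2) := by
      convert! L2.hasSum_sq (M u) using 2 with x
      rw [hM, mul_pow, Real.sq_sqrt (hV x).le]
    have hfib : ∀ x, HasSum (fun y : {y : Vtx // adj x y} => (u y.1 - u x) ^ 2)
        (∑' y : {y : Vtx // adj x y}, (u y.1 - u x) ^ 2) := fun x =>
      (hT.summable.sigma_factor x).hasSum
    have h3 := (hT.sigma hfib).mul_left (1 / 2)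
    have h4 := (h3.add hM2).tsum_eq
    rw [← h4]
    refine tsum_congr fun x => ?_
    simp only [gradSq, gammaProd, sq]

lemma mono_pt (f : ℝ → ℝ)
    (h1 : StrictMonoOn (fun t => f t / |t|) (Set.Iio 0))
    (h2 : StrictMonoOn (fun t => f t / |t|) (Set.Ioi 0)) (w s t : ℝ) (hs : 0 < s) (hst : s ≤ t) :
    f (s * w) * w / s ≤ f (t * w) * w / t := by
  have ht : 0 < t := hs.trans_le hst
  rcases lt_trichotomy w 0 with h | h | h
  · have hm := h1.monotoneOn (a := t * w) (b := s * w) (mul_neg_of_pos_of_neg ht h)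
      (mul_neg_of_pos_of_neg hs h) (by nlinarith)
    have key : ∀ r, 0 < r → f (r * w) * w / r = - (f (r * w) / |r * w| * w ^ 2) := by
      intro r hr
      rw [abs_of_neg (mul_neg_of_pos_of_neg hr h)]
      have := h.ne
      field_simp
    rw [key s hs, key t ht]
    have := mul_le_mul_of_nonneg_right hm (sq_nonneg w)
    exact neg_le_neg this
  · simp [h]
  · have hm := h2.monotoneOn (a := s * w) (b := t * w) (mul_pos hs h)
      (mul_pos ht h) (by nlinarith)
    have key : ∀ r, 0 < r → f (r * w) * w / r = (f (r * w) / |r * w| * w ^ 2) := by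
      intro r hr
      rw [abs_of_pos (mul_pos hr h)]
      field_simp
    rw [key s hs, key t ht]
    exact mul_le_mul_of_nonneg_right hm (sq_nonneg w)

end Helpers

/-- Proposition 3.5: `Ψ̂(w) = Φ(m̂(w))` is `C¹` on `H¹\{0}` and
`Ψ̂'(w)z = (‖m̂(w)‖/‖w‖)·Φ'(m̂(w))z`. -/
theorem stmt12
    {Vtx : Type*} (adj : Vtx → Vtx → Prop) (D : ℕ)
    (hsym : ∀ x y, adj x y → adj y x)
    (hirr : ∀ x, ¬ adj x x)
    (hfin : ∀ x, {y | adj x y}.Finite)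
    (hdeg : ∀ x, {y | adj x y}.ncard ≤ D)
    (Vp : Vtx → ℝ) (C1 C2 : ℝ) (hC1 : 0 < C1)
    (hVbd : ∀ x, C1 ≤ Vp x ∧ Vp x ≤ C2)
    (f : Vtx → ℝ → ℝ) (hcont : ∀ x, Continuous (f x))
    (a q : ℝ) (ha : 0 < a) (hq : 2 < q)
    (hgrowth : ∀ x t, |f x t| ≤ a * (|t| + |t| ^ (q - 1)))
    (hsmall : ∀ ε > 0, ∃ δ > 0, ∀ x t, t ≠ 0 → |t| < δ → |f x t| ≤ ε * |t|)
    (hmono : ∀ x, StrictMonoOn (fun t => f x t / |t|) (Set.Iio 0) ∧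
             StrictMonoOn (fun t => f x t / |t|) (Set.Ioi 0))
    (F : Vtx → ℝ → ℝ) (hF : ∀ x t, F x t = ∫ s in (0:ℝ)..t, f x s)
    (hsuper : ∀ M : ℝ, ∃ R > 0, ∀ x t, R ≤ |t| → M ≤ F x t / t ^ 2)
    (sw : H1 Vtx → ℝ)
    (hsw : ∀ w : H1 Vtx, w ≠ 0 → 0 < sw w ∧
      fderiv ℝ (PhiF adj Vp F) (sw w • w) (sw w • w) = 0 ∧
      ∀ s : ℝ, 0 < s → fderiv ℝ (PhiF adj Vp F) (s • w) (s • w) = 0 → s = sw w)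
    :
    ContDiffOn ℝ 1 (fun w : H1 Vtx => PhiF adj Vp F (sw w • w)) {w : H1 Vtx | w ≠ 0} ∧
    ∀ w : H1 Vtx, w ≠ 0 → ∀ z : H1 Vtx,
      fderiv ℝ (fun v : H1 Vtx => PhiF adj Vp F (sw v • v)) w z =
        (nrmH adj Vp (sw w • w) / nrmH adj Vp w) *
          fderiv ℝ (PhiF adj Vp F) (sw w • w) z := by
  obtain ⟨T, M, hMinj, hQ⟩ := quad_form adj D hsym hfin hdeg Vp C1 C2 hC1 hVbd
  have hb := lin_bound f a q ha hq hgrowth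
  have hFd : ∀ x t, HasDerivAt (F x) (f x t) t := by
    intro x t
    have e : F x = fun t => ∫ s in (0:ℝ)..t, f x s := funext (hF x)
    rw [e]
    exact intervalIntegral.integral_hasDerivAt_right ((hcont x).intervalIntegrable _ _)
      (hcont x).stronglyMeasurable.stronglyMeasurableAtFilter (hcont x).continuousAt
  have hF0 : ∀ x, F x 0 = 0 := fun x => by rw [hF]; simp
  let Φ' : H1 Vtx → H1 Vtx →L[ℝ] ℝ := fun u =>
    (1 / 2 : ℝ) • ((1 / 2 : ℝ) • ((2 : ℝ) • (innerSL ℝ (T u)).comp T)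
      + (2 : ℝ) • (innerSL ℝ (M u)).comp M) - innerSL ℝ (nemytskii f hb u)
  have hPhi : PhiF adj Vp F = fun u : H1 Vtx =>
      (1 / 2 : ℝ) * (1 / 2 * ‖T u‖ ^ 2 + ‖M u‖ ^ 2) - ∑' x, F x (u x) := by
    funext u
    rw [PhiF, hQ u]
  have hd : ∀ u, HasFDerivAt (PhiF adj Vp F) (Φ' u) u := by
    intro u
    rw [hPhi]
    have t1 : HasFDerivAt (fun u => ‖T u‖ ^ 2) ((2 : ℝ) • (innerSL ℝ (T u)).comp T) u := by
      have := (T.hasFDerivAt (x := u)).norm_sq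
      convert! this using 1
      ext z
      simp [two_mul, two_smul]
    have t2 : HasFDerivAt (fun u => ‖M u‖ ^ 2) ((2 : ℝ) • (innerSL ℝ (M u)).comp M) u := by
      have := (M.hasFDerivAt (x := u)).norm_sq
      convert! this using 1
      ext z
      simp [two_mul, two_smul]
    exact (((t1.const_mul (1 / 2)).add t2).const_mul (1 / 2)).sub
      (nemytskii_prim f F hcont hb hFd hF0 u)
  have hcΦ : Continuous Φ' := by
    have c1 : Continuous fun u => (innerSL ℝ (T u)).comp T :=
      ((innerSL ℝ).continuous.comp T.continuous).clm_comp continuous_const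
    have c2 : Continuous fun u => (innerSL ℝ (M u)).comp M :=
      ((innerSL ℝ).continuous.comp M.continuous).clm_comp continuous_const
    have c3 : Continuous fun u => innerSL ℝ (nemytskii f hb u) :=
      (innerSL ℝ).continuous.comp (nemytskii_cont f hcont hb)
    exact ((((c1.const_smul (2 : ℝ)).const_smul (1 / 2 : ℝ)).add
      (c2.const_smul (2 : ℝ))).const_smul (1 / 2 : ℝ)).sub c3
  have hval : ∀ (w : H1 Vtx) (s : ℝ), 0 < s → Φ' (s • w) w / s
      = (1 / 2 * ‖T w‖ ^ 2 + ‖M w‖ ^ 2) - inner ℝ (nemytskii f hb (s • w)) w / s := by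
    intro w s hs
    have e : Φ' (s • w) w = (1 / 2 : ℝ) * ((1 / 2 : ℝ) * (2 * inner ℝ (T (s • w)) (T w))
      + 2 * inner ℝ (M (s • w)) (M w)) - inner ℝ (nemytskii f hb (s • w)) w := rfl
    rw [e, map_smul, map_smul, real_inner_smul_left, real_inner_smul_left,
      real_inner_self_eq_norm_sq, real_inner_self_eq_norm_sq]
    field_simp
  have hfd : ∀ u, fderiv ℝ (PhiF adj Vp F) u = Φ' u := fun u => (hd u).fderiv
  simp only [hfd, map_smul, smul_eq_mul] at hsw
  have habs := nehari_abstract (PhiF adj Vp F) Φ' hd hcΦ sw (fun w hw => (hsw w hw).1)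
    (fun w hw => (mul_eq_zero.1 (hsw w hw).2.1).resolve_left (hsw w hw).1.ne')
    (fun w hw s hs h => (hsw w hw).2.2 s hs (by rw [h, mul_zero]))
    (by
      intro w s t hs hst
      rw [hval w s hs, hval w t (hs.trans_le hst)]
      refine sub_le_sub_left ?_ _
      refine hasSum_le (fun x => ?_) ((L2.hasSum_mul (nemytskii f hb (s • w)) w).div_const s)
        ((L2.hasSum_mul (nemytskii f hb (t • w)) w).div_const t)
      exact mono_pt (f x) (hmono x).1 (hmono x).2 (w x) s t hs hst)
  refine ⟨habs.1, fun w hw z => ?_⟩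
  rw [(habs.2 w hw).fderiv, hfd]
  have hwp := (hsw w hw).1
  have hn : ∀ u : H1 Vtx, nrmH adj Vp u = Real.sqrt (1 / 2 * ‖T u‖ ^ 2 + ‖M u‖ ^ 2) := by
    intro u
    rw [nrmH, nrmV, hQ u]
  have hn1 : nrmH adj Vp (sw w • w) = sw w * nrmH adj Vp w := by
    rw [hn, hn, map_smul, map_smul, norm_smul, norm_smul, Real.norm_of_nonneg hwp.le]
    rw [show 1 / 2 * (sw w * ‖T w‖) ^ 2 + (sw w * ‖M w‖) ^ 2
      = sw w ^ 2 * (1 / 2 * ‖T w‖ ^ 2 + ‖M w‖ ^ 2) by ring,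
      Real.sqrt_mul (sq_nonneg _), Real.sqrt_sq hwp.le]
  have hn0 : 0 < nrmH adj Vp w := by
    rw [hn]
    have := norm_pos_iff.2 (hMinj w hw)
    exact Real.sqrt_pos.2 (by positivity)
  rw [hn1, mul_div_cancel_right₀ _ hn0.ne']
  rfl
end
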